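/- arXiv:1912.12687 — 18 statements merged into one kernel-verified Lean document; each statement's English description precedes it below -/
import Mathlib

section
/- Let K be a field of characteristic 0. Let f and g be nonconstant, relatively prime polynomials in K[t], and set A = f² − g², B = 2fg, C = f² + g². Let w ∈ K[t] be a nonzero polynomial. Then the only solutions in positive integers (x, y, z) of the equation (wA)^x + (wB)^y = (wC)^z are (x, y, z) = (2, 2, 2) and (x, y, z) = (2, 1, 1); moreover, (2, 1, 1) is a solution if and only if w is a constant polynomial and w·(f + g)² = 1 (equivalently, √w ∈ K and f = −g ± 1/√w). -/
open Polynomial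

namespace JesPoly

variable {L : Type*} [Field L]

lemma unitC {a : L} (ha : a ≠ 0) : IsUnit (C a : L[X]) := isUnit_C.mpr ha.isUnit

/-- A pole-free expansion argument. -/
lemma expUnit [CharZero L] {E H : L[X]} {a b : L} {x : ℕ} (hx : 0 < x) (ha : a ≠ 0) (h0 : H ≠ 0)
    (hc : IsCoprime H E) (h : H ^ 2 ∣ C a * (E + H) ^ x + C b * (E - H) ^ x) : IsUnit H := by
  obtain ⟨k1, h1⟩ := Polynomial.powAddExpansion E H x
  obtain ⟨k2, h2⟩ := Polynomial.powAddExpansion E (-H) x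
  rw [sub_eq_add_neg, h1, h2] at h
  obtain ⟨s, hs⟩ := h
  by_cases hab : a + b = 0
  · have hb : b = -a := by linear_combination hab
    subst hb
    have hd : H ∣ C (2 * a * x) * E ^ (x - 1) := by
      refine ⟨s - C a * k1 + C a * k2, mul_left_cancel₀ h0 ?_⟩
      simp only [C_neg, C_mul, map_natCast, map_ofNat] at hs ⊢
      linear_combination hs
    have hd2 : H ∣ C (2 * a * x) := (hc.pow_right).dvd_of_dvd_mul_right hd
    refine isUnit_of_dvd_unit hd2 (unitC ?_)
    have : (x : L) ≠ 0 := by exact_mod_cast hx.ne'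
    exact mul_ne_zero (mul_ne_zero two_ne_zero ha) this
  · have hd : H ∣ C (a + b) * E ^ x := by
      refine ⟨H * s - C a * (x * E ^ (x - 1) + k1 * H) - C b * (-(x * E ^ (x - 1)) + k2 * H), ?_⟩
      simp only [C_add] at hs ⊢
      linear_combination hs
    have hd2 : H ∣ C (a + b) := (hc.pow_right).dvd_of_dvd_mul_right hd
    exact isUnit_of_dvd_unit hd2 (unitC hab)

lemma caseII [CharZero L] [IsAlgClosed L] {P Q R w : L[X]} {a b c : L} {x z : ℕ}
    (hs : P ^ 2 + Q ^ 2 + R ^ 2 = 0) (hPQ : IsCoprime P Q) (hPR : IsCoprime P R)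
    (hQR : IsCoprime Q R) (hR : ¬ IsUnit R) (hR0 : R ≠ 0) (hw : w ≠ 0)
    (ha : a ≠ 0) (hx : 0 < x) (hxz : x < z)
    (he : C a * (w * P) ^ x + C b * (w * Q) ^ x + C c * (w * R) ^ z = 0) :
    x = 1 ∧ z = 2 := by
  obtain ⟨I, hI⟩ := IsAlgClosed.exists_pow_nat_eq (-1 : L) (n := 2) (by norm_num)
  have hCI : (C I : L[X]) ^ 2 = -1 := by rw [← C_pow, hI]; simp
  obtain ⟨d, rfl⟩ : ∃ d, z = x + 1 + d := ⟨z - (x + 1), by omega⟩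
  have he2 : C a * P ^ x + C b * Q ^ x = R ^ (x + 1) * (- (C c * w ^ (d + 1) * R ^ d)) := by
    apply mul_left_cancel₀ (pow_ne_zero x hw)
    simp only [mul_pow] at he
    have : w ^ (x + 1 + d) = w ^ x * w ^ (d + 1) := by rw [← pow_add]; congr 1; omega
    rw [this, pow_add R (x + 1) d] at he
    linear_combination he
  generalize hS : (- (C c * w ^ (d + 1) * R ^ d)) = S at he2
  rcases Nat.lt_or_ge 2 x with h3 | h3
  · exfalso
    have h2 : (C (1/2) : L[X]) * 2 = 1 := by
      rw [← C_ofNat, ← C_mul]; simp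
    have key : ∀ J : L, J ^ 2 = -1 → IsUnit (P + C J * Q) := by
      intro J hJ
      have hCJ : (C J : L[X]) ^ 2 = -1 := by rw [← C_pow, hJ]; simp
      have hEH : (P + C J * Q) * (P - C J * Q) = - R ^ 2 := by
        linear_combination hs - Q ^ 2 * hCJ
      have hcop : IsCoprime (P + C J * Q) (P - C J * Q) := by
        obtain ⟨u, v, huv⟩ := hPQ
        refine ⟨C (1/2) * (u - C J * v), C (1/2) * (u + C J * v), ?_⟩
        linear_combination huv + (u * P + v * Q) * h2 - 2 * C (1/2) * v * Q * hCJ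
      refine expUnit (E := P - C J * Q) (a := a) (b := b * J ^ x) (x := x) hx ha ?_ hcop ?_
      · intro h
        rw [h, zero_mul] at hEH
        exact pow_ne_zero 2 hR0 (by linear_combination hEH)
      · have e3 : C (b * J ^ x) * ((P - C J * Q) - (P + C J * Q)) ^ x = C b * (2 * Q) ^ x := by
          rw [C_mul, C_pow, mul_assoc, ← mul_pow]
          congr 2
          linear_combination -2 * Q * hCJ
        have e4 : (P - C J * Q) + (P + C J * Q) = 2 * P := by ring
        rw [e3, e4]
        obtain ⟨m, rfl⟩ : ∃ m, x = 3 + m := ⟨x - 3, by omega⟩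
        refine ⟨(P - C J * Q) ^ 2 * (2 ^ (3 + m) * R ^ m * S), ?_⟩
        rw [← mul_assoc, ← mul_pow, hEH, mul_pow, mul_pow]
        rw [show 3 + m + 1 = 4 + m by omega, pow_add R 4 m] at he2
        linear_combination 2 ^ (3 + m) * he2
    have u1 := key I hI
    have u2 := key (-I) (by rw [neg_sq, hI])
    have u3 : IsUnit (R * R) := by
      have : R * R = -((P + C I * Q) * (P + C (-I) * Q)) := by
        rw [C_neg]
        linear_combination hs - Q ^ 2 * hCI
      rw [this, IsUnit.neg_iff]
      exact u1.mul u2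
    exact hR (IsUnit.mul_iff.mp u3).1
  interval_cases x
  · refine ⟨rfl, ?_⟩
    have hab : a ^ 2 + b ^ 2 = 0 := by
      by_contra hab
      have hd : R ∣ C (a ^ 2 + b ^ 2) * Q ^ 2 := by
        refine ⟨-(C a) ^ 2 * R - R * S * (C a * P - C b * Q), ?_⟩
        simp only [C_add, C_pow]
        linear_combination (C a) ^ 2 * hs - (C a * P - C b * Q) * he2
      have := (hQR.symm.pow_right).dvd_of_dvd_mul_right hd
      exact hR (isUnit_of_dvd_unit this (unitC hab))
    have hab' : (C a : L[X]) ^ 2 + C b ^ 2 = 0 := by rw [← C_pow, ← C_pow, ← C_add, hab, C_0]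
    have h1 : S * (C a * P - C b * Q) = - C a ^ 2 := by
      apply mul_left_cancel₀ (pow_ne_zero 2 hR0)
      linear_combination (C a) ^ 2 * hs - (C a * P - C b * Q) * he2 - Q ^ 2 * hab'
    have hSu : IsUnit S := by
      refine isUnit_of_dvd_unit (Dvd.intro _ h1) ?_
      rw [IsUnit.neg_iff]; exact (unitC ha).pow 2
    rw [← hS, IsUnit.neg_iff, IsUnit.mul_iff] at hSu
    have : d = 0 := by
      by_contra hd
      exact hR ((isUnit_pow_iff hd).mp hSu.2)
    omega
  · exfalso
    by_cases hab : a = b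
    · subst hab
      have : R * S = - C a := by
        apply mul_left_cancel₀ (pow_ne_zero 2 hR0)
        linear_combination -he2 + C a * hs
      exact hR (isUnit_of_dvd_unit (Dvd.intro _ this) (by rw [IsUnit.neg_iff]; exact unitC ha))
    · have hd : R ∣ C (a - b) * P ^ 2 := by
        refine ⟨R ^ 2 * S + C b * R, ?_⟩
        simp only [C_sub]
        linear_combination he2 - C b * hs
      have := (hPR.symm.pow_right).dvd_of_dvd_mul_right hd
      exact hR (isUnit_of_dvd_unit this (unitC (sub_ne_zero.mpr hab)))

lemma degle {P Q R : L[X]} (hs : P ^ 2 + Q ^ 2 + R ^ 2 = 0) :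
    P.natDegree ≤ max Q.natDegree R.natDegree := by
  have h : P ^ 2 = -(Q ^ 2 + R ^ 2) := by linear_combination hs
  have h2 := congrArg natDegree h
  rw [natDegree_neg, natDegree_pow] at h2
  have h3 := natDegree_add_le (Q ^ 2) (R ^ 2)
  rw [natDegree_pow, natDegree_pow] at h3
  omega

lemma unit_of_natDegree {P : L[X]} (h0 : P ≠ 0) (h : P.natDegree = 0) : IsUnit P := by
  rw [natDegree_eq_zero] at h
  obtain ⟨c, rfl⟩ := h
  exact unitC (by simpa using h0)

lemma ne0 {P Q : L[X]} (h : IsCoprime P Q) (hQ : ¬ IsUnit Q) : P ≠ 0 := by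
  rintro rfl
  exact hQ (isCoprime_zero_left.mp h)

/-- Degree bounds from Mason–Stothers. -/
lemma masonI [CharZero L] {P Q R w : L[X]} {a b c : L} {x y z : ℕ}
    (hPQ : IsCoprime P Q)
    (hP0 : P ≠ 0) (hQ0 : Q ≠ 0) (hR0 : R ≠ 0)
    (hQ : ¬ IsUnit Q) (hw : w ≠ 0)
    (ha : a ≠ 0) (hb : b ≠ 0) (hc : c ≠ 0) (hxy : x < y) (hyz : y ≤ z)
    (he : C a * (w * P) ^ x + C b * (w * Q) ^ y + C c * (w * R) ^ z = 0) :
    y * Q.natDegree < P.natDegree + Q.natDegree + R.natDegree ∧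
    z * R.natDegree < P.natDegree + Q.natDegree + R.natDegree := by
  classical
  obtain ⟨d, rfl⟩ : ∃ d, y = x + 1 + d := ⟨y - (x + 1), by omega⟩
  obtain ⟨k, rfl⟩ : ∃ k, z = x + 1 + d + k := ⟨z - (x + 1 + d), by omega⟩
  have e1 : C a * P ^ x = w ^ (d + 1) *
      -(C b * Q ^ (x + 1 + d) + C c * w ^ k * R ^ (x + 1 + d + k)) := by
    apply mul_left_cancel₀ (pow_ne_zero x hw)
    simp only [mul_pow] at he
    rw [show w ^ (x + 1 + d + k) = w ^ x * w ^ (d + 1) * w ^ k by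
        rw [← pow_add, ← pow_add]; congr 1; omega,
      show w ^ (x + 1 + d) = w ^ x * w ^ (d + 1) by rw [← pow_add]; congr 1; omega] at he
    linear_combination he
  set T := -(C b * Q ^ (x + 1 + d) + C c * w ^ k * R ^ (x + 1 + d + k)) with hT
  have hT0 : T ≠ 0 := by
    intro h
    rw [h, mul_zero] at e1
    exact mul_ne_zero (C_ne_zero.mpr ha) (pow_ne_zero _ hP0) e1
  have hTd : T ∣ P ^ x := by
    have : T ∣ C a * P ^ x := e1 ▸ Dvd.intro_left _ rfl
    exact (unitC ha).dvd_mul_left.mp this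
  have hwd : w ∣ P ^ x := by
    have : w ∣ C a * P ^ x := by rw [e1, pow_succ, mul_assoc, mul_left_comm]; exact Dvd.intro _ rfl
    exact (unitC ha).dvd_mul_left.mp this
  have hcop : IsCoprime T (C b * Q ^ (x + 1 + d)) := by
    rw [isCoprime_mul_unit_left_right (unitC hb)]
    exact ((hPQ.pow_left).of_isCoprime_of_dvd_left hTd).pow_right
  have hB0 : C b * Q ^ (x + 1 + d) ≠ 0 := mul_ne_zero (C_ne_zero.mpr hb) (pow_ne_zero _ hQ0)
  have hC0 : C c * w ^ k * R ^ (x + 1 + d + k) ≠ 0 :=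
    mul_ne_zero (mul_ne_zero (C_ne_zero.mpr hc) (pow_ne_zero _ hw)) (pow_ne_zero _ hR0)
  have hrad : (UniqueFactorizationMonoid.radical (T * (C b * Q ^ (x + 1 + d)) *
      (C c * w ^ k * R ^ (x + 1 + d + k)))) ∣ P * Q * R := by
    rw [← UniqueFactorizationMonoid.exists_dvd_pow_iff_radical_dvd
      (mul_ne_zero (mul_ne_zero hT0 hB0) hC0)]
    refine ⟨(x + x * k) + (x + 1 + d + k), ?_⟩
    have h1 : T * (C b * Q ^ (x + 1 + d)) * (C c * w ^ k * R ^ (x + 1 + d + k)) ∣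
        P ^ x * (C b * Q ^ (x + 1 + d)) * (C c * (P ^ x) ^ k * R ^ (x + 1 + d + k)) := by
      gcongr
    refine h1.trans ?_
    have h2 : P ^ x * (C b * Q ^ (x + 1 + d)) * (C c * (P ^ x) ^ k * R ^ (x + 1 + d + k)) =
        (C b * C c) * (P ^ (x + x * k) * Q ^ (x + 1 + d) * R ^ (x + 1 + d + k)) := by
      rw [pow_add P, pow_mul P]; ring
    rw [h2, ((unitC hb).mul (unitC hc)).mul_left_dvd, mul_pow, mul_pow]
    refine mul_dvd_mul (mul_dvd_mul (pow_dvd_pow _ ?_) (pow_dvd_pow _ ?_)) (pow_dvd_pow _ ?_)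
    · exact Nat.le_add_right _ _
    · have := Nat.zero_le (x * k)
      omega
    · exact Nat.le_add_left _ _
  have hdeg := natDegree_le_of_dvd hrad (mul_ne_zero (mul_ne_zero hP0 hQ0) hR0)
  rw [natDegree_mul (mul_ne_zero hP0 hQ0) hR0, natDegree_mul hP0 hQ0] at hdeg
  rcases Polynomial.abc hT0 hB0 hC0 hcop (by rw [hT]; ring) with ⟨-, h2, h3⟩ | ⟨-, h2, -⟩
  · rw [natDegree_C_mul hb, natDegree_pow] at h2
    rw [natDegree_mul (mul_ne_zero (C_ne_zero.mpr hc) (pow_ne_zero _ hw)) (pow_ne_zero _ hR0),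
      natDegree_pow R] at h3
    constructor <;> omega
  · exfalso
    have := derivative_eq_zero.mp h2
    rw [natDegree_C_mul hb, natDegree_pow] at this
    have : Q.natDegree = 0 := by
      rcases Nat.mul_eq_zero.mp this with h | h
      · omega
      · exact h
    exact hQ (unit_of_natDegree hQ0 this)

/-- exponents (1,2,2) -/
lemma case122 [CharZero L] [IsAlgClosed L] {P Q R w : L[X]} {a b c : L}
    (hs : P ^ 2 + Q ^ 2 + R ^ 2 = 0) (hPR : IsCoprime P R)
    (hP : ¬ IsUnit P) (hQ : ¬ IsUnit Q) (hP0 : P ≠ 0) (hQ0 : Q ≠ 0) (hw : w ≠ 0)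
    (ha : a ≠ 0) (hb : b ≠ 0)
    (he : C a * (w * P) ^ 1 + C b * (w * Q) ^ 2 + C c * (w * R) ^ 2 = 0) : False := by
  have e1 : C a * P = w * -(C b * Q ^ 2 + C c * R ^ 2) := by
    apply mul_left_cancel₀ hw
    linear_combination he
  by_cases hbc : b = c
  · subst hbc
    have : C b * w * P = C a := by
      apply mul_left_cancel₀ hP0
      linear_combination -e1 + w * C b * hs
    exact hP (isUnit_of_dvd_unit (Dvd.intro_left _ this) (unitC ha))
  · have hcop : IsCoprime P (-(C b * Q ^ 2 + C c * R ^ 2)) := by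
      have h1 : IsCoprime P (C (b - c) * R ^ 2) := by
        rw [isCoprime_mul_unit_left_right (unitC (sub_ne_zero.mpr hbc))]
        exact hPR.pow_right
      have : -(C b * Q ^ 2 + C c * R ^ 2) = C (b - c) * R ^ 2 + P * (C b * P) := by
        rw [C_sub]; linear_combination -C b * hs
      rw [this]
      exact h1.add_mul_left_right _
    obtain ⟨v, rfl⟩ : P ∣ w := hcop.dvd_of_dvd_mul_right (e1 ▸ Dvd.intro_left _ rfl)
    have h2 : v * -(C b * Q ^ 2 + C c * R ^ 2) = C a := by
      apply mul_left_cancel₀ hP0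
      linear_combination -e1
    have hu : IsUnit (C b * Q ^ 2 + C c * R ^ 2) := by
      rw [← IsUnit.neg_iff]
      exact isUnit_of_dvd_unit (Dvd.intro_left _ h2) (unitC ha)
    obtain ⟨s, hs'⟩ := IsAlgClosed.exists_pow_nat_eq b (n := 2) (by norm_num)
    obtain ⟨t, ht'⟩ := IsAlgClosed.exists_pow_nat_eq (-c) (n := 2) (by norm_num)
    have hfac : C b * Q ^ 2 + C c * R ^ 2 = (C s * Q + C t * R) * (C s * Q - C t * R) := by
      rw [← hs', show c = -t ^ 2 by rw [ht']; ring]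
      simp only [C_pow, C_neg]; ring
    rw [hfac, IsUnit.mul_iff] at hu
    have d1 := natDegree_eq_zero_of_isUnit hu.1
    have d2 := natDegree_eq_zero_of_isUnit hu.2
    have d3 := natDegree_add_le (C s * Q + C t * R) (C s * Q - C t * R)
    have hs0 : s ≠ 0 := by rintro rfl; apply hb; rw [← hs']; simp
    have h2s : (2 * s : L) ≠ 0 := mul_ne_zero two_ne_zero hs0
    rw [show (C s * Q + C t * R) + (C s * Q - C t * R) = C (2 * s) * Q by
      rw [C_mul, C_ofNat]; ring, natDegree_C_mul h2s, d1, d2] at d3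
    exact hQ (unit_of_natDegree hQ0 (by simpa using d3))

/-- exponents (1,2,z) with z at least 3 -/
lemma case12z [CharZero L] {P Q R E H w : L[X]} {a b c : L} {k M : ℕ}
    (hEH : E * H = - R ^ 2) (hP : 2 * P = E + H) (hQ : 4 * Q ^ 2 = - (E - H) ^ 2)
    (hPR : IsCoprime P R) (hR : ¬ IsUnit R) (hP0 : P ≠ 0) (hQ0 : Q ≠ 0) (hR0 : R ≠ 0) (hw : w ≠ 0)
    (ha : a ≠ 0) (hb : b ≠ 0) (hc : c ≠ 0)
    (dP : P.natDegree = M) (dQ : Q.natDegree = M) (dR : R.natDegree < M)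
    (dE : E.natDegree = M)
    (he : C a * (w * P) ^ 1 + C b * (w * Q) ^ 2 + C c * (w * R) ^ (k + 3) = 0) : False := by
  have hE0 : E ≠ 0 := by
    rintro rfl
    exact pow_ne_zero 2 hR0 (by linear_combination hEH)
  have hH0 : H ≠ 0 := by
    rintro rfl
    exact pow_ne_zero 2 hR0 (by linear_combination hEH)
  have dH : M + H.natDegree = 2 * R.natDegree := by
    have := congrArg natDegree hEH
    rwa [natDegree_neg, natDegree_mul hE0 hH0, natDegree_pow, dE] at this
  have e1 : C a * P + C b * w * Q ^ 2 + C c * w ^ (k + 2) * R ^ (k + 3) = 0 := by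
    apply mul_left_cancel₀ hw
    linear_combination he
  -- degree comparison
  have dw : 2 * M = (k + 1) * w.natDegree + (k + 3) * R.natDegree := by
    have h1 : C c * w ^ (k + 2) * R ^ (k + 3) = -(C b * w * Q ^ 2 + C a * P) := by
      linear_combination e1
    have h2 := congrArg natDegree h1
    have hbw : C b * w ≠ 0 := mul_ne_zero (C_ne_zero.mpr hb) hw
    have h3 : (C b * w * Q ^ 2).natDegree = w.natDegree + 2 * M := by
      rw [natDegree_mul hbw (pow_ne_zero _ hQ0), natDegree_C_mul hb, natDegree_pow, dQ]
    have h4 : (C a * P).natDegree = M := by rw [natDegree_C_mul ha, dP]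
    rw [natDegree_neg, natDegree_add_eq_left_of_natDegree_lt (by rw [h3, h4]; omega), h3,
      natDegree_mul (mul_ne_zero (C_ne_zero.mpr hc) (pow_ne_zero _ hw)) (pow_ne_zero _ hR0),
      natDegree_C_mul hc, natDegree_pow, natDegree_pow] at h2
    linarith
  have hdvd : R ^ 2 ∣ C a - C b * w * P := by
    have : R ^ 2 ∣ P * (C a - C b * w * P) := by
      refine ⟨C b * w - C c * w ^ (k + 2) * R ^ (k + 1), ?_⟩
      have h4 : (4 : L[X]) ≠ 0 := by exact_mod_cast (by norm_num : (4 : ℕ) ≠ 0)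
      apply mul_left_cancel₀ h4
      linear_combination 4 * e1 - C b * w * hQ - C b * w * (2 * P + E + H) * hP - 4 * C b * w * hEH
    exact (hPR.symm.pow_left).dvd_of_dvd_mul_left this
  have hEd : E ∣ C (2 * a) - C b * w * H := by
    have h1 : E ∣ C a - C b * w * P := by
      refine dvd_trans ⟨-H, ?_⟩ hdvd
      linear_combination hEH
    obtain ⟨s, hs⟩ := h1
    refine ⟨2 * s + C b * w, ?_⟩
    rw [C_mul, C_ofNat]
    linear_combination 2 * hs + C b * w * hP
  have hlt : w.natDegree + H.natDegree < M := by
    nlinarith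
  have hz : C (2 * a) - C b * w * H = 0 := by
    by_contra hne
    have h1 := natDegree_le_of_dvd hEd hne
    have h2 := natDegree_sub_le (C (2 * a)) (C b * w * H)
    rw [mul_assoc, natDegree_C, natDegree_C_mul hb, natDegree_mul hw hH0] at h2
    rw [mul_assoc] at h1
    omega
  have hu : IsUnit (C b * w * H) := by
    rw [← sub_eq_zero.mp hz]
    exact unitC (mul_ne_zero two_ne_zero ha)
  have hHu : IsUnit H := (IsUnit.mul_iff.mp hu).2
  have hRE : R ∣ E := by
    have : R ∣ E * H := ⟨-R, by linear_combination hEH⟩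
    exact hHu.dvd_mul_right.mp this
  have h5 : C b * w * (3 * E * H - E ^ 2) = R ^ 3 * (- 4 * C c * w ^ (k + 2) * R ^ k) := by
    rw [C_mul, C_ofNat] at hz
    linear_combination 4 * e1 - C b * w * hQ - 2 * C a * hP - (E + H) * hz
  have h6 : R ∣ C b * w * H * (3 * H - E) := by
    refine ⟨4 * C c * w ^ (k + 2) * R ^ k * H ^ 2, ?_⟩
    apply mul_left_cancel₀ (pow_ne_zero 2 hR0)
    linear_combination -H ^ 2 * h5 + (C b * w * (3 * H - E)) * H * hEH
  have h7 : R ∣ 3 * H - E := hu.dvd_mul_left.mp h6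
  have h8 : R ∣ C 3 * H := by
    have := dvd_add h7 hRE
    rw [C_ofNat]
    simpa using this
  exact hR (isUnit_of_dvd_unit h8 ((unitC three_ne_zero).mul hHu))

lemma caseI [CharZero L] [IsAlgClosed L] {P Q R w : L[X]} {a b c : L} {x y z : ℕ}
    (hs : P ^ 2 + Q ^ 2 + R ^ 2 = 0) (hPQ : IsCoprime P Q) (hPR : IsCoprime P R)
    (hP : ¬ IsUnit P) (hQ : ¬ IsUnit Q) (hR : ¬ IsUnit R)
    (hw : w ≠ 0) (ha : a ≠ 0) (hb : b ≠ 0) (hc : c ≠ 0)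
    (hx : 0 < x) (hxy : x < y) (hyz : y ≤ z)
    (he : C a * (w * P) ^ x + C b * (w * Q) ^ y + C c * (w * R) ^ z = 0) : False := by
  have hP0 := ne0 hPQ hQ
  have hQ0 := ne0 hPQ.symm hP
  have hR0 := ne0 hPR.symm hP
  obtain ⟨m1, m2⟩ := masonI hPQ hP0 hQ0 hR0 hQ hw ha hb hc hxy hyz he
  have d1 := degle hs
  have d2 := degle (P := Q) (Q := P) (R := R) (by linear_combination hs)
  have d3 := degle (P := R) (Q := P) (R := Q) (by linear_combination hs)
  have hRd : 0 < R.natDegree := Nat.pos_of_ne_zero fun h => hR (unit_of_natDegree hR0 h)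
  have hy2 : y ≤ 2 := by
    by_contra hy
    have h1 : 3 * Q.natDegree ≤ y * Q.natDegree := Nat.mul_le_mul_right _ (by omega)
    have h2 : 3 * R.natDegree ≤ z * R.natDegree := Nat.mul_le_mul_right _ (by omega)
    omega
  obtain rfl : x = 1 := by omega
  obtain rfl : y = 2 := by omega
  rcases Nat.eq_or_lt_of_le hyz with h2 | h3
  · subst h2
    exact case122 hs hPR hP hQ hP0 hQ0 hw ha hb he
  obtain ⟨k, rfl⟩ : ∃ k, z = k + 3 := ⟨z - 3, by omega⟩
  have hz3 : 3 * R.natDegree ≤ (k + 3) * R.natDegree := Nat.mul_le_mul_right _ (by omega)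
  have hRP : R.natDegree < P.natDegree := by omega
  have hQP : Q.natDegree = P.natDegree := by omega
  obtain ⟨I, hI⟩ := IsAlgClosed.exists_pow_nat_eq (-1 : L) (n := 2) (by norm_num)
  have hCI : (C I : L[X]) ^ 2 = -1 := by rw [← C_pow, hI]; simp
  have hI0 : I ≠ 0 := by rintro rfl; norm_num at hI
  have bound : ∀ J : L, J ≠ 0 → (P + C J * Q).natDegree ≤ P.natDegree := by
    intro J hJ
    have := natDegree_add_le P (C J * Q)
    rw [natDegree_C_mul hJ] at this
    omega
  have b1 := bound I hI0
  have b2 := bound (-I) (neg_ne_zero.mpr hI0)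
  have b3 := natDegree_add_le (P + C I * Q) (P + C (-I) * Q)
  rw [show (P + C I * Q) + (P + C (-I) * Q) = C 2 * P by rw [C_neg, C_ofNat]; ring,
    natDegree_C_mul two_ne_zero] at b3
  rcases (by omega : (P + C I * Q).natDegree = P.natDegree ∨
      (P + C (-I) * Q).natDegree = P.natDegree) with h | h
  · refine case12z (E := P + C I * Q) (H := P + C (-I) * Q) ?_ ?_ ?_ hPR hR hP0 hQ0 hR0 hw ha hb hc
      rfl hQP hRP h he
    · rw [C_neg]; linear_combination hs - Q ^ 2 * hCI
    · rw [C_neg]; ring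
    · rw [C_neg]; linear_combination 4 * Q ^ 2 * hCI
  · refine case12z (E := P + C (-I) * Q) (H := P + C I * Q) ?_ ?_ ?_ hPR hR hP0 hQ0 hR0 hw ha hb hc
      rfl hQP hRP h he
    · rw [C_neg]; linear_combination hs - Q ^ 2 * hCI
    · rw [C_neg]; ring
    · rw [C_neg]; linear_combination 4 * Q ^ 2 * hCI

/-- The symmetric form of the classification. -/
lemma classify [CharZero L] [IsAlgClosed L] {P Q R w : L[X]} {a b c : L} {x y z : ℕ}
    (hs : P ^ 2 + Q ^ 2 + R ^ 2 = 0) (hPQ : IsCoprime P Q) (hPR : IsCoprime P R)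
    (hQR : IsCoprime Q R)
    (hP : ¬ IsUnit P) (hQ : ¬ IsUnit Q) (hR : ¬ IsUnit R)
    (hw : w ≠ 0) (ha : a ≠ 0) (hb : b ≠ 0) (hc : c ≠ 0)
    (hx : 0 < x) (hy : 0 < y) (hz : 0 < z)
    (he : C a * (w * P) ^ x + C b * (w * Q) ^ y + C c * (w * R) ^ z = 0) :
    (x = y ∧ y = z) ∨ (x = 2 ∧ y = 1 ∧ z = 1) ∨ (x = 1 ∧ y = 2 ∧ z = 1) ∨
      (x = 1 ∧ y = 1 ∧ z = 2) := by
  have hP0 := ne0 hPQ hQ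
  have hQ0 := ne0 hPQ.symm hP
  have hR0 := ne0 hPR.symm hP
  have s2 : P ^ 2 + R ^ 2 + Q ^ 2 = 0 := by linear_combination hs
  have s3 : Q ^ 2 + P ^ 2 + R ^ 2 = 0 := by linear_combination hs
  have s4 : Q ^ 2 + R ^ 2 + P ^ 2 = 0 := by linear_combination hs
  have s5 : R ^ 2 + P ^ 2 + Q ^ 2 = 0 := by linear_combination hs
  have s6 : R ^ 2 + Q ^ 2 + P ^ 2 = 0 := by linear_combination hs
  rcases (by omega : (x < y ∧ y ≤ z) ∨ (x < z ∧ z ≤ y) ∨ (y < x ∧ x ≤ z) ∨ (y < z ∧ z ≤ x) ∨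
      (z < x ∧ x ≤ y) ∨ (z < y ∧ y ≤ x) ∨ (x = y ∧ y = z) ∨ (x = y ∧ y < z) ∨ (x = z ∧ z < y) ∨
      (y = z ∧ z < x)) with h | h | h | h | h | h | h | h | h | h
  · exact (caseI hs hPQ hPR hP hQ hR hw ha hb hc hx h.1 h.2 he).elim
  · exact (caseI s2 hPR hPQ hP hR hQ hw ha hc hb hx h.1 h.2 (by linear_combination he)).elim
  · exact (caseI s3 hPQ.symm hQR hQ hP hR hw hb ha hc hy h.1 h.2 (by linear_combination he)).elim
  · exact (caseI s4 hQR hPQ.symm hQ hR hP hw hb hc ha hy h.1 h.2 (by linear_combination he)).elim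
  · exact (caseI s5 hPR.symm hQR.symm hR hP hQ hw hc ha hb hz h.1 h.2
      (by linear_combination he)).elim
  · exact (caseI s6 hQR.symm hPR.symm hR hQ hP hw hc hb ha hz h.1 h.2
      (by linear_combination he)).elim
  · exact Or.inl h
  · obtain ⟨rfl, h⟩ := h
    have := caseII hs hPQ hPR hQR hR hR0 hw ha hx h he
    omega
  · obtain ⟨rfl, h⟩ := h
    have := caseII s2 hPR hPQ hQR.symm hQ hQ0 hw (a := a) (b := c) (c := b) ha hx h (by linear_combination he)
    omega
  · obtain ⟨rfl, h⟩ := h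
    have := caseII s4 hQR hPQ.symm hPR.symm hP hP0 hw (a := b) (b := c) (c := a) hb hy h (by linear_combination he)
    omega

lemma copAddLeft {f g : L[X]} (h : IsCoprime f g) : IsCoprime (f ^ 2 + g ^ 2) f := by
  have h1 : IsCoprime (g ^ 2) f := h.symm.pow_left
  have h2 := h1.add_mul_left_left f
  rwa [show g ^ 2 + f * f = f ^ 2 + g ^ 2 by ring] at h2

lemma copSubLeft {f g : L[X]} (h : IsCoprime f g) : IsCoprime (f ^ 2 - g ^ 2) f := by
  have h1 : IsCoprime (-g ^ 2) f := h.symm.pow_left.neg_left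
  have h2 := h1.add_mul_left_left f
  rwa [show -g ^ 2 + f * f = f ^ 2 - g ^ 2 by ring] at h2

lemma copAddRight {f g : L[X]} (h : IsCoprime f g) : IsCoprime (f ^ 2 + g ^ 2) g := by
  rw [add_comm]; exact copAddLeft h.symm

lemma copSubRight {f g : L[X]} (h : IsCoprime f g) : IsCoprime (f ^ 2 - g ^ 2) g := by
  rw [← neg_sub]; exact (copSubLeft h.symm).neg_left

/-- The possible exponents over a field of characteristic zero. -/
lemma exponents {K : Type*} [Field K] [CharZero K] (f g w : K[X])
    (hf : 0 < f.natDegree) (hfg : IsCoprime f g) (hg : 0 < g.natDegree) (hw : w ≠ 0)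
    {x y z : ℕ} (hx : 0 < x) (hy : 0 < y) (hz : 0 < z)
    (he : (w * (f ^ 2 - g ^ 2)) ^ x + (w * (2 * f * g)) ^ y = (w * (f ^ 2 + g ^ 2)) ^ z) :
    (x = y ∧ y = z) ∨ (x = 2 ∧ y = 1 ∧ z = 1) ∨ (x = 1 ∧ y = 2 ∧ z = 1) ∨
      (x = 1 ∧ y = 1 ∧ z = 2 ∧ ¬ IsUnit (f ^ 2 + g ^ 2)) := by
  let φ := algebraMap K (AlgebraicClosure K)
  have hF : 0 < (f.map φ).natDegree := by rwa [natDegree_map]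
  have hG : 0 < (g.map φ).natDegree := by rwa [natDegree_map]
  have hW : w.map φ ≠ 0 := by rwa [Ne, Polynomial.map_eq_zero]
  have hFG : IsCoprime (f.map φ) (g.map φ) := hfg.map (mapRingHom φ)
  have hCu : IsUnit (f ^ 2 + g ^ 2) → IsUnit (f.map φ ^ 2 + g.map φ ^ 2) := by
    intro h
    have := h.map (mapRingHom φ)
    simpa using this
  have hE := congrArg (Polynomial.map φ) he
  simp only [Polynomial.map_add, Polynomial.map_sub, Polynomial.map_mul, Polynomial.map_pow,
    Polynomial.map_ofNat] at hE
  generalize f.map φ = F at *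
  generalize g.map φ = G at *
  generalize w.map φ = W at *
  obtain ⟨I, hI⟩ := IsAlgClosed.exists_pow_nat_eq (-1 : AlgebraicClosure K) (n := 2) (by norm_num)
  have hCI : (C I : (AlgebraicClosure K)[X]) ^ 2 = -1 := by rw [← C_pow, hI]; simp
  have hI0 : I ≠ 0 := by rintro rfl; norm_num at hI
  have nuF : ¬ IsUnit F := fun h => by have := natDegree_eq_zero_of_isUnit h; omega
  have nu : ∀ J : AlgebraicClosure K, ¬ IsUnit ((F + C J * G) * (F - C J * G)) := by
    intro J h
    rw [IsUnit.mul_iff] at h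
    have d1 := natDegree_eq_zero_of_isUnit h.1
    have d2 := natDegree_eq_zero_of_isUnit h.2
    have d3 := natDegree_add_le (F + C J * G) (F - C J * G)
    rw [show (F + C J * G) + (F - C J * G) = C 2 * F by rw [C_ofNat]; ring,
      natDegree_C_mul two_ne_zero] at d3
    omega
  have h2u : IsUnit (2 : (AlgebraicClosure K)[X]) := by
    rw [← C_ofNat]; exact unitC two_ne_zero
  have cAB : ∀ A : (AlgebraicClosure K)[X], IsCoprime A F → IsCoprime A G →
      IsCoprime A (2 * F * G) := by
    intro A h1 h2
    rw [mul_assoc, isCoprime_mul_unit_left_right h2u]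
    exact h1.mul_right h2
  have hPQ : IsCoprime (F ^ 2 - G ^ 2) (2 * F * G) :=
    cAB _ (copSubLeft hFG) (copSubRight hFG)
  have hQR' : IsCoprime (F ^ 2 + G ^ 2) (2 * F * G) :=
    cAB _ (copAddLeft hFG) (copAddRight hFG)
  have hPR' : IsCoprime (F ^ 2 - G ^ 2) (F ^ 2 + G ^ 2) := by
    have h1 : IsCoprime (F ^ 2 - G ^ 2) (2 * G ^ 2) := by
      rw [isCoprime_mul_unit_left_right h2u]
      exact (copSubRight hFG).pow_right
    have h2 := h1.add_mul_left_right 1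
    rwa [show 2 * G ^ 2 + (F ^ 2 - G ^ 2) * 1 = F ^ 2 + G ^ 2 by ring] at h2
  have uI : IsUnit (C I : (AlgebraicClosure K)[X]) := unitC hI0
  have nuC : ¬ IsUnit (F ^ 2 + G ^ 2) := by
    intro h
    apply nu I
    rwa [show (F + C I * G) * (F - C I * G) = F ^ 2 + G ^ 2 by
      linear_combination -G ^ 2 * hCI]
  have main := classify (P := F ^ 2 - G ^ 2) (Q := 2 * F * G) (R := C I * (F ^ 2 + G ^ 2)) (w := W)
    (a := 1) (b := 1) (c := -(I⁻¹) ^ z) (x := x) (y := y) (z := z)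
    ?_ hPQ ?_ ?_ ?_ ?_ ?_ hW one_ne_zero one_ne_zero ?_ hx hy hz ?_
  · have := fun h => nuC (hCu h)
    rcases main with h | h | h | ⟨h1, h2, h3⟩
    · exact Or.inl h
    · exact Or.inr (Or.inl h)
    · exact Or.inr (Or.inr (Or.inl h))
    · exact Or.inr (Or.inr (Or.inr ⟨h1, h2, h3, this⟩))
  · linear_combination (F ^ 2 + G ^ 2) ^ 2 * hCI
  · rwa [isCoprime_mul_unit_left_right uI]
  · rw [isCoprime_mul_unit_left_right uI]; exact hQR'.symm
  · have := nu 1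
    rwa [show (F + C 1 * G) * (F - C 1 * G) = F ^ 2 - G ^ 2 by rw [C_1]; ring] at this
  · rw [IsUnit.mul_iff, IsUnit.mul_iff]; exact fun h => nuF h.1.2
  · rw [IsUnit.mul_iff]
    exact fun h => nuC h.2
  · exact neg_ne_zero.mpr (pow_ne_zero _ (inv_ne_zero hI0))
  · have : C (-(I⁻¹) ^ z) * (W * (C I * (F ^ 2 + G ^ 2))) ^ z = -(W * (F ^ 2 + G ^ 2)) ^ z := by
      rw [C_neg, C_pow, neg_mul, ← mul_pow]
      congr 2
      have hh : (C I⁻¹ : (AlgebraicClosure K)[X]) * C I = 1 := by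
        rw [← C_mul, inv_mul_cancel₀ hI0, C_1]
      linear_combination (W * (F ^ 2 + G ^ 2)) * hh
    rw [this, C_1]
    linear_combination hE

end JesPoly

theorem jesmanowicz_poly_main
    {K : Type*} [Field K] [CharZero K]
    (f g w : K[X])
    (hf : 0 < f.natDegree) (hg : 0 < g.natDegree)
    (hfg : IsCoprime f g) (hw : w ≠ 0) :
    ∀ x y z : ℕ, 0 < x → 0 < y → 0 < z →
      ((w * (f ^ 2 - g ^ 2)) ^ x + (w * (2 * f * g)) ^ y = (w * (f ^ 2 + g ^ 2)) ^ z ↔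
        ((x = 2 ∧ y = 2 ∧ z = 2) ∨
          (x = 2 ∧ y = 1 ∧ z = 1 ∧ w.natDegree = 0 ∧ w * (f + g) ^ 2 = 1))) := by
  intro x y z hx hy hz
  have nuf : ¬ IsUnit f := fun h => by have := natDegree_eq_zero_of_isUnit h; omega
  have nug : ¬ IsUnit g := fun h => by have := natDegree_eq_zero_of_isUnit h; omega
  have hf0 : f ≠ 0 := JesPoly.ne0 hfg nug
  have hg0 : g ≠ 0 := JesPoly.ne0 hfg.symm nuf
  have h20 : (2 : K[X]) ≠ 0 := two_ne_zero
  have h2u : IsUnit (2 : K[X]) := by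
    rw [← C_ofNat]; exact JesPoly.unitC two_ne_zero
  have hne : f - g ≠ 0 := by
    intro h
    rw [sub_eq_zero.mp h] at hfg
    exact nug (isCoprime_self.mp hfg)
  have hne' : f + g ≠ 0 := by
    intro h
    have h' : f = -g := by linear_combination h
    rw [h', IsCoprime.neg_left_iff] at hfg
    exact nug (isCoprime_self.mp hfg)
  have hA0 : f ^ 2 - g ^ 2 ≠ 0 := by
    rw [show f ^ 2 - g ^ 2 = (f - g) * (f + g) by ring]
    exact mul_ne_zero hne hne'
  have hB0 : 2 * f * g ≠ 0 := mul_ne_zero (mul_ne_zero h20 hf0) hg0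
  have hcf := JesPoly.copAddLeft hfg
  have hcg := JesPoly.copAddRight hfg
  have hC0 : f ^ 2 + g ^ 2 ≠ 0 := JesPoly.ne0 hcf nuf
  constructor
  · intro he
    rcases JesPoly.exponents f g w hf hfg hg hw hx hy hz he with
      ⟨rfl, rfl⟩ | ⟨rfl, rfl, rfl⟩ | ⟨rfl, rfl, rfl⟩ | ⟨rfl, rfl, rfl, nuC⟩
    · left
      rcases Nat.lt_or_ge 2 x with h3 | h3
      · exfalso
        have hcop : IsCoprime (f ^ 2 - g ^ 2) (2 * f * g) := by
          rw [mul_assoc, isCoprime_mul_unit_left_right h2u]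
          exact (JesPoly.copSubLeft hfg).mul_right (JesPoly.copSubRight hfg)
        have he' : (f ^ 2 - g ^ 2) ^ x + (2 * f * g) ^ x = (f ^ 2 + g ^ 2) ^ x := by
          apply mul_left_cancel₀ (pow_ne_zero x hw)
          simp only [mul_pow] at he ⊢
          linear_combination he
        have := Polynomial.flt h3 (by exact_mod_cast hx.ne') hA0 hB0 hC0 hcop he'
        have h2 := this.2.1
        rw [natDegree_mul (mul_ne_zero h20 hf0) hg0] at h2
        omega
      · have : x = 1 ∨ x = 2 := by omega
        rcases this with rfl | rfl
        · exfalso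
          have : (w * 2 * g) * (f - g) = 0 := by linear_combination he
          exact mul_ne_zero (mul_ne_zero (mul_ne_zero hw h20) hg0) hne this
        · simp
    · right
      have h1 : w * (f + g) ^ 2 = 1 := by
        apply mul_left_cancel₀ (mul_ne_zero hw (pow_ne_zero 2 hne))
        linear_combination he
      exact ⟨rfl, rfl, rfl, natDegree_eq_zero_of_isUnit (IsUnit.of_mul_eq_one _ h1), h1⟩
    · exfalso
      have h1 : (2 * w * f) * f = 1 := by
        apply mul_left_cancel₀ (mul_ne_zero (mul_ne_zero hw h20) (pow_ne_zero 2 hg0))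
        linear_combination he
      exact nuf (isUnit_of_dvd_one (Dvd.intro_left _ h1))
    · exfalso
      have h1 : f ^ 2 - g ^ 2 + 2 * f * g = w * (f ^ 2 + g ^ 2) ^ 2 := by
        apply mul_left_cancel₀ hw
        linear_combination he
      have h2 : f ^ 2 + g ^ 2 ∣ (2 * f) * (f + g) :=
        ⟨w * (f ^ 2 + g ^ 2) + 1, by linear_combination h1⟩
      have h3 : f ^ 2 + g ^ 2 ∣ f + g := by
        rw [mul_assoc, h2u.dvd_mul_left] at h2
        exact hcf.dvd_of_dvd_mul_left h2
      have h4 : f ^ 2 + g ^ 2 ∣ f * g := by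
        obtain ⟨s, hs⟩ := h3
        rw [← h2u.dvd_mul_left]
        exact ⟨s * (f + g) - 1, by linear_combination (f + g) * hs⟩
      have hu : IsUnit (f ^ 2 + g ^ 2) := by
        have := hcf.dvd_of_dvd_mul_left h4
        exact hcg.isUnit_of_dvd' dvd_rfl this
      exact nuC hu
  · rintro (⟨rfl, rfl, rfl⟩ | ⟨rfl, rfl, rfl, -, h⟩)
    · ring
    · linear_combination (w * (f - g) ^ 2) * h
end

section
/- Let K be a field of characteristic 0, let f and g be nonconstant, relatively prime polynomials in K[t], set A = f² − g², B = 2fg, C = f² + g², and let w ∈ K[t] be nonzero. If (x, y, z) is a solution in positive integers of (wA)^x + (wB)^y = (wC)^z with x = y = 2, or with x = z = 2, or with y = z = 2, then (x, y, z) = (2, 2, 2). -/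
open Polynomial

lemma aux_deg {K : Type*} [Field K] [CharZero K] (f g : K[X]) (e : K) (he : e ≠ 0)
    (hf : 0 < f.natDegree) (hg : 0 < g.natDegree)
    (hfg : IsCoprime f g) : 0 < (f ^ 2 + C e * g ^ 2).natDegree := by
  by_contra h
  have h0 : (f ^ 2 + C e * g ^ 2).natDegree = 0 := by omega
  have hd : derivative (f ^ 2 + C e * g ^ 2) = 0 := derivative_of_natDegree_zero h0
  have hE : (C e : K[X]) ≠ 0 := C_ne_zero.mpr he
  have h2 : (2 : K[X]) ≠ 0 := two_ne_zero
  have hd' : f * derivative f + C e * (g * derivative g) = 0 := by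
    apply mul_left_cancel₀ h2
    simp [derivative_pow] at hd
    simp only [C_ofNat] at hd
    linear_combination hd
  have hu : IsUnit (C e : K[X]) := isUnit_C.mpr he.isUnit
  have h1 : f ∣ derivative g := by
    have : f ∣ C e * (g * derivative g) := ⟨-derivative f, by linear_combination hd'⟩
    exact hfg.dvd_of_dvd_mul_left ((hu.dvd_mul_left).mp this)
  have h3 : g ∣ derivative f := by
    have : g ∣ f * derivative f := ⟨-(C e * derivative g), by linear_combination hd'⟩
    exact hfg.symm.dvd_of_dvd_mul_left this
  have hf' : derivative f ≠ 0 := fun h => by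
    have := natDegree_eq_zero_of_derivative_eq_zero h; omega
  have hg' : derivative g ≠ 0 := fun h => by
    have := natDegree_eq_zero_of_derivative_eq_zero h; omega
  have a1 := natDegree_le_of_dvd h1 hg'
  have a2 := natDegree_le_of_dvd h3 hf'
  have a3 := natDegree_derivative_lt (p := f) (by omega)
  have a4 := natDegree_derivative_lt (p := g) (by omega)
  omega

lemma aux_pow {K : Type*} [Field K] (w p : K[X]) (hw : w ≠ 0) (hp : 0 < p.natDegree) (n : ℕ)
    (h : (w * p) ^ n = (w * p) ^ 2) : n = 2 := by
  have hp0 : p ≠ 0 := by rintro rfl; simp at hp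
  have h' := congrArg natDegree h
  rw [natDegree_pow, natDegree_pow, natDegree_mul hw hp0] at h'
  exact Nat.eq_of_mul_eq_mul_right (by omega) h'

theorem jesmanowicz_poly_two_are_two
    {K : Type*} [Field K] [CharZero K]
    (f g w : K[X])
    (hf : 0 < f.natDegree) (hg : 0 < g.natDegree)
    (hfg : IsCoprime f g) (hw : w ≠ 0)
    (x y z : ℕ) (hx : 0 < x) (hy : 0 < y) (hz : 0 < z)
    (heq : (w * (f ^ 2 - g ^ 2)) ^ x + (w * (2 * f * g)) ^ y = (w * (f ^ 2 + g ^ 2)) ^ z)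
    (h2 : (x = 2 ∧ y = 2) ∨ (x = 2 ∧ z = 2) ∨ (y = 2 ∧ z = 2)) :
    x = 2 ∧ y = 2 ∧ z = 2 := by
  have hA : 0 < (f ^ 2 - g ^ 2).natDegree := by
    have := aux_deg f g (-1) (by simp) hf hg hfg
    have e : f ^ 2 + C (-1) * g ^ 2 = f ^ 2 - g ^ 2 := by simp; ring
    rwa [e] at this
  have hC : 0 < (f ^ 2 + g ^ 2).natDegree := by
    have := aux_deg f g 1 (by simp) hf hg hfg
    have e : f ^ 2 + C 1 * g ^ 2 = f ^ 2 + g ^ 2 := by simp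
    rwa [e] at this
  have hB : 0 < (2 * f * g).natDegree := by
    have f0 : f ≠ 0 := by rintro rfl; simp at hf
    have g0 : g ≠ 0 := by rintro rfl; simp at hg
    rw [natDegree_mul (mul_ne_zero two_ne_zero f0) g0]
    omega
  rcases h2 with ⟨rfl, rfl⟩ | ⟨rfl, rfl⟩ | ⟨rfl, rfl⟩
  · exact ⟨rfl, rfl, aux_pow w _ hw hC z (by rw [← heq]; ring)⟩
  · exact ⟨rfl, aux_pow w _ hw hB y (by linear_combination heq), rfl⟩
  · exact ⟨aux_pow w _ hw hA x (by linear_combination heq), rfl, rfl⟩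
end

section
/- Let K be an algebraically closed field of characteristic 0, let f and g be nonconstant, relatively prime polynomials in K[t] with deg f ≥ deg g, set A = f² − g², B = 2fg, C = f² + g², and let w be a nonzero constant polynomial. Suppose the leading term of f² is neither equal to the leading term of g² nor equal to its negative (i.e., it is not the case that deg f = deg g and (leadingCoeff f)² = (leadingCoeff g)², and it is not the case that deg f = deg g and (leadingCoeff f)² = −(leadingCoeff g)²). If (x, y, z) is a solution in positive integers of (wA)^x + (wB)^y = (wC)^z, then x ≤ 2 and z ≤ 2. -/
open Polynomial

/-- Degree of `f ^ 2 + c * g ^ 2` when no cancellation of leading terms occurs. -/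
theorem natDegree_sq_add_aux {K : Type*} [Field K] (f g : K[X]) (c : K)
    (hf : 0 < f.natDegree) (hdeg : g.natDegree ≤ f.natDegree)
    (h : ¬ (f.natDegree = g.natDegree ∧ f.leadingCoeff ^ 2 + c * g.leadingCoeff ^ 2 = 0)) :
    (f ^ 2 + C c * g ^ 2).natDegree = 2 * f.natDegree := by
  have hf0 : f.leadingCoeff ≠ 0 := by
    intro h0
    rw [leadingCoeff_eq_zero] at h0
    simp [h0] at hf
  have h2 : (C c * g ^ 2).natDegree ≤ 2 * g.natDegree :=
    (natDegree_C_mul_le _ _).trans natDegree_pow_le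
  have h1 : (f ^ 2).natDegree = 2 * f.natDegree := natDegree_pow _ _
  rcases hdeg.lt_or_eq with hlt | he
  · rw [natDegree_add_eq_left_of_natDegree_lt, h1]
    omega
  · refine natDegree_eq_of_le_of_coeff_ne_zero ?_ ?_
    · exact (natDegree_add_le _ _).trans (by simp only [max_le_iff]; omega)
    · have e1 : (f ^ 2).coeff (2 * f.natDegree) = f.leadingCoeff ^ 2 := by
        rw [← h1, coeff_natDegree, leadingCoeff_pow]
      have e2 : (g ^ 2).coeff (2 * f.natDegree) = g.leadingCoeff ^ 2 := by
        rw [← he, ← natDegree_pow, coeff_natDegree, leadingCoeff_pow]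
      rw [coeff_add, coeff_C_mul, e1, e2]
      exact fun h0 => h ⟨he.symm, h0⟩

theorem jesmanowicz_poly_bounds_case1
    {K : Type*} [Field K] [CharZero K] [IsAlgClosed K]
    (f g w : K[X])
    (hf : 0 < f.natDegree) (hg : 0 < g.natDegree)
    (hdeg : g.natDegree ≤ f.natDegree)
    (hfg : IsCoprime f g) (hw : w ≠ 0) (hwc : w.natDegree = 0)
    (hLT1 : ¬ (f.natDegree = g.natDegree ∧ f.leadingCoeff ^ 2 = g.leadingCoeff ^ 2))
    (hLT2 : ¬ (f.natDegree = g.natDegree ∧ f.leadingCoeff ^ 2 = -g.leadingCoeff ^ 2))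
    (x y z : ℕ) (hx : 0 < x) (hy : 0 < y) (hz : 0 < z)
    (heq : (w * (f ^ 2 - g ^ 2)) ^ x + (w * (2 * f * g)) ^ y = (w * (f ^ 2 + g ^ 2)) ^ z) :
    x ≤ 2 ∧ z ≤ 2 := by
  classical
  have hdA : (f ^ 2 - g ^ 2).natDegree = 2 * f.natDegree := by
    have := natDegree_sq_add_aux f g (-1) hf hdeg
      (fun h => hLT1 ⟨h.1, by linear_combination h.2⟩)
    rw [← this]; congr 1; simp; ring
  have hdC : (f ^ 2 + g ^ 2).natDegree = 2 * f.natDegree := by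
    have := natDegree_sq_add_aux f g 1 hf hdeg
      (fun h => hLT2 ⟨h.1, by linear_combination h.2⟩)
    rw [← this]; congr 1; simp
  have hf0 : f ≠ 0 := by rintro rfl; simp at hf
  have hg0 : g ≠ 0 := by rintro rfl; simp at hg
  have hA0 : f ^ 2 - g ^ 2 ≠ 0 := by intro h; rw [h] at hdA; simp at hdA; omega
  have hC0 : f ^ 2 + g ^ 2 ≠ 0 := by intro h; rw [h] at hdC; simp at hdC; omega
  have hwu : IsUnit w := by
    rw [Polynomial.isUnit_iff_degree_eq_zero, degree_eq_natDegree hw, hwc]; rfl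
  have h2u : IsUnit (2 : K[X]) := by
    have : (2 : K[X]) = C 2 := (map_ofNat C 2).symm
    rw [this, isUnit_C]; exact isUnit_iff_ne_zero.mpr two_ne_zero
  have h20 : (2 : K[X]) ≠ 0 := h2u.ne_zero
  set a := w * (f ^ 2 - g ^ 2) with ha
  set b := w * (2 * f * g) with hb
  set c := w * (f ^ 2 + g ^ 2) with hc
  have ha0 : a ≠ 0 := mul_ne_zero hw hA0
  have hb0 : b ≠ 0 := mul_ne_zero hw (mul_ne_zero (mul_ne_zero h20 hf0) hg0)
  have hc0 : c ≠ 0 := mul_ne_zero hw hC0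
  have hda : a.natDegree = 2 * f.natDegree := by
    rw [ha, natDegree_mul hw hA0, hwc, hdA, zero_add]
  have hdc : c.natDegree = 2 * f.natDegree := by
    rw [hc, natDegree_mul hw hC0, hwc, hdC, zero_add]
  have hdb : b.natDegree = f.natDegree + g.natDegree := by
    rw [hb, natDegree_mul hw (mul_ne_zero (mul_ne_zero h20 hf0) hg0), hwc,
      natDegree_mul (mul_ne_zero h20 hf0) hg0, natDegree_mul h20 hf0,
      natDegree_eq_zero_of_isUnit h2u, zero_add, zero_add]
  have hAf : IsCoprime (f ^ 2 - g ^ 2) f := by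
    have h := (hfg.symm.pow_left (m := 2)).neg_left.add_mul_left_left f
    have e : f ^ 2 - g ^ 2 = -g ^ 2 + f * f := by ring
    rw [e]; exact h
  have hAg : IsCoprime (f ^ 2 - g ^ 2) g := by
    have h := (hfg.pow_left (m := 2)).add_mul_left_left (-g)
    have e : f ^ 2 - g ^ 2 = f ^ 2 + g * -g := by ring
    rw [e]; exact h
  have hab : IsCoprime a b := by
    rw [ha, hb, isCoprime_mul_unit_left hwu]
    have h2 : IsCoprime (f ^ 2 - g ^ 2) 2 := by
      obtain ⟨v, hv⟩ := h2u.exists_left_inv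
      exact ⟨0, v, by rw [hv]; ring⟩
    exact (h2.mul_right hAf).mul_right hAg
  have hsum : a ^ x + b ^ y + -(c ^ z) = 0 := by rw [heq]; ring
  have hrad : (UniqueFactorizationMonoid.radical (a ^ x * b ^ y * -(c ^ z))).natDegree
      ≤ 5 * f.natDegree + g.natDegree := by
    have hd : UniqueFactorizationMonoid.radical (a ^ x * b ^ y * -(c ^ z)) ∣ a * b * c := by
      rw [← UniqueFactorizationMonoid.exists_dvd_pow_iff_radical_dvd (by
        simp [ha0, hb0, hc0])]
      refine ⟨x + y + z, ?_⟩
      rw [mul_pow (a * b) c, mul_pow a b]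
      refine mul_dvd_mul (mul_dvd_mul ?_ ?_) ?_
      · exact pow_dvd_pow _ (by omega)
      · exact pow_dvd_pow _ (by omega)
      · rw [neg_dvd]; exact pow_dvd_pow _ (by omega)
    refine (natDegree_le_of_dvd hd (by simp [ha0, hb0, hc0])).trans ?_
    rw [natDegree_mul (mul_ne_zero ha0 hb0) hc0, natDegree_mul ha0 hb0, hda, hdb, hdc]
    omega
  have hdax : (a ^ x).natDegree = x * (2 * f.natDegree) := by rw [natDegree_pow, hda]
  rcases Polynomial.abc (pow_ne_zero x ha0) (pow_ne_zero y hb0)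
    (neg_ne_zero.mpr (pow_ne_zero z hc0)) hab.pow hsum with ⟨h1, -, h3⟩ | ⟨h1, -, -⟩
  · rw [natDegree_neg, natDegree_pow, hdc] at h3
    rw [hdax] at h1
    constructor
    · by_contra hcon
      have : 3 * (2 * f.natDegree) ≤ x * (2 * f.natDegree) :=
        Nat.mul_le_mul_right _ (by omega)
      omega
    · by_contra hcon
      have : 3 * (2 * f.natDegree) ≤ z * (2 * f.natDegree) :=
        Nat.mul_le_mul_right _ (by omega)
      omega
  · have := Polynomial.derivative_eq_zero.mp h1
    rw [hdax] at this
    have : 0 < x * (2 * f.natDegree) := by positivity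
    omega
end

section
/- Let K be an algebraically closed field of characteristic 0, let f and g be nonconstant, relatively prime polynomials in K[t] with deg f ≥ deg g, set A = f² − g², B = 2fg, C = f² + g², and let w be a nonzero constant polynomial. Suppose the leading term of f² equals the negative of the leading term of g² (i.e., deg f = deg g and (leadingCoeff f)² = −(leadingCoeff g)²). If (x, y, z) is a solution in positive integers of (wA)^x + (wB)^y = (wC)^z, then x ≤ 2 and y ≤ 2. -/
open Polynomial

theorem jesmanowicz_poly_bounds_case2
    {K : Type*} [Field K] [CharZero K] [IsAlgClosed K]
    (f g w : K[X])
    (hf : 0 < f.natDegree) (hg : 0 < g.natDegree)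
    (hdeg : g.natDegree ≤ f.natDegree)
    (hfg : IsCoprime f g) (hw : w ≠ 0) (hwc : w.natDegree = 0)
    (hLT : f.natDegree = g.natDegree ∧ f.leadingCoeff ^ 2 = -g.leadingCoeff ^ 2)
    (x y z : ℕ) (hx : 0 < x) (hy : 0 < y) (hz : 0 < z)
    (heq : (w * (f ^ 2 - g ^ 2)) ^ x + (w * (2 * f * g)) ^ y = (w * (f ^ 2 + g ^ 2)) ^ z) :
    x ≤ 2 ∧ y ≤ 2 := by
  classical
  obtain ⟨hd, hl⟩ := hLT
  have hf0 : f ≠ 0 := by rintro rfl; simp at hf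
  have hg0 : g ≠ 0 := by rintro rfl; simp at hg
  have h2 : IsUnit (2 : K[X]) := by
    have : (2 : K[X]) = C 2 := (map_ofNat C 2).symm
    rw [this]
    exact (two_ne_zero : (2 : K) ≠ 0).isUnit.map C
  have hwu : IsUnit w := by
    rw [Polynomial.isUnit_iff_degree_eq_zero, Polynomial.degree_eq_natDegree hw, hwc]; rfl
  have cf : (f ^ 2).coeff (2 * f.natDegree) = f.leadingCoeff ^ 2 := by
    rw [coeff_pow_of_natDegree_le le_rfl]; rfl
  have cg : (g ^ 2).coeff (2 * f.natDegree) = g.leadingCoeff ^ 2 := by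
    rw [hd, coeff_pow_of_natDegree_le le_rfl]; rfl
  have df : (f ^ 2).natDegree ≤ 2 * f.natDegree := by rw [natDegree_pow]
  have dg : (g ^ 2).natDegree ≤ 2 * f.natDegree := by rw [natDegree_pow, hd]
  have lf : f.leadingCoeff ≠ 0 := leadingCoeff_ne_zero.mpr hf0
  have dA : (f ^ 2 - g ^ 2).natDegree = 2 * f.natDegree := by
    refine natDegree_eq_of_le_of_coeff_ne_zero
      ((natDegree_sub_le _ _).trans (max_le df dg)) ?_
    rw [coeff_sub, cf, cg]
    have : f.leadingCoeff ^ 2 - g.leadingCoeff ^ 2 = 2 * f.leadingCoeff ^ 2 := by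
      linear_combination (-1) * hl
    rw [this]
    exact mul_ne_zero two_ne_zero (pow_ne_zero _ lf)
  have dB : (2 * f * g).natDegree = 2 * f.natDegree := by
    rw [natDegree_mul (mul_ne_zero h2.ne_zero hf0) hg0, natDegree_mul h2.ne_zero hf0,
      natDegree_eq_zero_of_isUnit h2]
    omega
  have dC : (f ^ 2 + g ^ 2).natDegree < 2 * f.natDegree := by
    refine lt_of_le_of_ne ((natDegree_add_le _ _).trans (max_le df dg)) fun h => ?_
    have h0 : (f ^ 2 + g ^ 2).leadingCoeff = 0 := by
      rw [leadingCoeff, h, coeff_add, cf, cg, hl]; ring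
    rw [leadingCoeff_eq_zero] at h0
    rw [h0] at h
    simp at h
    omega
  have cAB : IsCoprime (f ^ 2 - g ^ 2) (2 * f * g) := by
    have e : f ^ 2 - g ^ 2 = -g ^ 2 + f * f := by ring
    have e' : f ^ 2 - g ^ 2 = f ^ 2 + g * (-g) := by ring
    refine IsCoprime.mul_right (IsCoprime.mul_right ?_ ?_) ?_
    · obtain ⟨u, hu⟩ := h2.exists_left_inv
      exact ⟨0, u, by rw [hu]; ring⟩
    · rw [e]
      exact (IsCoprime.neg_left (hfg.symm.pow_left)).add_mul_left_left _
    · rw [e']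
      exact (hfg.pow_left).add_mul_left_left _
  have hC0 : f ^ 2 + g ^ 2 ≠ 0 := by
    intro h
    have hdv : g ∣ f ^ 2 := ⟨-g, by linear_combination h⟩
    have hu : IsUnit g := (hfg.symm.pow_right (n := 2)).isUnit_of_dvd' dvd_rfl hdv
    have := natDegree_eq_zero_of_isUnit hu
    omega
  have hA0 : f ^ 2 - g ^ 2 ≠ 0 := by intro h; rw [h] at dA; simp at dA; omega
  have hB0 : 2 * f * g ≠ 0 := mul_ne_zero (mul_ne_zero h2.ne_zero hf0) hg0
  have key : ∀ P : K[X], P ≠ 0 → (w * P).natDegree = P.natDegree := fun P hP => by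
    rw [natDegree_mul hw hP, hwc, zero_add]
  have cW := (isCoprime_mul_units_left hwu hwu (f ^ 2 - g ^ 2) (2 * f * g)).mpr cAB
  have dA' := (key _ hA0).trans dA
  have dB' := (key _ hB0).trans dB
  have dC' := (key _ hC0).trans_lt dC
  have nA := mul_ne_zero hw hA0
  have nB := mul_ne_zero hw hB0
  have nC := mul_ne_zero hw hC0
  generalize w * (f ^ 2 - g ^ 2) = P at *
  generalize w * (2 * f * g) = Q at *
  generalize w * (f ^ 2 + g ^ 2) = R at *
  have hn : P ^ x * Q ^ y * -(R ^ z) ≠ 0 :=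
    mul_ne_zero (mul_ne_zero (pow_ne_zero _ nA) (pow_ne_zero _ nB))
      (neg_ne_zero.mpr (pow_ne_zero _ nC))
  have hrad : UniqueFactorizationMonoid.radical (P ^ x * Q ^ y * -(R ^ z)) ∣ P * Q * R := by
    rw [← UniqueFactorizationMonoid.exists_dvd_pow_iff_radical_dvd hn]
    refine ⟨x + y + z, ?_⟩
    rw [mul_pow, mul_pow]
    refine mul_dvd_mul (mul_dvd_mul ?_ ?_) ((neg_dvd).mpr ?_) <;>
      exact pow_dvd_pow _ (by omega)
  have hle := natDegree_le_of_dvd hrad (mul_ne_zero (mul_ne_zero nA nB) nC)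
  rw [natDegree_mul (mul_ne_zero nA nB) nC, natDegree_mul nA nB, dA', dB'] at hle
  rcases Polynomial.abc (pow_ne_zero x nA) (pow_ne_zero y nB)
    (neg_ne_zero.mpr (pow_ne_zero z nC)) cW.pow (by rw [heq]; ring) with ⟨h1, h3, -⟩ | ⟨h, -⟩
  · rw [natDegree_pow, dA'] at h1
    rw [natDegree_pow, dB'] at h3
    constructor
    · by_contra hc
      have := Nat.mul_le_mul_right (2 * f.natDegree) (show 3 ≤ x by omega)
      omega
    · by_contra hc
      have := Nat.mul_le_mul_right (2 * f.natDegree) (show 3 ≤ y by omega)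
      omega
  · exfalso
    have := derivative_eq_zero.mp h
    rw [natDegree_pow, dA'] at this
    have : 0 < x * (2 * f.natDegree) := by positivity
    omega
end

section
/- Let K be an algebraically closed field of characteristic 0, let f and g be nonconstant, relatively prime polynomials in K[t] with deg f ≥ deg g, set A = f² − g², B = 2fg, C = f² + g², and let w be a nonzero constant polynomial. Suppose the leading term of f² equals the leading term of g² (i.e., deg f = deg g and (leadingCoeff f)² = (leadingCoeff g)²). If (x, y, z) is a solution in positive integers of (wA)^x + (wB)^y = (wC)^z, then y ≤ 2 and z ≤ 2. -/
open Polynomial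

theorem aux_radical_pow_le {K : Type*} [Field K] [DecidableEq K] (p : K[X]) (n : ℕ) (hn : 0 < n) :
    (UniqueFactorizationMonoid.radical (p ^ n)).natDegree ≤ p.natDegree := by
  rw [UniqueFactorizationMonoid.radical_pow p hn.ne']
  exact natDegree_radical_le

theorem aux_radical_mul_le {K : Type*} [Field K] [DecidableEq K] (p q : K[X]) :
    (UniqueFactorizationMonoid.radical (p * q)).natDegree ≤
      (UniqueFactorizationMonoid.radical p).natDegree +
      (UniqueFactorizationMonoid.radical q).natDegree := by
  rw [← natDegree_mul UniqueFactorizationMonoid.radical_ne_zero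
    UniqueFactorizationMonoid.radical_ne_zero]
  exact natDegree_le_of_dvd UniqueFactorizationMonoid.radical_mul_dvd
    (mul_ne_zero UniqueFactorizationMonoid.radical_ne_zero
    UniqueFactorizationMonoid.radical_ne_zero)

theorem jesmanowicz_poly_bounds_case3
    {K : Type*} [Field K] [CharZero K] [IsAlgClosed K]
    (f g w : K[X])
    (hf : 0 < f.natDegree) (hg : 0 < g.natDegree)
    (hdeg : g.natDegree ≤ f.natDegree)
    (hfg : IsCoprime f g) (hw : w ≠ 0) (hwc : w.natDegree = 0)
    (hLT : f.natDegree = g.natDegree ∧ f.leadingCoeff ^ 2 = g.leadingCoeff ^ 2)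
    (x y z : ℕ) (hx : 0 < x) (hy : 0 < y) (hz : 0 < z)
    (heq : (w * (f ^ 2 - g ^ 2)) ^ x + (w * (2 * f * g)) ^ y = (w * (f ^ 2 + g ^ 2)) ^ z) :
    y ≤ 2 ∧ z ≤ 2 := by
  classical
  obtain ⟨hd, hl⟩ := hLT
  have hf0 : f ≠ 0 := by rintro rfl; simp at hf
  have hg0 : g ≠ 0 := by rintro rfl; simp at hg
  have hwu : IsUnit w := by
    rw [Polynomial.isUnit_iff_degree_eq_zero, degree_eq_natDegree hw, hwc]; rfl
  have h2u : IsUnit (2 : K[X]) := by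
    have : (2 : K[X]) = C 2 := (map_ofNat C 2).symm
    rw [this]; exact (isUnit_iff_ne_zero.mpr two_ne_zero).map C
  have hA0 : f ^ 2 - g ^ 2 ≠ 0 := by
    intro h
    have h1 : f ∣ g ^ 2 := by
      rw [← sub_eq_zero.mp h]; exact dvd_pow_self f two_ne_zero
    have := (hfg.pow_right (n := 2)).isUnit_of_dvd' dvd_rfl h1
    have := natDegree_eq_zero_of_isUnit this
    omega
  have hdf2 : (f ^ 2).natDegree = 2 * f.natDegree := natDegree_pow f 2
  have hdg2 : (g ^ 2).natDegree = 2 * f.natDegree := by rw [natDegree_pow, hd]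
  have hdA : (w * (f ^ 2 - g ^ 2)).natDegree ≤ 2 * f.natDegree := by
    rw [natDegree_mul hw hA0, hwc, zero_add]
    exact (natDegree_sub_le _ _).trans (by rw [hdf2, hdg2, max_self])
  have hB0 : (2 * f * g) ≠ 0 := mul_ne_zero (mul_ne_zero two_ne_zero hf0) hg0
  have hdB : (w * (2 * f * g)).natDegree = 2 * f.natDegree := by
    rw [natDegree_mul hw hB0, natDegree_mul (mul_ne_zero two_ne_zero hf0) hg0,
      natDegree_mul two_ne_zero hf0, hwc, natDegree_eq_zero_of_isUnit h2u]
    omega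
  have hcC : (f ^ 2 + g ^ 2).coeff (2 * f.natDegree) ≠ 0 := by
    have e1 : (f ^ 2).coeff (2 * f.natDegree) = f.leadingCoeff ^ 2 := by
      rw [← leadingCoeff_pow, leadingCoeff, hdf2]
    have e2 : (g ^ 2).coeff (2 * f.natDegree) = g.leadingCoeff ^ 2 := by
      rw [← leadingCoeff_pow, leadingCoeff, hdg2]
    rw [coeff_add, e1, e2, ← hl, ← two_mul]
    exact mul_ne_zero two_ne_zero (pow_ne_zero _ (leadingCoeff_ne_zero.mpr hf0))
  have hC0 : f ^ 2 + g ^ 2 ≠ 0 := by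
    intro h; rw [h] at hcC; simp at hcC
  have hdC : (w * (f ^ 2 + g ^ 2)).natDegree = 2 * f.natDegree := by
    rw [natDegree_mul hw hC0, hwc, zero_add]
    apply le_antisymm
    · exact (natDegree_add_le _ _).trans (by rw [hdf2, hdg2, max_self])
    · exact le_natDegree_of_ne_zero hcC
  have hcop : IsCoprime (w * (f ^ 2 - g ^ 2)) (w * (2 * f * g)) := by
    rw [isCoprime_mul_unit_left hwu, mul_assoc, isCoprime_mul_unit_left_right h2u]
    apply IsCoprime.mul_right
    · have h := (hfg.symm.pow_left (m := 2)).neg_left.add_mul_left_left f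
      have e : f ^ 2 - g ^ 2 = -g ^ 2 + f * f := by ring
      rw [e]; exact h
    · have h := (hfg.pow_left (m := 2)).add_mul_left_left (-g)
      have e : f ^ 2 - g ^ 2 = f ^ 2 + g * -g := by ring
      rw [e]; exact h
  generalize w * (f ^ 2 - g ^ 2) = A at *
  have hA0' : A ≠ 0 := by
    rintro rfl
    have := natDegree_eq_zero_of_isUnit (isCoprime_zero_left.mp hcop)
    omega
  have hB0' := mul_ne_zero hw hB0
  have hC0' := mul_ne_zero hw hC0
  generalize w * (2 * f * g) = B at *
  generalize w * (f ^ 2 + g ^ 2) = D at *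
  have hsum : A ^ x + B ^ y + -(D ^ z) = 0 := by rw [heq]; ring
  rcases Polynomial.abc (pow_ne_zero x hA0') (pow_ne_zero y hB0')
    (neg_ne_zero.mpr (pow_ne_zero z hC0')) hcop.pow hsum with h | h
  · obtain ⟨-, h2, h3⟩ := h
    have r1 := aux_radical_mul_le (A ^ x * B ^ y) (-(D ^ z))
    have r2 := aux_radical_mul_le (A ^ x) (B ^ y)
    rw [UniqueFactorizationDomain.radical_neg (a := D ^ z)] at r1
    have a1 := aux_radical_pow_le A x hx
    have a2 := aux_radical_pow_le B y hy
    have a3 := aux_radical_pow_le D z hz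
    rw [natDegree_neg, natDegree_pow, hdC] at h3
    rw [natDegree_pow, hdB] at h2
    constructor
    · by_contra! hc
      nlinarith
    · by_contra! hc
      nlinarith
  · exfalso
    have := Polynomial.derivative_eq_zero.mp h.2.1
    rw [natDegree_pow, hdB] at this
    have : 0 < y * (2 * f.natDegree) := by positivity
    omega
end

section
/- Let K be a field of characteristic 0, let f and g be nonconstant, relatively prime polynomials in K[t], set A = f² − g², B = 2fg, C = f² + g², and let w ∈ K[t] be a nonzero polynomial. Then for every positive integer r, the triple (x, y, z) = (1, r, 1) is not a solution of (wA)^x + (wB)^y = (wC)^z; that is, wA + (wB)^r ≠ wC for all r ≥ 1. -/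
open Polynomial

theorem jesmanowicz_poly_not_1r1
    {K : Type*} [Field K] [CharZero K]
    (f g w : K[X])
    (hf : 0 < f.natDegree) (hg : 0 < g.natDegree)
    (hfg : IsCoprime f g) (hw : w ≠ 0) :
    ∀ r : ℕ, 1 ≤ r →
      w * (f ^ 2 - g ^ 2) + (w * (2 * f * g)) ^ r ≠ w * (f ^ 2 + g ^ 2) := by
  intro r hr h
  obtain ⟨n, rfl⟩ : ∃ n, r = n + 1 := ⟨r - 1, by omega⟩
  have h1 : w * ((w * (2 * f * g)) ^ n * (2 * f * g)) = w * (2 * g ^ 2) := by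
    rw [pow_succ] at h
    linear_combination h
  have h2 := mul_left_cancel₀ hw h1
  have h3 : f ∣ 2 * g ^ 2 := ⟨(w * (2 * f * g)) ^ n * (2 * g), by rw [← h2]; ring⟩
  have h4 : f ∣ 2 := (hfg.pow_right (n := 2)).dvd_of_dvd_mul_right h3
  have h2ne : (2 : K[X]) ≠ 0 := two_ne_zero
  have h5 := natDegree_le_of_dvd h4 h2ne
  have h6 : (2 : K[X]).natDegree = 0 := natDegree_ofNat 2
  omega
end

section
/- Let K be a field of characteristic 0, let f and g be nonconstant, relatively prime polynomials in K[t], set A = f² − g², B = 2fg, C = f² + g², and let w ∈ K[t] be a nonzero polynomial. Then for every integer r ≥ 3, the triple (x, y, z) = (r, 1, 1) is not a solution of (wA)^x + (wB)^y = (wC)^z; that is, (wA)^r + wB ≠ wC for all r ≥ 3. -/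
open Polynomial

theorem jesmanowicz_poly_not_r11
    {K : Type*} [Field K] [CharZero K]
    (f g w : K[X])
    (hf : 0 < f.natDegree) (hg : 0 < g.natDegree)
    (hfg : IsCoprime f g) (hw : w ≠ 0) :
    ∀ r : ℕ, 3 ≤ r →
      (w * (f ^ 2 - g ^ 2)) ^ r + w * (2 * f * g) ≠ w * (f ^ 2 + g ^ 2) := by
  intro r hr h
  obtain ⟨k, rfl⟩ := Nat.exists_eq_add_of_le hr
  have hne : f - g ≠ 0 := by
    intro h0
    have h1 : f = g := sub_eq_zero.mp h0
    subst h1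
    have hu : IsUnit f := isCoprime_self.mp hfg
    have := natDegree_eq_zero_of_isUnit hu
    omega
  have key : (w * (f - g) ^ 2) *
      (w ^ (k + 2) * (f - g) ^ (k + 1) * (f + g) ^ (k + 3)) = (w * (f - g) ^ 2) * 1 := by
    have e : (w * (f ^ 2 - g ^ 2)) ^ (3 + k) = w * (f - g) ^ 2 := by
      linear_combination h
    rw [mul_one]
    refine Eq.trans ?_ e
    rw [show f ^ 2 - g ^ 2 = (f - g) * (f + g) by ring, mul_pow, mul_pow]
    ring
  have h1 := mul_left_cancel₀ (mul_ne_zero hw (pow_ne_zero 2 hne)) key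
  have u1 : IsUnit (f - g) := by
    refine IsUnit.of_mul_eq_one (w ^ (k + 2) * (f - g) ^ k * (f + g) ^ (k + 3)) ?_
    rw [← h1]; ring
  have u2 : IsUnit (f + g) := by
    refine IsUnit.of_mul_eq_one (w ^ (k + 2) * (f - g) ^ (k + 1) * (f + g) ^ (k + 2)) ?_
    rw [← h1]; ring
  have d1 := natDegree_eq_zero_of_isUnit u1
  have d2 := natDegree_eq_zero_of_isUnit u2
  have d3 := natDegree_add_le (f - g) (f + g)
  have e2 : (f - g) + (f + g) = C (2 : K) * f := by
    rw [show (C (2 : K)) = 2 from rfl]; ring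
  rw [e2, natDegree_C_mul two_ne_zero, d1, d2] at d3
  simp at d3
  omega
end

section
/- Let K be a field of characteristic 0, let f and g be nonconstant, relatively prime polynomials in K[t], set A = f² − g², B = 2fg, C = f² + g², and let w ∈ K[t] be a nonzero polynomial. Then (x, y, z) = (2, 1, 1) is a solution of (wA)^x + (wB)^y = (wC)^z, i.e. (wA)² + wB = wC, if and only if w is a constant polynomial and w·(f + g)² = 1 (equivalently, f + g = ±1/√w). -/
open Polynomial

theorem jesmanowicz_poly_211_iff
    {K : Type*} [Field K] [CharZero K]
    (f g w : K[X])
    (hf : 0 < f.natDegree) (hg : 0 < g.natDegree)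
    (hfg : IsCoprime f g) (hw : w ≠ 0) :
    (w * (f ^ 2 - g ^ 2)) ^ 2 + w * (2 * f * g) = w * (f ^ 2 + g ^ 2) ↔
      (w.natDegree = 0 ∧ w * (f + g) ^ 2 = 1) := by
  constructor
  · intro h
    have hne : f - g ≠ 0 := by
      intro h0
      have h1 : f = g := sub_eq_zero.mp h0
      subst h1
      have hu : IsUnit f := isCoprime_self.mp hfg
      have := natDegree_eq_zero_of_isUnit hu
      omega
    have key : w * (f + g) ^ 2 = 1 := by
      have hz : w * (f - g) ^ 2 ≠ 0 := mul_ne_zero hw (pow_ne_zero 2 hne)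
      apply mul_left_cancel₀ hz
      linear_combination h
    exact ⟨natDegree_eq_zero_of_isUnit (IsUnit.of_mul_eq_one _ key), key⟩
  · rintro ⟨-, h⟩
    linear_combination (w * (f - g) ^ 2) * h
end

section
/- Let K be an algebraically closed field of characteristic 0, let f and g be nonconstant, relatively prime polynomials in K[t], set A = f² − g², B = 2fg, C = f² + g², and let w ∈ K[t] be a nonzero polynomial. Then for every positive integer r, the triple (x, y, z) = (1, 1, r) is not a solution of (wA)^x + (wB)^y = (wC)^z; that is, wA + wB ≠ (wC)^r for all r ≥ 1. -/
open Polynomial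

theorem jesmanowicz_poly_not_11r
    {K : Type*} [Field K] [CharZero K] [IsAlgClosed K]
    (f g w : K[X])
    (hf : 0 < f.natDegree) (hg : 0 < g.natDegree)
    (hfg : IsCoprime f g) (hw : w ≠ 0) :
    ∀ r : ℕ, 1 ≤ r →
      w * (f ^ 2 - g ^ 2) + w * (2 * f * g) ≠ (w * (f ^ 2 + g ^ 2)) ^ r := by
  intro r hr h
  obtain ⟨s, rfl⟩ : ∃ s, r = s + 1 := ⟨r - 1, by omega⟩
  have h2 : IsUnit (2 : K[X]) := by
    have : (2 : K[X]) = C 2 := (map_ofNat C 2).symm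
    rw [this]
    exact isUnit_C.mpr (IsUnit.mk0 _ two_ne_zero)
  have hdvd : (f ^ 2 + g ^ 2) ∣ (f ^ 2 - g ^ 2) + 2 * f * g := by
    refine ⟨(w * (f ^ 2 + g ^ 2)) ^ s, ?_⟩
    apply mul_left_cancel₀ hw
    rw [mul_add, h, pow_succ]
    ring
  have cf : IsCoprime (f ^ 2 + g ^ 2) f := by
    have h1 : IsCoprime (g ^ 2) f := (hfg.symm).pow_left
    have := h1.add_mul_left_left f
    rwa [show g ^ 2 + f * f = f ^ 2 + g ^ 2 by ring] at this
  have cg : IsCoprime (f ^ 2 + g ^ 2) g := by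
    have h1 : IsCoprime (f ^ 2) g := hfg.pow_left
    have := h1.add_mul_left_left g
    rwa [show f ^ 2 + g * g = f ^ 2 + g ^ 2 by ring] at this
  have d1 : (f ^ 2 + g ^ 2) ∣ f + g := by
    have : (f ^ 2 + g ^ 2) ∣ 2 * (f * (f + g)) := by
      have := dvd_add hdvd (dvd_refl (f ^ 2 + g ^ 2))
      convert this using 1
      ring
    exact cf.dvd_of_dvd_mul_left (h2.dvd_mul_left.mp this)
  have d2 : (f ^ 2 + g ^ 2) ∣ g - f := by
    have : (f ^ 2 + g ^ 2) ∣ 2 * (g * (g - f)) := by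
      have := dvd_sub (dvd_refl (f ^ 2 + g ^ 2)) hdvd
      convert this using 1
      ring
    exact cg.dvd_of_dvd_mul_left (h2.dvd_mul_left.mp this)
  have d3 : (f ^ 2 + g ^ 2) ∣ f := by
    have : (f ^ 2 + g ^ 2) ∣ 2 * f := by
      have := dvd_sub d1 d2
      convert this using 1
      ring
    exact h2.dvd_mul_left.mp this
  have hu : IsUnit (f ^ 2 + g ^ 2) := cf.isUnit_of_dvd' dvd_rfl d3
  obtain ⟨i, hi⟩ := IsAlgClosed.exists_pow_nat_eq (-1 : K) (n := 2) (by norm_num)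
  have hi' : (C i : K[X]) ^ 2 = -1 := by rw [← C_pow, hi]; simp
  have hfac : f ^ 2 + g ^ 2 = (f + C i * g) * (f - C i * g) := by
    linear_combination (g ^ 2) * hi'
  rw [hfac, IsUnit.mul_iff] at hu
  obtain ⟨a, -, ha⟩ := isUnit_iff.mp hu.1
  obtain ⟨b, -, hb⟩ := isUnit_iff.mp hu.2
  have h2f : C 2 * f = C (a + b) := by
    rw [C_add, ha, hb, show (C 2 : K[X]) = 2 from map_ofNat C 2]; ring
  have := congrArg natDegree h2f
  rw [natDegree_C_mul two_ne_zero, natDegree_C] at this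
  omega
end

section
/- Let K be an algebraically closed field of characteristic 0, let f and g be nonconstant, relatively prime polynomials in K[t], set A = f² − g², B = 2fg, C = f² + g², and let w be a nonzero constant polynomial. Then the only solutions in positive integers (x, y, z) of (wA)^x + (wB)^y = (wC)^z are (x, y, z) = (2, 2, 2) and (x, y, z) = (2, 1, 1); moreover, (2, 1, 1) is a solution if and only if w·(f + g)² = 1 (equivalently, f = −g ± 1/√w). -/
open Polynomial

namespace JesPoly

variable {K : Type*} [Field K]

lemma mason [CharZero K] (A B D : K[X]) (x y z : ℕ) (hx : 0 < x) (hy : 0 < y) (hz : 0 < z)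
    (hA : A ≠ 0) (hB : B ≠ 0) (hD : D ≠ 0) (hB' : 0 < B.natDegree) (hAB : IsCoprime A B)
    (h : A ^ x + B ^ y = D ^ z) :
    x * A.natDegree + 1 ≤ A.natDegree + B.natDegree + D.natDegree ∧
    y * B.natDegree + 1 ≤ A.natDegree + B.natDegree + D.natDegree ∧
    z * D.natDegree + 1 ≤ A.natDegree + B.natDegree + D.natDegree := by
  classical
  have key := Polynomial.abc (a := A ^ x) (b := B ^ y) (c := -(D ^ z)) (pow_ne_zero _ hA)
    (pow_ne_zero _ hB) (neg_ne_zero.2 (pow_ne_zero _ hD)) (hAB.pow) (by rw [h]; ring)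
  have hrad : (UniqueFactorizationMonoid.radical (A ^ x * B ^ y * -(D ^ z))).natDegree ≤
      A.natDegree + B.natDegree + D.natDegree := by
    have h1 : UniqueFactorizationMonoid.radical (A ^ x * B ^ y * -(D ^ z)) ∣ A * B * D := by
      refine (UniqueFactorizationMonoid.radical_mul_dvd).trans (mul_dvd_mul
        ((UniqueFactorizationMonoid.radical_mul_dvd).trans (mul_dvd_mul ?_ ?_)) ?_)
      · rw [UniqueFactorizationMonoid.radical_pow _ hx.ne']
        exact UniqueFactorizationMonoid.radical_dvd_self
      · rw [UniqueFactorizationMonoid.radical_pow _ hy.ne']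
        exact UniqueFactorizationMonoid.radical_dvd_self
      · rw [UniqueFactorizationDomain.radical_neg,
          UniqueFactorizationMonoid.radical_pow _ hz.ne']
        exact UniqueFactorizationMonoid.radical_dvd_self
    have h2 := natDegree_le_of_dvd h1 (mul_ne_zero (mul_ne_zero hA hB) hD)
    rwa [natDegree_mul (mul_ne_zero hA hB) hD, natDegree_mul hA hB] at h2
  rcases key with ⟨k1, k2, k3⟩ | ⟨_, k2, _⟩
  · rw [natDegree_pow] at k1 k2
    rw [natDegree_neg, natDegree_pow] at k3
    omega
  · have := derivative_eq_zero.1 k2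
    rw [natDegree_pow] at this
    rcases Nat.mul_eq_zero.1 this with h0 | h0 <;> omega

lemma tri (p q r : K[X]) (h : p + q = r) : p.natDegree ≤ max q.natDegree r.natDegree ∧
    q.natDegree ≤ max p.natDegree r.natDegree ∧ r.natDegree ≤ max p.natDegree q.natDegree := by
  refine ⟨?_, ?_, ?_⟩
  · have := natDegree_sub_le r q
    rw [← h, add_sub_cancel_right, h, max_comm] at this
    exact this
  · have := natDegree_sub_le r p
    rw [← h, add_sub_cancel_left, h, max_comm] at this
    exact this
  · rw [← h]; exact natDegree_add_le p q

/-- numerics of the degree-drop case -/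
lemma numer (m d e i j : ℕ) (hd : d < m) (he : 3 ≤ e) (hi : 0 < i) (hj : 0 < j)
    (h2 : i * (2 * m) + 1 ≤ 5 * m + d)
    (h3 : j * (2 * m) + 1 ≤ 5 * m + d)
    (t1 : e * (m + d) ≤ max (i * (2 * m)) (j * (2 * m)))
    (t2 : i * (2 * m) ≤ max (e * (m + d)) (j * (2 * m)))
    (t3 : j * (2 * m) ≤ max (e * (m + d)) (i * (2 * m))) :
    (i = 2 ∧ j = 2) ∨ (((i = 1 ∧ j = 2) ∨ (i = 2 ∧ j = 1)) ∧
      ((e = 3 ∧ m = 3 * d) ∨ (e = 4 ∧ d = 0))) := by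
  have hi2 : i ≤ 2 := by
    by_contra hc
    have : 3 * (2 * m) ≤ i * (2 * m) := Nat.mul_le_mul_right _ (by omega)
    omega
  have hj2 : j ≤ 2 := by
    by_contra hc
    have : 3 * (2 * m) ≤ j * (2 * m) := Nat.mul_le_mul_right _ (by omega)
    omega
  have he3 : 3 * (m + d) ≤ e * (m + d) := Nat.mul_le_mul_right _ he
  have he4 : e ≤ 4 := by
    by_contra hc
    have : 5 * (m + d) ≤ e * (m + d) := Nat.mul_le_mul_right _ (by omega)
    interval_cases i <;> interval_cases j <;> omega
  interval_cases i <;> interval_cases j <;> interval_cases e <;> omega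

lemma dvd_low (v q : K[X]) (h : v ∣ q) (hq : q.natDegree < v.natDegree) : q = 0 := by
  by_contra h0
  have := natDegree_le_of_dvd h h0
  omega

lemma final (u v k : K[X]) (e : ℕ) (a b p q r : K) (huv : IsCoprime u v) (hu : u ≠ 0)
    (hv : 0 < v.natDegree)
    (he : (e = 3 ∧ v.natDegree = 3 * u.natDegree) ∨ (e = 4 ∧ u.natDegree = 0))
    (h : k * (u * v) ^ e = C a * v ^ 2 + C b * u ^ 2 + C p * v ^ 4 + C q * (u ^ 2 * v ^ 2)
      + C r * u ^ 4) (hr : r ≠ 0) (har : a * r ≠ q * b) : False := by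
  have hv0 : v ≠ 0 := by rintro rfl; simp at hv
  have hd : v ∣ u ^ 2 * (C b + C r * u ^ 2) := by
    have h1 : v ∣ k * (u * v) ^ e := by
      apply Dvd.dvd.mul_left
      refine (dvd_mul_left v u).trans (dvd_pow_self _ (by omega))
    rw [h] at h1
    have h2 : v ∣ C a * v ^ 2 + C p * v ^ 4 + C q * (u ^ 2 * v ^ 2) :=
      ⟨C a * v + C p * v ^ 3 + C q * (u ^ 2 * v), by ring⟩
    have h3 := dvd_sub h1 h2
    convert h3 using 1
    ring
  have hd2 : v ∣ C b + C r * u ^ 2 := (huv.symm.pow_right).dvd_of_dvd_mul_left hd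
  have hdeg : (C b + C r * u ^ 2).natDegree ≤ 2 * u.natDegree := by
    refine (natDegree_add_le _ _).trans ?_
    rw [natDegree_C, natDegree_C_mul hr, natDegree_pow]
    omega
  have hz : C b + C r * u ^ 2 = 0 := dvd_low _ _ hd2 (by omega)
  rcases he with ⟨_, h3⟩ | ⟨rfl, h0⟩
  · have h4 : C r * u ^ 2 = C (-b) := by
      rw [C_neg]; linear_combination hz
    have h5 := congrArg natDegree h4
    rw [natDegree_C, natDegree_C_mul hr, natDegree_pow] at h5
    omega
  · obtain ⟨s, rfl⟩ : ∃ s, u = C s := ⟨_, eq_C_of_natDegree_eq_zero h0⟩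
    have h6 : v ^ 2 * (C a + C q * C s ^ 2) = v ^ 2 * (v ^ 2 * (k * C s ^ 4 - C p)) := by
      linear_combination (-1 : K[X]) * h - C s ^ 2 * hz
    have h7 := mul_left_cancel₀ (pow_ne_zero 2 hv0) h6
    have h8 : C a + C q * C s ^ 2 = 0 := by
      apply dvd_low v
      · rw [h7]; exact ⟨v * (k * C s ^ 4 - C p), by ring⟩
      · have : C a + C q * C s ^ 2 = C (a + q * s ^ 2) := by simp
        rw [this, natDegree_C]; exact hv
    have e1 : b + r * s ^ 2 = 0 := by
      apply C_injective; simpa using hz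
    have e2 : a + q * s ^ 2 = 0 := by
      apply C_injective; simpa using h8
    apply har
    linear_combination r * e2 - q * e1

section lines
variable (f g : K[X]) (s t : K)

lemma line_ne (hfg : IsCoprime f g) (hg : 0 < g.natDegree) : f + C s * g ≠ 0 := by
  intro h
  have h1 : g ∣ f := ⟨-C s, by linear_combination h⟩
  have := natDegree_eq_zero_of_isUnit (hfg.isUnit_of_dvd' h1 dvd_rfl)
  omega

lemma line_le (hs : s ≠ 0) : (f + C s * g).natDegree ≤ max f.natDegree g.natDegree := by
  have := natDegree_add_le f (C s * g)
  rwa [natDegree_C_mul hs] at this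

lemma line_eq (hs : s ≠ 0) (hfg : f.natDegree ≠ g.natDegree) :
    (f + C s * g).natDegree = max f.natDegree g.natDegree := by
  have := tri f (C s * g) _ rfl
  rw [natDegree_C_mul hs] at this
  omega

lemma line_max (hs : s ≠ 0) (ht : t ≠ 0) (hst : s ≠ t) :
    f.natDegree ≤ max (f + C s * g).natDegree (f + C t * g).natDegree := by
  have h : C t * (f + C s * g) + C (-s) * (f + C t * g) = C (t - s) * f := by
    simp only [C_neg, C_sub]; ring
  have := (tri _ _ _ h).2.2
  rwa [natDegree_C_mul ht, natDegree_C_mul (neg_ne_zero.2 hs),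
    natDegree_C_mul (sub_ne_zero.2 hst.symm)] at this

lemma line_coprime (hst : s ≠ t) (hfg : IsCoprime f g) :
    IsCoprime (f + C s * g) (f + C t * g) := by
  obtain ⟨a, b, hab⟩ := hfg
  have hk : C (t - s) * C (t - s)⁻¹ = (1 : K[X]) := by
    rw [← C_mul, mul_inv_cancel₀ (sub_ne_zero.2 hst.symm), C_1]
  rw [C_sub] at hk
  refine ⟨C (t - s)⁻¹ * (a * C t - b), C (t - s)⁻¹ * (b - a * C s), ?_⟩
  linear_combination hk * (a * f + b * g) + hab

end lines

lemma small [CharZero K] (f g w : K[X])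
    (hf : 0 < f.natDegree) (hg : 0 < g.natDegree)
    (hw : w ≠ 0)
    (hA : 0 < (w * (f ^ 2 - g ^ 2)).natDegree)
    (hB : 0 < (w * (2 * f * g)).natDegree)
    (hC : 0 < (w * (f ^ 2 + g ^ 2)).natDegree)
    (hmg : f - g ≠ 0)
    (hAB : IsCoprime (w * (f ^ 2 - g ^ 2)) (w * (2 * f * g)))
    (x y z : ℕ) (hx : 0 < x) (hy : 0 < y) (hz : 0 < z) (hx2 : x ≤ 2) (hy2 : y ≤ 2) (hz2 : z ≤ 2)
    (h : (w * (f ^ 2 - g ^ 2)) ^ x + (w * (2 * f * g)) ^ y = (w * (f ^ 2 + g ^ 2)) ^ z) :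
        ((x = 2 ∧ y = 2 ∧ z = 2) ∨
          (x = 2 ∧ y = 1 ∧ z = 1 ∧ w * (f + g) ^ 2 = 1)) := by
  have hg0 : g ≠ 0 := by rintro rfl; simp at hg
  have idem : ∀ p : K[X], 0 < p.natDegree → p ^ 2 = p → False := by
    intro p hp h
    have := congrArg natDegree h
    rw [natDegree_pow] at this
    omega
  have pyth : (w * (f ^ 2 - g ^ 2)) ^ 2 + (w * (2 * f * g)) ^ 2 = (w * (f ^ 2 + g ^ 2)) ^ 2 := by
    ring
  interval_cases x <;> interval_cases y <;> interval_cases z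
  · exfalso
    have h1 : (2 * w * g) * (f - g) = 0 := by linear_combination h
    simp [hw, hg0, hmg] at h1
  · exfalso
    generalize w * (f ^ 2 - g ^ 2) = p at *
    generalize w * (2 * f * g) = q at *
    generalize w * (f ^ 2 + g ^ 2) = r at *
    have h1 : r ∣ p ^ 2 * 2 :=
      ⟨r + r * (p - q), by linear_combination pyth + (p - q) * h⟩
    have h2 : r ∣ p ^ 2 := by
      have hu : IsUnit (2 : K[X]) := by
        rw [← map_ofNat C 2]; exact isUnit_C.2 (isUnit_iff_ne_zero.2 two_ne_zero)
      exact (hu.dvd_mul_right).1 h1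
    have h3 : IsCoprime (p ^ 2) (r ^ 2) := by
      rw [← pyth]
      have : IsCoprime (p ^ 2) (q ^ 2) := hAB.pow
      simpa [add_comm] using this.add_mul_left_right 1
    have h4 : IsCoprime (p ^ 2) r := h3.of_isCoprime_of_dvd_right (dvd_pow_self _ two_ne_zero)
    have := natDegree_eq_zero_of_isUnit (h4.isUnit_of_dvd' h2 dvd_rfl)
    omega
  · exfalso
    have h1 : (2 * w * g ^ 2) * (2 * w * f ^ 2 - 1) = 0 := by linear_combination h
    have h2 : 2 * w * f ^ 2 - 1 = 0 := by
      rcases mul_eq_zero.1 h1 with h | h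
      · simp [hw, hg0] at h
      · exact h
    have h3 : IsUnit f := IsUnit.of_mul_eq_one (2 * w * f) (by linear_combination h2)
    have := natDegree_eq_zero_of_isUnit h3
    omega
  · exact (idem _ hA (by linear_combination pyth - h)).elim
  · right
    refine ⟨rfl, rfl, rfl, ?_⟩
    have h1 : (w * (f - g) ^ 2) * (w * (f + g) ^ 2) = (w * (f - g) ^ 2) * 1 := by
      linear_combination h
    exact mul_left_cancel₀ (mul_ne_zero hw (pow_ne_zero 2 hmg)) h1
  · exact (idem _ hB (by linear_combination pyth - h)).elim
  · exact (idem _ hC (by linear_combination h - pyth)).elim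
  · left; simp

lemma pow_contra (p : K[X]) (e : ℕ) (hp : 0 < p.natDegree) (he : 3 ≤ e) (h : p ^ e = p ^ 2) :
    False := by
  have h1 := congrArg natDegree h
  rw [natDegree_pow, natDegree_pow] at h1
  have := Nat.eq_of_mul_eq_mul_right hp h1
  omega

lemma dropB [CharZero K] (u v A B D : K[X]) (c s : K) (hc : c ≠ 0) (hs : s ^ 2 = 1)
    (huv : IsCoprime u v) (hu : u ≠ 0) (hv : 0 < v.natDegree)
    (hA : A = C s * (v ^ 2 - u ^ 2)) (hB : B = 2 * (u * v)) (hD : D = v ^ 2 + u ^ 2)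
    (hB0 : 0 < (C c * B).natDegree)
    (x y z : ℕ) (hy : 3 ≤ y) (h : (C c * A) ^ x + (C c * B) ^ y = (C c * D) ^ z)
    (hn : (x = 2 ∧ z = 2) ∨ (((x = 1 ∧ z = 2) ∨ (x = 2 ∧ z = 1)) ∧
      ((y = 3 ∧ v.natDegree = 3 * u.natDegree) ∨ (y = 4 ∧ u.natDegree = 0)))) : False := by
  have hs0 : s ≠ 0 := by rintro rfl; simp at hs
  have hS : (C s : K[X]) ^ 2 = 1 := by rw [← C_pow, hs, C_1]
  rcases hn with ⟨rfl, rfl⟩ | ⟨⟨rfl, rfl⟩ | ⟨rfl, rfl⟩, he⟩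
  · refine pow_contra _ _ hB0 hy ?_
    rw [hA, hD] at h
    rw [eq_sub_of_add_eq' h, hB]
    linear_combination (-(C c) ^ 2 * (v ^ 2 - u ^ 2) ^ 2) * hS
  · refine final u v ((C c * 2) ^ y) y (-(c * s)) (c * s) (c ^ 2) (2 * c ^ 2) (c ^ 2) huv hu hv he
      ?_ (by positivity) ?_
    · rw [← mul_pow]
      have : C c * 2 * (u * v) = C c * B := by rw [hB]; ring
      rw [this, eq_sub_of_add_eq' h, hA, hD]
      simp only [C_neg, C_mul, C_pow, map_ofNat]
      ring
    · intro h0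
      have : 3 * c ^ 3 * s = 0 := by linear_combination -h0
      simp [hc, hs0] at this
  · refine final u v ((C c * 2) ^ y) y c c (-c ^ 2) (2 * c ^ 2) (-c ^ 2) huv hu hv he
      ?_ (by simp [hc]) ?_
    · rw [← mul_pow]
      have : C c * 2 * (u * v) = C c * B := by rw [hB]; ring
      rw [this, eq_sub_of_add_eq' h, hA, hD]
      simp only [C_neg, C_mul, C_pow, map_ofNat]
      linear_combination (-(C c) ^ 2 * (v ^ 2 - u ^ 2) ^ 2) * hS
    · intro h0
      have : 3 * c ^ 3 = 0 := by linear_combination -h0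
      simp [hc] at this

lemma dropA [CharZero K] (u v A B D : K[X]) (c s : K) (hc : c ≠ 0) (hs : s ^ 2 = 1)
    (huv : IsCoprime u v) (hu : u ≠ 0) (hv : 0 < v.natDegree)
    (hA : A = u * v) (hB : 2 * B = C s * (v ^ 2 - u ^ 2)) (hD : 2 * D = v ^ 2 + u ^ 2)
    (hpyth : A ^ 2 + B ^ 2 = D ^ 2)
    (hA0 : 0 < (C c * A).natDegree)
    (x y z : ℕ) (hx : 3 ≤ x) (h : (C c * A) ^ x + (C c * B) ^ y = (C c * D) ^ z)
    (hn : (y = 2 ∧ z = 2) ∨ (((y = 1 ∧ z = 2) ∨ (y = 2 ∧ z = 1)) ∧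
      ((x = 3 ∧ v.natDegree = 3 * u.natDegree) ∨ (x = 4 ∧ u.natDegree = 0)))) : False := by
  have hs0 : s ≠ 0 := by rintro rfl; simp at hs
  have hS : (C s : K[X]) ^ 2 = 1 := by rw [← C_pow, hs, C_1]
  have hD2 : 4 * D ^ 2 = (v ^ 2 + u ^ 2) ^ 2 := by rw [← hD]; ring
  have hB2 : 4 * B ^ 2 = (v ^ 2 - u ^ 2) ^ 2 := by
    linear_combination (2 * B + C s * (v ^ 2 - u ^ 2)) * hB + (v ^ 2 - u ^ 2) ^ 2 * hS
  rcases hn with ⟨rfl, rfl⟩ | ⟨⟨rfl, rfl⟩ | ⟨rfl, rfl⟩, he⟩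
  · refine pow_contra _ _ hA0 hx ?_
    linear_combination h - C c ^ 2 * hpyth
  · refine final u v (4 * (C c) ^ x) x (-(2 * c * s)) (2 * c * s) (c ^ 2) (2 * c ^ 2) (c ^ 2)
      huv hu hv he ?_ (by positivity) ?_
    · rw [mul_assoc, ← mul_pow, ← hA, eq_sub_of_add_eq h]
      simp only [C_neg, C_mul, C_pow, map_ofNat]
      linear_combination C c ^ 2 * hD2 - 2 * C c * hB
    · intro h0
      have : 3 * c ^ 3 * s = 0 := by linear_combination -h0 / 2
      simp [hc, hs0] at this
  · refine final u v (4 * (C c) ^ x) x (2 * c) (2 * c) (-c ^ 2) (2 * c ^ 2) (-c ^ 2)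
      huv hu hv he ?_ (by simp [hc]) ?_
    · rw [mul_assoc, ← mul_pow, ← hA, eq_sub_of_add_eq h]
      simp only [C_neg, C_mul, C_pow, map_ofNat]
      linear_combination 2 * C c * hD - C c ^ 2 * hB2
    · intro h0
      have : 3 * c ^ 3 = 0 := by linear_combination -h0 / 2
      simp [hc] at this

lemma dropC [CharZero K] (u v A B D : K[X]) (c s : K) (hc : c ≠ 0) (hs : s ^ 2 = -1)
    (huv : IsCoprime u v) (hu : u ≠ 0) (hv : 0 < v.natDegree)
    (hD : D = u * v) (hB : 2 * B = C s * (u ^ 2 - v ^ 2)) (hA : 2 * A = v ^ 2 + u ^ 2)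
    (hpyth : A ^ 2 + B ^ 2 = D ^ 2)
    (hD0 : 0 < (C c * D).natDegree)
    (x y z : ℕ) (hz : 3 ≤ z) (h : (C c * A) ^ x + (C c * B) ^ y = (C c * D) ^ z)
    (hn : (x = 2 ∧ y = 2) ∨ (((x = 1 ∧ y = 2) ∨ (x = 2 ∧ y = 1)) ∧
      ((z = 3 ∧ v.natDegree = 3 * u.natDegree) ∨ (z = 4 ∧ u.natDegree = 0)))) : False := by
  have hs0 : s ≠ 0 := by rintro rfl; simp at hs
  have hS : (C s : K[X]) ^ 2 = -1 := by rw [← C_pow, hs, C_neg, C_1]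
  have hA2 : 4 * A ^ 2 = (v ^ 2 + u ^ 2) ^ 2 := by rw [← hA]; ring
  have hB2 : 4 * B ^ 2 = -(v ^ 2 - u ^ 2) ^ 2 := by
    linear_combination (2 * B + C s * (u ^ 2 - v ^ 2)) * hB + (v ^ 2 - u ^ 2) ^ 2 * hS
  rcases hn with ⟨rfl, rfl⟩ | ⟨⟨rfl, rfl⟩ | ⟨rfl, rfl⟩, he⟩
  · refine pow_contra _ _ hD0 hz ?_
    linear_combination C c ^ 2 * hpyth - h
  · refine final u v (4 * (C c) ^ z) z (2 * c) (2 * c) (-c ^ 2) (2 * c ^ 2) (-c ^ 2)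
      huv hu hv he ?_ (by simp [hc]) ?_
    · rw [mul_assoc, ← mul_pow, ← hD, ← h]
      simp only [C_neg, C_mul, C_pow, map_ofNat]
      linear_combination 2 * C c * hA + C c ^ 2 * hB2
    · intro h0
      have : 3 * c ^ 3 = 0 := by linear_combination -h0 / 2
      simp [hc] at this
  · refine final u v (4 * (C c) ^ z) z (-(2 * c * s)) (2 * c * s) (c ^ 2) (2 * c ^ 2) (c ^ 2)
      huv hu hv he ?_ (by positivity) ?_
    · rw [mul_assoc, ← mul_pow, ← hD, ← h]
      simp only [C_neg, C_mul, C_pow, map_ofNat]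
      linear_combination C c ^ 2 * hA2 + 2 * C c * hB
    · intro h0
      have : 3 * c ^ 3 * s = 0 := by linear_combination -h0 / 2
      simp [hc, hs0] at this

lemma le_two (n m T : ℕ) (h : n * (2 * m) + 1 ≤ T) (hT : T ≤ 6 * m) : n ≤ 2 := by
  by_contra hc
  have : 3 * (2 * m) ≤ n * (2 * m) := Nat.mul_le_mul_right _ (by omega)
  omega

end JesPoly

set_option maxHeartbeats 4000000 in
open JesPoly in
theorem jesmanowicz_poly_primitive_case
    {K : Type*} [Field K] [CharZero K] [IsAlgClosed K]
    (f g w : K[X])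
    (hf : 0 < f.natDegree) (hg : 0 < g.natDegree)
    (hfg : IsCoprime f g) (hw : w ≠ 0) (hwc : w.natDegree = 0) :
    ∀ x y z : ℕ, 0 < x → 0 < y → 0 < z →
      ((w * (f ^ 2 - g ^ 2)) ^ x + (w * (2 * f * g)) ^ y = (w * (f ^ 2 + g ^ 2)) ^ z ↔
        ((x = 2 ∧ y = 2 ∧ z = 2) ∨
          (x = 2 ∧ y = 1 ∧ z = 1 ∧ w * (f + g) ^ 2 = 1))) := by
  intro x y z hx hy hz
  constructor
  swap
  · rintro (⟨rfl, rfl, rfl⟩ | ⟨rfl, rfl, rfl, h⟩)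
    · ring
    · linear_combination (w * (f - g) ^ 2) * h
  intro h
  obtain ⟨c, rfl⟩ : ∃ c, w = C c := ⟨_, eq_C_of_natDegree_eq_zero hwc⟩
  have hc : c ≠ 0 := by rintro rfl; simp at hw
  obtain ⟨i, hi⟩ := IsAlgClosed.exists_pow_nat_eq (-1 : K) (n := 2) (by norm_num)
  have hi0 : i ≠ 0 := by rintro rfl; simp at hi
  have hI : (C i : K[X]) ^ 2 = -1 := by rw [← C_pow, hi, C_neg, C_1]
  have hf0 : f ≠ 0 := by rintro rfl; simp at hf
  have hg0 : g ≠ 0 := by rintro rfl; simp at hg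
  have h11 : (1 : K) ≠ -1 := by
    intro h; have : (2 : K) = 0 := by linear_combination h
    simp at this
  have h1i : (1 : K) ≠ i := by
    rintro rfl; apply h11; linear_combination hi
  have h1ni : (1 : K) ≠ -i := by
    intro h; apply h11; rw [← hi]; linear_combination (1 - i) * h
  have hn1i : (-1 : K) ≠ i := by
    intro h; apply h1ni; linear_combination -h
  have hn1ni : (-1 : K) ≠ -i := by
    intro h; apply h1i; linear_combination -h
  have hini : i ≠ -i := by
    intro h; have : 2 * i = 0 := by linear_combination h
    simp [hi0] at this
  have hm1 : (-1 : K) ≠ 0 := by simp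
  have hni0 : -i ≠ 0 := neg_ne_zero.2 hi0
  have two_ne : (2 : K[X]) ≠ 0 := two_ne_zero
  set A := f ^ 2 - g ^ 2 with hA
  set B := 2 * f * g with hB
  set D := f ^ 2 + g ^ 2 with hD
  have hpyth : A ^ 2 + B ^ 2 = D ^ 2 := by rw [hA, hB, hD]; ring
  have hApm : A = (f + C 1 * g) * (f + C (-1) * g) := by
    rw [hA]; simp only [C_neg, C_1]; ring
  have hDuv : D = (f + C i * g) * (f + C (-i) * g) := by
    rw [hD]; simp only [C_neg]; linear_combination (g ^ 2) * hI
  have nP := line_ne f g 1 hfg hg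
  have nM := line_ne f g (-1) hfg hg
  have nU := line_ne f g i hfg hg
  have nV := line_ne f g (-i) hfg hg
  have A0 : A ≠ 0 := by rw [hApm]; exact mul_ne_zero nP nM
  have D0 : D ≠ 0 := by rw [hDuv]; exact mul_ne_zero nU nV
  have B0 : B ≠ 0 := by rw [hB]; exact mul_ne_zero (mul_ne_zero two_ne hf0) hg0
  have dA : (C c * A).natDegree = (f + C 1 * g).natDegree + (f + C (-1) * g).natDegree := by
    rw [natDegree_C_mul hc, hApm, natDegree_mul nP nM]
  have dD : (C c * D).natDegree = (f + C i * g).natDegree + (f + C (-i) * g).natDegree := by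
    rw [natDegree_C_mul hc, hDuv, natDegree_mul nU nV]
  have dB : (C c * B).natDegree = f.natDegree + g.natDegree := by
    rw [natDegree_C_mul hc, hB, ← map_ofNat C 2, mul_assoc, natDegree_C_mul two_ne_zero,
      natDegree_mul hf0 hg0]
  have lP := line_le f g 1 one_ne_zero
  have lM := line_le f g (-1) hm1
  have lU := line_le f g i hi0
  have lV := line_le f g (-i) hni0
  have mPM := line_max f g 1 (-1) one_ne_zero hm1 h11
  have mUV := line_max f g i (-i) hi0 hni0 hini
  have mPU := line_max f g 1 i one_ne_zero hi0 h1i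
  have mPV := line_max f g 1 (-i) one_ne_zero hni0 h1ni
  have mMU := line_max f g (-1) i hm1 hi0 hn1i
  have mMV := line_max f g (-1) (-i) hm1 hni0 hn1ni
  have eP := line_eq f g 1 one_ne_zero
  have eM := line_eq f g (-1) hm1
  have eU := line_eq f g i hi0
  have eV := line_eq f g (-i) hni0
  have cPM := line_coprime f g 1 (-1) h11 hfg
  have cUV := line_coprime f g i (-i) hini hfg
  have hcu : IsUnit (C c : K[X]) := isUnit_C.2 (isUnit_iff_ne_zero.2 hc)
  have h2u : IsUnit (2 : K[X]) := by
    rw [← map_ofNat C 2]; exact isUnit_C.2 (isUnit_iff_ne_zero.2 two_ne_zero)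
  have hcop : IsCoprime (C c * A) (C c * B) := by
    rw [isCoprime_mul_unit_left hcu, hB, mul_assoc, isCoprime_mul_unit_left_right h2u, hA]
    apply IsCoprime.mul_right
    · have h1 : IsCoprime (-g ^ 2) f := (hfg.symm.pow_left).neg_left
      have h2 := h1.add_mul_left_left f
      have h3 : -g ^ 2 + f * f = f ^ 2 - g ^ 2 := by ring
      rwa [h3] at h2
    · have h1 : IsCoprime (f ^ 2) g := hfg.pow_left
      have h2 := h1.add_mul_left_left (-g)
      have h3 : f ^ 2 + g * -g = f ^ 2 - g ^ 2 := by ring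
      rwa [h3] at h2
  have hAp : 0 < (C c * A).natDegree := by omega
  have hBp : 0 < (C c * B).natDegree := by omega
  have hDp : 0 < (C c * D).natDegree := by omega
  obtain ⟨k1, k2, k3⟩ := mason (C c * A) (C c * B) (C c * D) x y z hx hy hz
    (mul_ne_zero hw A0) (mul_ne_zero hw B0) (mul_ne_zero hw D0) hBp hcop h
  obtain ⟨t1, t2, t3⟩ := tri _ _ _ h
  simp only [natDegree_pow] at t1 t2 t3
  have hmg : f - g ≠ 0 := by
    intro h; apply nM; simp only [C_neg, C_1]; linear_combination h
  suffices hs : x ≤ 2 ∧ y ≤ 2 ∧ z ≤ 2 from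
    small f g (C c) hf hg hw hAp hBp hDp hmg hcop x y z hx hy hz hs.1 hs.2.1 hs.2.2 h
  rw [dA, dB, dD] at k1 k2 k3
  rw [dA, dB] at t3
  rw [dB, dD] at t1
  rw [dA, dD] at t2
  rw [dA] at t1
  rw [dB] at t2
  rw [dD] at t3
  generalize hP' : f + C 1 * g = P at *
  generalize hM' : f + C (-1) * g = M at *
  generalize hU' : f + C i * g = U at *
  generalize hV' : f + C (-i) * g = V at *
  simp only [C_neg, C_1] at hP' hM' hV'
  by_cases hdeg : f.natDegree = g.natDegree
  · obtain ⟨m, hm⟩ : ∃ m, m = f.natDegree := ⟨_, rfl⟩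
    have eqB : f.natDegree + g.natDegree = 2 * m := by omega
    rw [eqB] at k1 k2 k3 t1 t2 t3
    -- A-drop
    have caseA : ∀ (u v : K[X]) (s : K), s ^ 2 = 1 → IsCoprime u v → u ≠ 0 →
        u.natDegree < m → v.natDegree = m → U.natDegree = m → V.natDegree = m →
        P.natDegree + M.natDegree = m + u.natDegree → A = u * v →
        2 * B = C s * (v ^ 2 - u ^ 2) → 2 * D = v ^ 2 + u ^ 2 → x ≤ 2 ∧ y ≤ 2 ∧ z ≤ 2 := by
      intro u v s hs huv hu du dv eU eV ePM a1 a2 a3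
      have eUV : U.natDegree + V.natDegree = 2 * m := by omega
      rw [eUV, ePM] at k1 k2 k3 t1 t2 t3
      have y2 := le_two y m _ k2 (by omega)
      have z2 := le_two z m _ k3 (by omega)
      refine ⟨?_, y2, z2⟩
      by_contra hx3
      have hn := numer m u.natDegree x y z du (by omega) hy hz (by omega) (by omega)
        t1 t2 (by omega)
      rw [← dv] at hn
      exact dropA u v A B D c s hc hs huv hu (by omega) a1 a2 a3 hpyth hAp x y z (by omega) h hn
    have caseC : ∀ (u v : K[X]) (s : K), s ^ 2 = -1 → IsCoprime u v → u ≠ 0 →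
        u.natDegree < m → v.natDegree = m → P.natDegree = m → M.natDegree = m →
        U.natDegree + V.natDegree = m + u.natDegree → D = u * v →
        2 * B = C s * (u ^ 2 - v ^ 2) → 2 * A = v ^ 2 + u ^ 2 → x ≤ 2 ∧ y ≤ 2 ∧ z ≤ 2 := by
      intro u v s hs huv hu du dv eP eM eUV a1 a2 a3
      have ePM : P.natDegree + M.natDegree = 2 * m := by omega
      rw [eUV, ePM] at k1 k2 k3 t1 t2 t3
      have x2 := le_two x m _ k1 (by omega)
      have y2 := le_two y m _ k2 (by omega)
      refine ⟨x2, y2, ?_⟩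
      by_contra hz3
      have hn := numer m u.natDegree z x y du (by omega) hx hy (by omega) (by omega)
        (by omega) (by omega) (by omega)
      rw [← dv] at hn
      exact dropC u v A B D c s hc hs huv hu (by omega) a1 a2 a3 hpyth hDp x y z (by omega) h hn
    by_cases dP : P.natDegree < m
    · refine caseA P M (-1) (by norm_num) cPM nP dP (by omega) (by omega) (by omega) (by omega)
        hApm ?_ ?_
      · rw [hB, ← hP', ← hM']; simp only [C_neg, C_1]; ring
      · rw [hD, ← hP', ← hM']; ring
    by_cases dM : M.natDegree < m
    · refine caseA M P 1 (by norm_num) cPM.symm nM dM (by omega) (by omega) (by omega) (by omega)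
        (by rw [hApm]; ring) ?_ ?_
      · rw [hB, ← hP', ← hM']; simp only [C_1]; ring
      · rw [hD, ← hP', ← hM']; ring
    by_cases dU : U.natDegree < m
    · refine caseC U V (-i) (by rw [neg_sq, hi]) cUV nU dU (by omega) (by omega) (by omega)
        (by omega) hDuv ?_ ?_
      · rw [hB, ← hU', ← hV']; simp only [C_neg]; linear_combination (4 * f * g) * hI
      · rw [hA, ← hU', ← hV']; linear_combination (-2 * g ^ 2) * hI
    by_cases dV : V.natDegree < m
    · refine caseC V U i hi cUV.symm nV dV (by omega) (by omega) (by omega)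
        (by omega) (by rw [hDuv]; ring) ?_ ?_
      · rw [hB, ← hU', ← hV']; linear_combination (4 * f * g) * hI
      · rw [hA, ← hU', ← hV']; linear_combination (-2 * g ^ 2) * hI
    have ePM : P.natDegree + M.natDegree = 2 * m := by omega
    have eUV : U.natDegree + V.natDegree = 2 * m := by omega
    rw [eUV, ePM] at k1 k2 k3
    exact ⟨le_two x m _ k1 (by omega), le_two y m _ k2 (by omega), le_two z m _ k3 (by omega)⟩
  · have eP := eP hdeg
    have eM := eM hdeg
    have eU := eU hdeg
    have eV := eV hdeg
    have caseB : ∀ (u v : K[X]) (s : K), s ^ 2 = 1 → IsCoprime u v → u ≠ 0 →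
        u.natDegree < v.natDegree → f.natDegree + g.natDegree = v.natDegree + u.natDegree →
        max f.natDegree g.natDegree = v.natDegree → A = C s * (v ^ 2 - u ^ 2) →
        B = 2 * (u * v) → D = v ^ 2 + u ^ 2 → x ≤ 2 ∧ y ≤ 2 ∧ z ≤ 2 := by
      intro u v s hs huv hu du efg emax a1 a2 a3
      have ePM : P.natDegree + M.natDegree = 2 * v.natDegree := by omega
      have eUV : U.natDegree + V.natDegree = 2 * v.natDegree := by omega
      rw [eUV, ePM, efg] at k1 k2 k3 t1 t2 t3
      have x2 := le_two x _ _ k1 (by omega)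
      have z2 := le_two z _ _ k3 (by omega)
      refine ⟨x2, ?_, z2⟩
      by_contra hy3
      have hn := numer v.natDegree u.natDegree y x z du (by omega) hx hz (by omega) (by omega)
        (by omega) (by omega) (by omega)
      exact dropB u v A B D c s hc hs huv hu (by omega) a1 a2 a3 hBp x y z (by omega) h hn
    rcases lt_or_gt_of_ne hdeg with hlt | hlt
    · refine caseB f g (-1) (by norm_num) hfg hf0 hlt (by omega) (by omega) ?_ ?_ ?_
      · rw [hA]; simp only [C_neg, C_1]; ring
      · rw [hB]; ring
      · rw [hD]; ring
    · refine caseB g f 1 (by norm_num) hfg.symm hg0 hlt (by omega) (by omega) ?_ ?_ ?_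
      · rw [hA]; simp only [C_1]; ring
      · rw [hB]; ring
      · rw [hD]
end

section
/- Let K be an algebraically closed field of characteristic 0, let f and g be nonconstant, relatively prime polynomials in K[t], set A = f² − g², B = 2fg, C = f² + g², and let w ∈ K[t] be a nonconstant polynomial. Suppose (x, y, z) is a solution in positive integers of (wA)^x + (wB)^y = (wC)^z with x < m, where m = min{y, z}. Then, writing δ(p) for the degree of a polynomial p: x·δ(A) < δ(A) + δ(B) + δ(C) + m·δ(w) − 1, y·δ(B) ≤ δ(A) + δ(B) + δ(C) − 1, and z·δ(C) ≤ δ(A) + δ(B) + δ(C) − 1. -/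
open Polynomial

open UniqueFactorizationMonoid in
theorem aux_abc {K : Type*} [Field K] [CharZero K] (A B C w : K[X]) (x y z : ℕ)
    (hA : A ≠ 0) (hC : C ≠ 0) (hw : 0 < w.natDegree) (hB : 0 < B.natDegree)
    (hAB : IsCoprime A B) (hAC : IsCoprime A C) (hBC : IsCoprime B C)
    (hx : 0 < x) (hlt : x < min y z)
    (heq : (w * A) ^ x + (w * B) ^ y = (w * C) ^ z) :
    x * A.natDegree < A.natDegree + B.natDegree + C.natDegree + (min y z) * w.natDegree - 1 ∧
      y * B.natDegree ≤ A.natDegree + B.natDegree + C.natDegree - 1 ∧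
      z * C.natDegree ≤ A.natDegree + B.natDegree + C.natDegree - 1 := by
  classical
  have hw0 : w ≠ 0 := by rintro rfl; simp at hw
  have hB0 : B ≠ 0 := by rintro rfl; simp at hB
  obtain ⟨m, hm⟩ : ∃ m, m = min y z := ⟨_, rfl⟩
  rw [← hm] at hlt ⊢
  obtain ⟨i, rfl⟩ : ∃ i, y = m + i := ⟨y - m, by omega⟩
  obtain ⟨j, rfl⟩ : ∃ j, z = m + j := ⟨z - m, by omega⟩
  have hij : i = 0 ∨ j = 0 := by omega
  clear hm
  obtain ⟨n, rfl⟩ : ∃ n, m = x + (n + 1) := ⟨m - x - 1, by omega⟩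
  obtain ⟨D, hD⟩ : ∃ D, D = w ^ j * C ^ (x + (n + 1) + j) - w ^ i * B ^ (x + (n + 1) + i) :=
    ⟨_, rfl⟩
  have hAD : A ^ x = D * w ^ (n + 1) := by
    apply mul_left_cancel₀ (pow_ne_zero x hw0)
    rw [hD]
    simp only [mul_pow] at heq
    have e := eq_sub_of_add_eq heq
    rw [e]; ring
  have hAx : A ^ x ≠ 0 := pow_ne_zero x hA
  have hD0 : D ≠ 0 := by rintro h; rw [h, zero_mul] at hAD; exact hAx hAD
  have hwA : w ∣ A ^ x := by
    rw [hAD]; exact (dvd_pow_self w (Nat.succ_ne_zero n)).mul_left D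
  have hwB : IsCoprime w B := (hAB.pow_left (m := x)).of_isCoprime_of_dvd_left hwA
  have hwC : IsCoprime w C := (hAC.pow_left (m := x)).of_isCoprime_of_dvd_left hwA
  have hDA : D ∣ A ^ x := ⟨_, hAD⟩
  have hcop : IsCoprime (w ^ i * B ^ (x + (n + 1) + i)) (w ^ j * C ^ (x + (n + 1) + j)) := by
    apply IsCoprime.mul_left
    · apply IsCoprime.mul_right
      · rcases hij with rfl | rfl
        · simpa using isCoprime_one_left
        · simpa using isCoprime_one_right
      · exact hwC.pow
    · exact IsCoprime.mul_right hwB.symm.pow hBC.pow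
  set b := w ^ i * B ^ (x + (n + 1) + i) with hb
  set c := w ^ j * C ^ (x + (n + 1) + j) with hc
  have hb0 : b ≠ 0 := mul_ne_zero (pow_ne_zero _ hw0) (pow_ne_zero _ hB0)
  have hc0 : c ≠ 0 := mul_ne_zero (pow_ne_zero _ hw0) (pow_ne_zero _ hC)
  have hdb : b.natDegree = i * w.natDegree + (x + (n + 1) + i) * B.natDegree := by
    rw [hb, natDegree_mul (pow_ne_zero _ hw0) (pow_ne_zero _ hB0), natDegree_pow, natDegree_pow]
  have hdc : c.natDegree = j * w.natDegree + (x + (n + 1) + j) * C.natDegree := by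
    rw [hc, natDegree_mul (pow_ne_zero _ hw0) (pow_ne_zero _ hC), natDegree_pow, natDegree_pow]
  have hdD : x * A.natDegree = D.natDegree + (n + 1) * w.natDegree := by
    rw [← natDegree_pow, hAD, natDegree_mul hD0 (pow_ne_zero _ hw0), natDegree_pow]
  have hABC : A * B * C ≠ 0 := mul_ne_zero (mul_ne_zero hA hB0) hC
  have hdvd : b * -c * D ∣ (A * B * C) ^ (x * i + (x * j + (x + ((x + (n + 1) + i) + (x + (n + 1) + j))))) := by
    have h1 : w ∣ (A * B * C) ^ x :=
      hwA.trans (pow_dvd_pow_of_dvd (Dvd.intro _ (mul_assoc A B C).symm) x)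
    have h2 : D ∣ (A * B * C) ^ x :=
      hDA.trans (pow_dvd_pow_of_dvd (Dvd.intro _ (mul_assoc A B C).symm) x)
    have hBd : B ∣ A * B * C := ⟨A * C, by ring⟩
    have hCd : C ∣ A * B * C := ⟨A * B, by ring⟩
    have : b * -c * D = -(w ^ i * (w ^ j * (D * (B ^ (x + (n + 1) + i) * C ^ (x + (n + 1) + j))))) := by
      rw [hb, hc]; ring
    rw [this, neg_dvd]
    simp only [pow_add (A * B * C) (x * i), pow_add (A * B * C) (x * j), 
      pow_add (A * B * C) x (_ + _), pow_add (A * B * C) (x + (n + 1) + i), pow_mul]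
    have key := mul_dvd_mul (pow_dvd_pow_of_dvd h1 i) (mul_dvd_mul (pow_dvd_pow_of_dvd h1 j)
      (mul_dvd_mul h2 (mul_dvd_mul (pow_dvd_pow_of_dvd hBd (x + (n + 1) + i))
        (pow_dvd_pow_of_dvd hCd (x + (n + 1) + j)))))
    convert key using 1
  have hrad : (radical (b * -c * D)).natDegree ≤ A.natDegree + B.natDegree + C.natDegree := by
    have h := radical_dvd_radical hdvd (pow_ne_zero _ hABC)
    rw [radical_pow _ (by omega)] at h
    have h3 := natDegree_le_of_dvd (h.trans radical_dvd_self) hABC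
    rwa [natDegree_mul (mul_ne_zero hA hB0) hC, natDegree_mul hA hB0] at h3
  have hpos : 0 < b.natDegree := by
    rw [hdb]; have : 0 < (x + (n + 1) + i) * B.natDegree := Nat.mul_pos (by omega) hB
    omega
  rcases Polynomial.abc hb0 (neg_ne_zero.mpr hc0) hD0 hcop.neg_right (by rw [hD]; ring) with h | h
  · obtain ⟨h1, h2, h3⟩ := h
    rw [natDegree_neg] at h2
    have h4 : (x + (n + 1)) * w.natDegree = x * w.natDegree + (n + 1) * w.natDegree := by ring
    have h5 : 0 < x * w.natDegree := Nat.mul_pos hx hw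
    refine ⟨?_, ?_, ?_⟩ <;> omega
  · have := Polynomial.derivative_eq_zero.mp h.1
    omega

theorem jesmanowicz_poly_noncoprime_bounds_x
    {K : Type*} [Field K] [CharZero K] [IsAlgClosed K]
    (f g w : K[X])
    (hf : 0 < f.natDegree) (hg : 0 < g.natDegree)
    (hfg : IsCoprime f g) (hw : 0 < w.natDegree)
    (x y z : ℕ) (hx : 0 < x) (hy : 0 < y) (hz : 0 < z)
    (heq : (w * (f ^ 2 - g ^ 2)) ^ x + (w * (2 * f * g)) ^ y = (w * (f ^ 2 + g ^ 2)) ^ z)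
    (hlt : x < min y z) :
    x * (f ^ 2 - g ^ 2).natDegree <
        (f ^ 2 - g ^ 2).natDegree + (2 * f * g).natDegree + (f ^ 2 + g ^ 2).natDegree +
          (min y z) * w.natDegree - 1 ∧
      y * (2 * f * g).natDegree ≤
        (f ^ 2 - g ^ 2).natDegree + (2 * f * g).natDegree + (f ^ 2 + g ^ 2).natDegree - 1 ∧
      z * (f ^ 2 + g ^ 2).natDegree ≤
        (f ^ 2 - g ^ 2).natDegree + (2 * f * g).natDegree + (f ^ 2 + g ^ 2).natDegree - 1 := by
  have hf0 : f ≠ 0 := by rintro rfl; simp at hf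
  have hg0 : g ≠ 0 := by rintro rfl; simp at hg
  have h2C : (2 : K[X]) = C (2 : K) := (map_ofNat C 2).symm
  have h2u : IsUnit (2 : K[X]) := by
    rw [h2C]; exact Polynomial.isUnit_C.mpr (isUnit_iff_ne_zero.mpr two_ne_zero)
  have h2c : ∀ p : K[X], IsCoprime p 2 := fun p => (isCoprime_one_right (x := p)).of_isCoprime_of_dvd_right h2u.dvd
  have hB : 0 < (2 * f * g).natDegree := by
    rw [natDegree_mul (mul_ne_zero two_ne_zero hf0) hg0]; omega
  have hBnu : ¬ IsUnit (2 * f * g) := fun h => by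
    have := natDegree_eq_zero_of_isUnit h; omega
  have hf2 : IsCoprime (g ^ 2) f := hfg.symm.pow_left
  have hg2 : IsCoprime (f ^ 2) g := hfg.pow_left
  have hAB : IsCoprime (f ^ 2 - g ^ 2) (2 * f * g) := by
    refine ((h2c _).mul_right ?_).mul_right ?_
    · have := (hf2.neg_left).add_mul_left_left f
      rwa [show -g ^ 2 + f * f = f ^ 2 - g ^ 2 by ring] at this
    · have := hg2.add_mul_left_left (-g)
      rwa [show f ^ 2 + g * -g = f ^ 2 - g ^ 2 by ring] at this
  have hCB : IsCoprime (f ^ 2 + g ^ 2) (2 * f * g) := by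
    refine ((h2c _).mul_right ?_).mul_right ?_
    · have := hf2.add_mul_left_left f
      rwa [show g ^ 2 + f * f = f ^ 2 + g ^ 2 by ring] at this
    · have := hg2.add_mul_left_left g
      rwa [show f ^ 2 + g * g = f ^ 2 + g ^ 2 by ring] at this
  have hAC : IsCoprime (f ^ 2 - g ^ 2) (f ^ 2 + g ^ 2) := by
    have h1 : IsCoprime (f ^ 2 - g ^ 2) (2 * f * f) :=
      (hAB.of_mul_right_left).mul_right (hAB.of_mul_right_left.of_mul_right_right)
    have := h1.add_mul_left_right (-1)
    rwa [show 2 * f * f + (f ^ 2 - g ^ 2) * -1 = f ^ 2 + g ^ 2 by ring] at this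
  have hA0 : f ^ 2 - g ^ 2 ≠ 0 := fun h => by
    rw [h, isCoprime_zero_left] at hAB; exact hBnu hAB
  have hC0 : f ^ 2 + g ^ 2 ≠ 0 := fun h => by
    rw [h, isCoprime_zero_left] at hCB; exact hBnu hCB
  exact aux_abc _ _ _ w x y z hA0 hC0 hw hB hAB hAC hCB.symm hx hlt heq
end

section
/- Let K be an algebraically closed field of characteristic 0, let f and g be nonconstant, relatively prime polynomials in K[t], set A = f² − g², B = 2fg, C = f² + g², and let w ∈ K[t] be a nonconstant polynomial. Suppose (x, y, z) is a solution in positive integers of (wA)^x + (wB)^y = (wC)^z with y < m, where m = min{x, z}. Then, writing δ(p) for the degree of a polynomial p: x·δ(A) ≤ δ(A) + δ(B) + δ(C) − 1, y·δ(B) < δ(A) + δ(B) + δ(C) + m·δ(w) − 1, and z·δ(C) ≤ δ(A) + δ(B) + δ(C) − 1. -/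
open Polynomial

theorem jes_cop {R : Type*} [CommRing R] {a b c : R} (h : IsCoprime a b) (k : R)
    (hc : c = b + a * k) : IsCoprime a c := by
  rw [hc]
  exact h.add_mul_left_right k

theorem jes_core {K : Type*} [Field K] [CharZero K] (A B C w : K[X])
    (hA : A ≠ 0) (hB : B ≠ 0) (hC : C ≠ 0) (hAB : IsCoprime A B) (hAC : IsCoprime A C)
    (hBC : IsCoprime B C) (hBd : 0 < B.natDegree) (hw : 0 < w.natDegree)
    (y m i j : ℕ) (hy : 0 < y) (hlt : y < m) (hij : i = 0 ∨ j = 0)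
    (heq : (w * A) ^ (m + i) + (w * B) ^ y = (w * C) ^ (m + j)) :
    (m + i) * A.natDegree ≤ A.natDegree + B.natDegree + C.natDegree - 1 ∧
    y * B.natDegree < A.natDegree + B.natDegree + C.natDegree + m * w.natDegree - 1 ∧
    (m + j) * C.natDegree ≤ A.natDegree + B.natDegree + C.natDegree - 1 := by
  classical
  have hw0 : w ≠ 0 := by rintro rfl; simp at hw
  obtain ⟨e, rfl⟩ : ∃ e, m = y + (e + 1) := ⟨m - y - 1, by omega⟩
  obtain ⟨D, hD⟩ : ∃ D, D = w ^ j * C ^ (y + (e + 1) + j) - w ^ i * A ^ (y + (e + 1) + i) :=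
    ⟨_, rfl⟩
  have hBD : B ^ y = w ^ (e + 1) * D := by
    apply mul_left_cancel₀ (pow_ne_zero y hw0)
    rw [hD]
    simp only [mul_pow] at heq
    rw [← eq_sub_iff_add_eq'] at heq
    rw [heq]
    ring
  have hD0 : D ≠ 0 := by
    rintro rfl
    exact pow_ne_zero y hB (by simpa using hBD)
  have hwB : w ∣ B ^ y := by
    rw [hBD, pow_succ]; exact Dvd.intro_left (w ^ e * D) (by ring)
  have hDB : D ∣ B ^ y := by rw [hBD]; exact dvd_mul_left _ _
  have hwA : IsCoprime w A := (hAB.symm.pow_left (m := y)).of_isCoprime_of_dvd_left hwB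
  have hwC : IsCoprime w C := (hBC.pow_left (m := y)).of_isCoprime_of_dvd_left hwB
  set a := w ^ i * A ^ (y + (e + 1) + i) with ha
  set c := w ^ j * C ^ (y + (e + 1) + j) with hc
  have ha0 : a ≠ 0 := mul_ne_zero (pow_ne_zero _ hw0) (pow_ne_zero _ hA)
  have hc0 : c ≠ 0 := mul_ne_zero (pow_ne_zero _ hw0) (pow_ne_zero _ hC)
  have hac : IsCoprime a c := by
    rcases hij with h | h
    · subst h
      rw [ha, hc, pow_zero, one_mul]
      exact IsCoprime.mul_right hwA.symm.pow hAC.pow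
    · subst h
      rw [ha, hc, pow_zero w, one_mul]
      exact IsCoprime.mul_left hwC.pow hAC.pow
  have haD : IsCoprime a D := by
    rw [hD]
    exact jes_cop hac (-1) (by ring)
  have hda : a.natDegree = i * w.natDegree + (y + (e + 1) + i) * A.natDegree := by
    rw [ha, natDegree_mul (pow_ne_zero _ hw0) (pow_ne_zero _ hA), natDegree_pow, natDegree_pow]
  have hdc : c.natDegree = j * w.natDegree + (y + (e + 1) + j) * C.natDegree := by
    rw [hc, natDegree_mul (pow_ne_zero _ hw0) (pow_ne_zero _ hC), natDegree_pow, natDegree_pow]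
  have hdD : y * B.natDegree = (e + 1) * w.natDegree + D.natDegree := by
    rw [← natDegree_pow, hBD, natDegree_mul (pow_ne_zero _ hw0) hD0, natDegree_pow]
  have key : a.natDegree + 1 ≤ A.natDegree + B.natDegree + C.natDegree ∧
      D.natDegree + 1 ≤ A.natDegree + B.natDegree + C.natDegree ∧
      c.natDegree + 1 ≤ A.natDegree + B.natDegree + C.natDegree := by
    rcases Polynomial.abc ha0 hD0 (neg_ne_zero.2 hc0) haD (by rw [hD]; ring) with h | h
    · have hABC : A * B * C ≠ 0 := mul_ne_zero (mul_ne_zero hA hB) hC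
      have hdvd : UniqueFactorizationMonoid.radical (a * D * -c) ∣ A * B * C := by
        have h1 : A ∣ A * B * C := ⟨B * C, by ring⟩
        have h2 : B ∣ A * B * C := ⟨A * C, by ring⟩
        have h3 : C ∣ A * B * C := ⟨A * B, by ring⟩
        have h4 := pow_dvd_pow_of_dvd h2 y
        have h5 : a * D * -c ∣ ((A * B * C) ^ y) ^ i * (A * B * C) ^ (y + (e + 1) + i) *
            (A * B * C) ^ y * (((A * B * C) ^ y) ^ j * (A * B * C) ^ (y + (e + 1) + j)) := by
          refine mul_dvd_mul (mul_dvd_mul (mul_dvd_mul ?_ ?_) (hDB.trans h4))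
            ((neg_dvd).2 (mul_dvd_mul ?_ ?_))
          · exact pow_dvd_pow_of_dvd (hwB.trans h4) _
          · exact pow_dvd_pow_of_dvd h1 _
          · exact pow_dvd_pow_of_dvd (hwB.trans h4) _
          · exact pow_dvd_pow_of_dvd h3 _
        have h6 : ((A * B * C) ^ y) ^ i * (A * B * C) ^ (y + (e + 1) + i) *
            (A * B * C) ^ y * (((A * B * C) ^ y) ^ j * (A * B * C) ^ (y + (e + 1) + j)) =
            (A * B * C) ^ (y * i + (y + (e + 1) + i) + y + (y * j + (y + (e + 1) + j))) := by
          simp only [← pow_mul, ← pow_add]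
        rw [h6] at h5
        have h7 := UniqueFactorizationMonoid.radical_dvd_radical h5 (pow_ne_zero _ hABC)
        rw [UniqueFactorizationMonoid.radical_pow _ (by omega)] at h7
        exact h7.trans UniqueFactorizationMonoid.radical_dvd_self
      have hle := natDegree_le_of_dvd hdvd hABC
      rw [natDegree_mul (mul_ne_zero hA hB) hC, natDegree_mul hA hB] at hle
      rw [natDegree_neg] at h
      omega
    · obtain ⟨h1, h2, h3⟩ := h
      have h1 := derivative_eq_zero.1 h1
      have h2 := derivative_eq_zero.1 h2
      have h3 := derivative_eq_zero.1 h3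
      rw [natDegree_neg] at h3
      omega
  obtain ⟨k1, k2, k3⟩ := key
  have hyw : 0 < y * w.natDegree := Nat.mul_pos hy hw
  have hmw : (y + (e + 1)) * w.natDegree = y * w.natDegree + (e + 1) * w.natDegree := by ring
  refine ⟨?_, ?_, ?_⟩
  · have := Nat.zero_le (i * w.natDegree); omega
  · rw [hmw, hdD]; omega
  · have := Nat.zero_le (j * w.natDegree); omega




theorem jesmanowicz_poly_noncoprime_bounds_y
    {K : Type*} [Field K] [CharZero K] [IsAlgClosed K]
    (f g w : K[X])
    (hf : 0 < f.natDegree) (hg : 0 < g.natDegree)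
    (hfg : IsCoprime f g) (hw : 0 < w.natDegree)
    (x y z : ℕ) (hx : 0 < x) (hy : 0 < y) (hz : 0 < z)
    (heq : (w * (f ^ 2 - g ^ 2)) ^ x + (w * (2 * f * g)) ^ y = (w * (f ^ 2 + g ^ 2)) ^ z)
    (hlt : y < min x z) :
    x * (f ^ 2 - g ^ 2).natDegree ≤
        (f ^ 2 - g ^ 2).natDegree + (2 * f * g).natDegree + (f ^ 2 + g ^ 2).natDegree - 1 ∧
      y * (2 * f * g).natDegree <
        (f ^ 2 - g ^ 2).natDegree + (2 * f * g).natDegree + (f ^ 2 + g ^ 2).natDegree +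
          (min x z) * w.natDegree - 1 ∧
      z * (f ^ 2 + g ^ 2).natDegree ≤
        (f ^ 2 - g ^ 2).natDegree + (2 * f * g).natDegree + (f ^ 2 + g ^ 2).natDegree - 1 := by

  have hf0 : f ≠ 0 := by rintro rfl; simp at hf
  have hg0 : g ≠ 0 := by rintro rfl; simp at hg
  have hu2 : IsUnit (2 : K[X]) := by
    have : (2 : K[X]) = C 2 := (map_ofNat C 2).symm
    rw [this]
    exact isUnit_C.2 (isUnit_iff_ne_zero.2 two_ne_zero)
  have h20 : (2 : K[X]) ≠ 0 := hu2.ne_zero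
  have hB : 2 * f * g ≠ 0 := mul_ne_zero (mul_ne_zero h20 hf0) hg0
  have hBd : 0 < (2 * f * g).natDegree := by
    rw [natDegree_mul (mul_ne_zero h20 hf0) hg0]; omega
  have hfA : IsCoprime f (f ^ 2 - g ^ 2) := by
    exact jes_cop (hfg.pow_right (n := 2)).neg_right f (by ring)
  have hgA : IsCoprime g (f ^ 2 - g ^ 2) := by
    exact jes_cop (hfg.symm.pow_right (n := 2)) (-g) (by ring)
  have hfC : IsCoprime f (f ^ 2 + g ^ 2) := by
    exact jes_cop (hfg.pow_right (n := 2)) f (by ring)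
  have hgC : IsCoprime g (f ^ 2 + g ^ 2) := by
    exact jes_cop (hfg.symm.pow_right (n := 2)) g (by ring)
  have h2 : ∀ p : K[X], IsCoprime 2 p := fun p => by
    obtain ⟨v, hv⟩ := hu2.exists_left_inv
    exact ⟨v, 0, by rw [hv]; ring⟩
  have hBA : IsCoprime (2 * f * g) (f ^ 2 - g ^ 2) := ((h2 _).mul_left hfA).mul_left hgA
  have hBC : IsCoprime (2 * f * g) (f ^ 2 + g ^ 2) := ((h2 _).mul_left hfC).mul_left hgC
  have hnu : ¬ IsUnit f := fun h => by
    have := natDegree_eq_zero_of_isUnit h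
    omega
  have hA0 : f ^ 2 - g ^ 2 ≠ 0 := fun h => by
    rw [h] at hfA; exact hnu (isCoprime_zero_right.1 hfA)
  have hC0 : f ^ 2 + g ^ 2 ≠ 0 := fun h => by
    rw [h] at hfC; exact hnu (isCoprime_zero_right.1 hfC)
  have hAC : IsCoprime (f ^ 2 - g ^ 2) (f ^ 2 + g ^ 2) := by
    have h1 : IsCoprime (f ^ 2 - g ^ 2) (2 * g ^ 2) :=
      (h2 _).symm.mul_right hgA.symm.pow_right
    exact jes_cop h1 1 (by ring)
  obtain ⟨i, hi⟩ : ∃ i, x = min x z + i := ⟨x - min x z, by omega⟩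
  obtain ⟨j, hj⟩ : ∃ j, z = min x z + j := ⟨z - min x z, by omega⟩
  have := jes_core _ _ _ w hA0 hB hC0 hBA.symm hAC hBC hBd hw y (min x z) i j hy hlt
    (by omega) (by rw [← hi, ← hj]; exact heq)
  rw [← hi, ← hj] at this
  exact this
end

section
/- Let K be an algebraically closed field of characteristic 0, let f and g be nonconstant, relatively prime polynomials in K[t], set A = f² − g², B = 2fg, C = f² + g², and let w ∈ K[t] be a nonconstant polynomial. Suppose (x, y, z) is a solution in positive integers of (wA)^x + (wB)^y = (wC)^z with z < m, where m = min{x, y}. Then, writing δ(p) for the degree of a polynomial p: x·δ(A) ≤ δ(A) + δ(B) + δ(C) − 1, y·δ(B) ≤ δ(A) + δ(B) + δ(C) − 1, and z·δ(C) < δ(A) + δ(B) + δ(C) + m·δ(w) − 1. -/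
open Polynomial

theorem jes_aux {K : Type*} [Field K] [CharZero K]
    (A B C w : K[X]) (hB : 0 < B.natDegree) (hAB : IsCoprime A B)
    (hAC : IsCoprime A C) (hBC : IsCoprime B C) (hw : 0 < w.natDegree)
    (x y z m : ℕ) (hx : 0 < x) (hy : 0 < y) (hz : 0 < z)
    (heq : (w * A) ^ x + (w * B) ^ y = (w * C) ^ z)
    (hzm : z < m) (hmx : m ≤ x) (hmy : m ≤ y) (hmm : m = x ∨ m = y) :
    x * A.natDegree ≤ A.natDegree + B.natDegree + C.natDegree - 1 ∧
      y * B.natDegree ≤ A.natDegree + B.natDegree + C.natDegree - 1 ∧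
      z * C.natDegree < A.natDegree + B.natDegree + C.natDegree + m * w.natDegree - 1 := by
  classical
  have hBu : ¬ IsUnit B := fun h => by
    have := natDegree_eq_zero_of_isUnit h; omega
  have hA0 : A ≠ 0 := by rintro rfl; exact hBu (isCoprime_zero_left.mp hAB)
  have hC0 : C ≠ 0 := by rintro rfl; exact hBu (isCoprime_zero_right.mp hBC)
  have hB0 : B ≠ 0 := by rintro rfl; simp at hB
  have hw0 : w ≠ 0 := by rintro rfl; simp at hw
  obtain ⟨i, rfl⟩ := Nat.exists_eq_add_of_le hmx
  obtain ⟨j, rfl⟩ := Nat.exists_eq_add_of_le hmy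
  obtain ⟨k, rfl⟩ := Nat.exists_eq_add_of_lt hzm
  set D := w ^ i * A ^ (z + k + 1 + i) + w ^ j * B ^ (z + k + 1 + j) with hD
  have h1 : w ^ (k + 1) * D = C ^ z := by
    apply mul_left_cancel₀ (pow_ne_zero z hw0)
    rw [← mul_pow, ← heq, hD]
    ring
  have hwC : w ∣ C ^ z := (dvd_pow_self w k.succ_ne_zero).trans (Dvd.intro _ h1)
  have hDC : D ∣ C ^ z := Dvd.intro_left _ h1
  have hD0 : D ≠ 0 := by
    intro h; rw [h, mul_zero] at h1; exact pow_ne_zero z hC0 h1.symm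
  have hwA : IsCoprime A w := (hAC.pow_right (n := z)).of_isCoprime_of_dvd_right hwC
  have hwB : IsCoprime B w := (hBC.pow_right (n := z)).of_isCoprime_of_dvd_right hwC
  have hcop : IsCoprime (w ^ i * A ^ (z + k + 1 + i)) (w ^ j * B ^ (z + k + 1 + j)) := by
    have e1 : IsCoprime (A ^ (z + k + 1 + i)) (w ^ j * B ^ (z + k + 1 + j)) :=
      (hwA.pow).mul_right hAB.pow
    rcases hmm with h | h
    · have : i = 0 := by omega
      subst this
      rw [pow_zero, one_mul]; exact e1
    · have : j = 0 := by omega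
      subst this
      rw [pow_zero, one_mul] at e1 ⊢
      exact (hwB.symm.pow).mul_left e1
  set a := w ^ i * A ^ (z + k + 1 + i) with ha
  set b := w ^ j * B ^ (z + k + 1 + j) with hb
  have ha0 : a ≠ 0 := mul_ne_zero (pow_ne_zero _ hw0) (pow_ne_zero _ hA0)
  have hb0 : b ≠ 0 := mul_ne_zero (pow_ne_zero _ hw0) (pow_ne_zero _ hB0)
  have hda : a.natDegree = i * w.natDegree + (z + k + 1 + i) * A.natDegree := by
    rw [ha, natDegree_mul (pow_ne_zero _ hw0) (pow_ne_zero _ hA0), natDegree_pow, natDegree_pow]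
  have hdb : b.natDegree = j * w.natDegree + (z + k + 1 + j) * B.natDegree := by
    rw [hb, natDegree_mul (pow_ne_zero _ hw0) (pow_ne_zero _ hB0), natDegree_pow, natDegree_pow]
  have hdD : z * C.natDegree = (k + 1) * w.natDegree + D.natDegree := by
    rw [← natDegree_pow, ← h1, natDegree_mul (pow_ne_zero _ hw0) hD0, natDegree_pow]
  have hrad : (UniqueFactorizationMonoid.radical (a * b * -D)).natDegree
      ≤ A.natDegree + B.natDegree + C.natDegree := by
    rw [← natDegree_mul hA0 hB0, ← natDegree_mul (mul_ne_zero hA0 hB0) hC0]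
    apply natDegree_le_of_dvd _ (mul_ne_zero (mul_ne_zero hA0 hB0) hC0)
    rw [← UniqueFactorizationMonoid.exists_dvd_pow_iff_radical_dvd
      (mul_ne_zero (mul_ne_zero ha0 hb0) (neg_ne_zero.mpr hD0))]
    have dA : A ∣ A * B * C := ⟨B * C, by ring⟩
    have dB : B ∣ A * B * C := ⟨A * C, by ring⟩
    have dC : C ∣ A * B * C := ⟨A * B, by ring⟩
    have dCz : C ^ z ∣ (A * B * C) ^ z := pow_dvd_pow_of_dvd dC z
    refine ⟨(z * i + (z + k + 1 + i)) + (z * j + (z + k + 1 + j)) + z, ?_⟩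
    rw [pow_add, pow_add _ (z * i + (z + k + 1 + i)), pow_add _ (z * i), pow_add _ (z * j),
      pow_mul, pow_mul]
    exact mul_dvd_mul (mul_dvd_mul
      (mul_dvd_mul (pow_dvd_pow_of_dvd (hwC.trans dCz) _) (pow_dvd_pow_of_dvd dA _))
      (mul_dvd_mul (pow_dvd_pow_of_dvd (hwC.trans dCz) _) (pow_dvd_pow_of_dvd dB _)))
      ((neg_dvd.mpr hDC).trans dCz)
  have hbpos : 0 < b.natDegree := by rw [hdb]; positivity
  rcases Polynomial.abc ha0 hb0 (neg_ne_zero.mpr hD0) hcop (by rw [hD]; ring) with h | h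
  · obtain ⟨p, q, r⟩ := h
    rw [natDegree_neg] at r
    refine ⟨by omega, by omega, ?_⟩
    have : (z + k + 1) * w.natDegree = z * w.natDegree + (k + 1) * w.natDegree := by ring
    have : 0 < z * w.natDegree := by positivity
    omega
  · have := Polynomial.derivative_eq_zero.mp h.2.1
    omega

theorem jesmanowicz_poly_noncoprime_bounds_z
    {K : Type*} [Field K] [CharZero K] [IsAlgClosed K]
    (f g w : K[X])
    (hf : 0 < f.natDegree) (hg : 0 < g.natDegree)
    (hfg : IsCoprime f g) (hw : 0 < w.natDegree)
    (x y z : ℕ) (hx : 0 < x) (hy : 0 < y) (hz : 0 < z)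
    (heq : (w * (f ^ 2 - g ^ 2)) ^ x + (w * (2 * f * g)) ^ y = (w * (f ^ 2 + g ^ 2)) ^ z)
    (hlt : z < min x y) :
    x * (f ^ 2 - g ^ 2).natDegree ≤
        (f ^ 2 - g ^ 2).natDegree + (2 * f * g).natDegree + (f ^ 2 + g ^ 2).natDegree - 1 ∧
      y * (2 * f * g).natDegree ≤
        (f ^ 2 - g ^ 2).natDegree + (2 * f * g).natDegree + (f ^ 2 + g ^ 2).natDegree - 1 ∧
      z * (f ^ 2 + g ^ 2).natDegree <
        (f ^ 2 - g ^ 2).natDegree + (2 * f * g).natDegree + (f ^ 2 + g ^ 2).natDegree +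
          (min x y) * w.natDegree - 1 := by
  have h2 : (2 : K[X]) = C 2 := (map_ofNat C 2).symm
  have e2 : (C (1 / 2 : K) : K[X]) * 2 = 1 := by
    rw [h2, ← C_mul]; norm_num
  have hu2 : IsUnit (2 : K[X]) := IsUnit.of_mul_eq_one_right _ e2
  have hf2 : IsCoprime (f ^ 2) (g ^ 2) := hfg.pow
  have hf0 : f ≠ 0 := by rintro rfl; simp at hf
  have hg0 : g ≠ 0 := by rintro rfl; simp at hg
  have hAf : IsCoprime (f ^ 2 - g ^ 2) f := by
    have := (hfg.symm.pow_left (m := 2)).neg_left.add_mul_left_left f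
    rwa [show f ^ 2 - g ^ 2 = -g ^ 2 + f * f by ring]
  have hAg : IsCoprime (f ^ 2 - g ^ 2) g := by
    have := (hfg.pow_left (m := 2)).add_mul_left_left (-g)
    rwa [show f ^ 2 - g ^ 2 = f ^ 2 + g * -g by ring]
  have hCf : IsCoprime (f ^ 2 + g ^ 2) f := by
    have := (hfg.symm.pow_left (m := 2)).add_mul_left_left f
    rwa [show f ^ 2 + g ^ 2 = g ^ 2 + f * f by ring]
  have hCg : IsCoprime (f ^ 2 + g ^ 2) g := by
    have := (hfg.pow_left (m := 2)).add_mul_left_left g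
    rwa [show f ^ 2 + g ^ 2 = f ^ 2 + g * g by ring]
  have h2c : ∀ p : K[X], IsCoprime p 2 := fun p => ⟨0, C (1 / 2 : K), by rw [e2]; ring⟩
  have hAB : IsCoprime (f ^ 2 - g ^ 2) (2 * f * g) := ((h2c _).mul_right hAf).mul_right hAg
  have hCB : IsCoprime (f ^ 2 + g ^ 2) (2 * f * g) := ((h2c _).mul_right hCf).mul_right hCg
  have hAC : IsCoprime (f ^ 2 - g ^ 2) (f ^ 2 + g ^ 2) := by
    have := ((h2c (f ^ 2 - g ^ 2)).mul_right (hAg.pow_right (n := 2))).add_mul_left_right 1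
    rwa [← show f ^ 2 + g ^ 2 = 2 * g ^ 2 + (f ^ 2 - g ^ 2) * 1 by ring] at this
  have hB : 0 < (2 * f * g).natDegree := by
    rw [natDegree_mul (mul_ne_zero hu2.ne_zero hf0) hg0]; omega
  exact jes_aux _ _ _ w hB hAB hAC hCB.symm hw x y z (min x y) hx hy hz heq hlt
    (min_le_left _ _) (min_le_right _ _) (by omega)
end

section
/- Let K be an algebraically closed field of characteristic 0 and let f and g be nonconstant, relatively prime polynomials in K[t]. Let A, B ∈ K[t] satisfy either (A, B) = (f² − g², 2fg) or (A, B) = (2fg, f² − g²), and set C = f² + g². Let w ∈ K[t] be a nonzero polynomial. If A is nonconstant of even degree, then wA + (wB)² ≠ (wC)³. -/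
open Polynomial

/-- The affine curve `v - v² = u³ - u²` (conductor 43) has no nonconstant polynomial points. -/
theorem curve_const {K : Type*} [Field K] [CharZero K] (u v : K[X])
    (h : v - v ^ 2 = u ^ 3 - u ^ 2) : v.natDegree = 0 := by
  have hd : (1 - 2 * v) * derivative v = (3 * u ^ 2 - 2 * u) * derivative u := by
    have := congrArg derivative h
    simp only [derivative_sub, derivative_pow, map_natCast] at this
    norm_num at this
    linear_combination this
  have hcop : IsCoprime (1 - 2 * v) (3 * u ^ 2 - 2 * u) := by
    have h1 : (1 - 2 * v) * (9 * (1 - 2 * v) * (43 - 24 * u))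
        + (3 * u ^ 2 - 2 * u) * (64 - (4 - 12 * u) * (43 - 24 * u)) = 387 := by
      linear_combination (-36 * (43 - 24 * u)) * h
    have h2 : (C (1 / 387 : K)) * 387 = 1 := by
      have : (387 : K[X]) = C (387 : K) := (map_ofNat C 387).symm
      rw [this, ← C_mul]; norm_num
    refine ⟨C (1 / 387 : K) * (9 * (1 - 2 * v) * (43 - 24 * u)),
      C (1 / 387 : K) * (64 - (4 - 12 * u) * (43 - 24 * u)), ?_⟩
    linear_combination C (1 / 387 : K) * h1 + h2
  have hdvd : (1 - 2 * v) ∣ derivative u :=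
    hcop.dvd_of_dvd_mul_left ⟨derivative v, hd.symm⟩
  have hy : (1 - 2 * v) ^ 2 = 1 + 4 * u ^ 2 - 4 * u ^ 3 := by
    linear_combination (-4) * h
  have hu : u.natDegree = 0 := by
    by_contra hne
    have hu' : derivative u ≠ 0 := fun h0 => hne (derivative_eq_zero.mp h0)
    have h1 := natDegree_le_of_dvd hdvd hu'
    have h2 := natDegree_derivative_lt hne
    have h3 : C (4 : K) * u ^ 3 = C 1 + C 4 * u ^ 2 - (1 - 2 * v) ^ 2 := by
      have : (C 4 : K[X]) = 4 := map_ofNat C 4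
      rw [this, C_1]
      linear_combination hy
    have h4 : (C (4 : K) * u ^ 3).natDegree = 3 * u.natDegree := by
      rw [natDegree_C_mul (by norm_num), natDegree_pow]
    have h5 : (C 1 + C 4 * u ^ 2 - (1 - 2 * v) ^ 2).natDegree ≤ 2 * u.natDegree := by
      refine (natDegree_sub_le_of_le (natDegree_add_le_of_degree_le (n := 2 * u.natDegree) ?_ ?_) (n := 2 * u.natDegree) ?_).trans (max_self _).le
      · simp
      · rw [natDegree_C_mul (by norm_num), natDegree_pow]
      · rw [natDegree_pow]; omega
    rw [← h3, h4] at h5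
    omega
  obtain ⟨c, rfl⟩ := natDegree_eq_zero.mp hu
  have h6 : v ^ 2 = v - C (c ^ 3 - c ^ 2) := by
    simp only [C_sub, C_pow]; linear_combination -h
  have h7 := congrArg natDegree h6
  rw [natDegree_pow, natDegree_sub_C] at h7
  omega

theorem jesmanowicz_poly_lem_1_2_3
    {K : Type*} [Field K] [CharZero K] [IsAlgClosed K]
    (f g w A B : K[X])
    (hf : 0 < f.natDegree) (hg : 0 < g.natDegree)
    (hfg : IsCoprime f g) (hw : w ≠ 0)
    (hAB : (A = f ^ 2 - g ^ 2 ∧ B = 2 * f * g) ∨ (A = 2 * f * g ∧ B = f ^ 2 - g ^ 2))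
    (hA : 0 < A.natDegree) (hAeven : Even A.natDegree) :
    w * A + (w * B) ^ 2 ≠ (w * (f ^ 2 + g ^ 2)) ^ 3 := by
  intro h
  have hP : A ^ 2 + B ^ 2 = (f ^ 2 + g ^ 2) ^ 2 := by
    rcases hAB with ⟨rfl, rfl⟩ | ⟨rfl, rfl⟩ <;> ring
  have h0 := curve_const (w * (f ^ 2 + g ^ 2)) (w * A)
    (by linear_combination h - w ^ 2 * hP)
  have hA0 : A ≠ 0 := by rintro rfl; simp at hA
  rw [natDegree_mul hw hA0] at h0
  omega
end

section
/- Let K be an algebraically closed field of characteristic 0 and let f and g be nonconstant, relatively prime polynomials in K[t]. Let A, B ∈ K[t] satisfy either (A, B) = (f² − g², 2fg) or (A, B) = (2fg, f² − g²), and set C = f² + g². Let w ∈ K[t] be a nonzero polynomial. If C is nonconstant of even degree, then (wA)² + (wB)³ ≠ wC. -/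
open Polynomial

theorem jes_aux_s14 {K : Type*} [Field K] [CharZero K] (r s w : K[X])
    (hr : r ≠ 0) (hw : w ≠ 0) (hrs : IsCoprime r s)
    (hle : r.natDegree ≤ s.natDegree) (hs : 0 < s.natDegree)
    (h : w * (s ^ 2 - r ^ 2) ^ 2 + 8 * w ^ 2 * r ^ 3 * s ^ 3 = r ^ 2 + s ^ 2) : False := by
  have hs0 : s ≠ 0 := by
    rintro rfl
    simp at hs
  have h8 : (C (8 : K)) ≠ 0 := by
    rw [Ne, C_eq_zero]; norm_num
  have h8' : (8 : K[X]) = C 8 := (map_ofNat C 8).symm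
  have e1 : C 8 * w ^ 2 * r ^ 3 * s ^ 3 = r ^ 2 + s ^ 2 - w * (s ^ 2 - r ^ 2) ^ 2 := by
    rw [← h8', ← h]; ring
  have d1 : (C (8 : K) * w ^ 2 * r ^ 3 * s ^ 3).natDegree
      = 2 * w.natDegree + 3 * r.natDegree + 3 * s.natDegree := by
    rw [natDegree_mul (by positivity) (by positivity), natDegree_mul (by positivity) (by positivity),
      natDegree_mul (by positivity) (by positivity)]
    simp
  have hsq : ∀ p : K[X], (p ^ 2).natDegree = 2 * p.natDegree := fun p => natDegree_pow p 2
  have d2 : (r ^ 2 + s ^ 2 - w * (s ^ 2 - r ^ 2) ^ 2).natDegree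
      ≤ w.natDegree + 4 * s.natDegree := by
    have a1 := natDegree_sub_le (r ^ 2 + s ^ 2) (w * (s ^ 2 - r ^ 2) ^ 2)
    have a2 := natDegree_add_le (r ^ 2) (s ^ 2)
    have a3 := natDegree_sub_le (s ^ 2) (r ^ 2)
    have a4 := natDegree_mul_le (p := w) (q := (s ^ 2 - r ^ 2) ^ 2)
    rw [hsq] at a4
    rw [hsq, hsq] at a2 a3
    omega
  rw [← e1, d1] at d2
  have dv : s ^ 2 ∣ w * r ^ 2 - 1 := by
    have : s ^ 2 ∣ r ^ 2 * (w * r ^ 2 - 1) :=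
      ⟨1 - w * s ^ 2 + 2 * w * r ^ 2 - 8 * w ^ 2 * r ^ 3 * s, by linear_combination h⟩
    exact (hrs.symm.pow (m := 2) (n := 2)).dvd_of_dvd_mul_left this
  have z : w * r ^ 2 - 1 = 0 := by
    apply eq_zero_of_dvd_of_natDegree_lt dv
    have a1 := natDegree_sub_le (w * r ^ 2) 1
    have a4 := natDegree_mul_le (p := w) (q := r ^ 2)
    rw [hsq] at a4
    rw [natDegree_one] at a1
    rw [hsq]
    omega
  have k : s * (w * (s + 8 * r)) = 3 := by
    have : s ^ 2 * (s * (w * (s + 8 * r)) - 3) = 0 := by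
      linear_combination h + (-r ^ 2 + 2 * s ^ 2 - 8 * w * r * s ^ 3) * z
    have := (mul_eq_zero.mp this).resolve_left (by positivity)
    linear_combination this
  have u : IsUnit s := by
    apply isUnit_of_dvd_unit (Dvd.intro _ k)
    have : (3 : K[X]) = C 3 := (map_ofNat C 3).symm
    rw [this, isUnit_C]
    exact isUnit_iff_ne_zero.mpr (by norm_num)
  have := natDegree_eq_zero_of_isUnit u
  omega

theorem jes_aux2 {K : Type*} [Field K] [CharZero K] (r s w : K[X])
    (hr : r ≠ 0) (hs : s ≠ 0) (hw : w ≠ 0) (hrs : IsCoprime r s)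
    (hC : 0 < (r ^ 2 + s ^ 2).natDegree)
    (h : (w * (r ^ 2 - s ^ 2)) ^ 2 + (w * (2 * r * s)) ^ 3 = w * (r ^ 2 + s ^ 2)) : False := by
  have h' : w * (s ^ 2 - r ^ 2) ^ 2 + 8 * w ^ 2 * r ^ 3 * s ^ 3 = r ^ 2 + s ^ 2 := by
    apply mul_left_cancel₀ hw
    linear_combination h
  have a2 := natDegree_add_le (r ^ 2) (s ^ 2)
  rw [natDegree_pow, natDegree_pow] at a2
  rcases le_total r.natDegree s.natDegree with hl | hl
  · exact jes_aux_s14 r s w hr hw hrs hl (by omega) h'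
  · exact jes_aux_s14 s r w hs hw hrs.symm hl (by omega) (by linear_combination h')

theorem jesmanowicz_poly_lem_2_3_1
    {K : Type*} [Field K] [CharZero K] [IsAlgClosed K]
    (f g w A B : K[X])
    (hf : 0 < f.natDegree) (hg : 0 < g.natDegree)
    (hfg : IsCoprime f g) (hw : w ≠ 0)
    (hAB : (A = f ^ 2 - g ^ 2 ∧ B = 2 * f * g) ∨ (A = 2 * f * g ∧ B = f ^ 2 - g ^ 2))
    (hC : 0 < (f ^ 2 + g ^ 2).natDegree) (hCeven : Even (f ^ 2 + g ^ 2).natDegree) :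
    (w * A) ^ 2 + (w * B) ^ 3 ≠ w * (f ^ 2 + g ^ 2) := by
  intro h
  have hf0 : f ≠ 0 := by
    rintro rfl
    simp at hf
  have hg0 : g ≠ 0 := by
    rintro rfl
    simp at hg
  rcases hAB with ⟨rfl, rfl⟩ | ⟨rfl, rfl⟩
  · exact jes_aux2 f g w hf0 hg0 hw hfg hC h
  · obtain ⟨a, ha⟩ := IsAlgClosed.exists_pow_nat_eq (1 / 2 : K) (n := 2) (by norm_num)
    have hc : 2 * (C a) ^ 2 = (1 : K[X]) := by
      rw [← C_pow, ha, show (2 : K[X]) = C 2 from (map_ofNat C 2).symm, ← C_mul]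
      norm_num
    have hnu : ¬ IsUnit g := fun u => by
      have := natDegree_eq_zero_of_isUnit u
      omega
    have hcop : IsCoprime (C a * (f + g)) (C a * (f - g)) := by
      obtain ⟨x, y, hxy⟩ := hfg
      refine ⟨C a * (x + y), C a * (x - y), ?_⟩
      linear_combination hxy * (2 * (C a) ^ 2) + hc
    have hc1 : (C a * (f + g)) ^ 2 + (C a * (f - g)) ^ 2 = f ^ 2 + g ^ 2 := by
      linear_combination (f ^ 2 + g ^ 2) * hc
    have hc2 : (C a * (f + g)) ^ 2 - (C a * (f - g)) ^ 2 = 2 * f * g := by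
      linear_combination (2 * f * g) * hc
    have hc3 : 2 * (C a * (f + g)) * (C a * (f - g)) = f ^ 2 - g ^ 2 := by
      linear_combination (f ^ 2 - g ^ 2) * hc
    have hne : f ^ 2 - g ^ 2 ≠ 0 := by
      intro h0
      apply hnu
      have c2 : IsCoprime g (f ^ 2) := hfg.symm.pow_right
      exact c2.isUnit_of_dvd' dvd_rfl ⟨g, by linear_combination h0⟩
    refine jes_aux2 (C a * (f + g)) (C a * (f - g)) w ?_ ?_ hw hcop (by rwa [hc1])
      (by rw [hc1, hc2, hc3]; exact h)
    · intro h0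
      rw [h0] at hc3
      exact hne (by rw [← hc3]; ring)
    · intro h0
      rw [h0] at hc3
      exact hne (by rw [← hc3]; ring)
end

section
/- Let K be an algebraically closed field of characteristic 0 and let f and g be nonconstant, relatively prime polynomials in K[t]. Let A, B ∈ K[t] satisfy either (A, B) = (f² − g², 2fg) or (A, B) = (2fg, f² − g²), and set C = f² + g². Let w ∈ K[t] be a nonconstant polynomial, and suppose deg A ≤ deg B and deg B = deg C. Then (wA)³ + wB ≠ (wC)². -/
open Polynomial

theorem jes_core_s15 {K : Type*} [Field K] [CharZero K]
    (w A B C P Q s : K[X]) (hw : 0 < w.natDegree)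
    (hA : A ≠ 0) (hB : B ≠ 0) (hC : C ≠ 0) (hcop : IsCoprime A B)
    (hpy : A ^ 2 + B ^ 2 = C ^ 2)
    (hBC : B.natDegree = C.natDegree)
    (h : w ^ 2 * A ^ 3 + B = w * C ^ 2)
    (hPQ : P * Q = A ^ 2) (hs : s = 1 ∨ s = -1) (h2 : 2 * B = s * (P - Q))
    (hP : B.natDegree ≤ P.natDegree) : False := by
  have hw0 : w ≠ 0 := by rintro rfl; simp at hw
  have hss : s * s = 1 := by rcases hs with rfl | rfl <;> ring
  have hPQ0 : P * Q ≠ 0 := by rw [hPQ]; exact pow_ne_zero _ hA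
  have hP0 : P ≠ 0 := left_ne_zero_of_mul hPQ0
  have hQ0 : Q ≠ 0 := right_ne_zero_of_mul hPQ0
  have hd1 : P.natDegree + Q.natDegree = 2 * A.natDegree := by
    rw [← natDegree_mul hP0 hQ0, hPQ, natDegree_pow]
  have hwC : (w * C ^ 2).natDegree = w.natDegree + 2 * B.natDegree := by
    rw [natDegree_mul hw0 (pow_ne_zero _ hC), natDegree_pow, hBC]
  have hwA : (w ^ 2 * A ^ 3).natDegree = 2 * w.natDegree + 3 * A.natDegree := by
    rw [natDegree_mul (pow_ne_zero _ hw0) (pow_ne_zero _ hA), natDegree_pow, natDegree_pow]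
  have hd2 : 2 * w.natDegree + 3 * A.natDegree = w.natDegree + 2 * B.natDegree := by
    rw [← hwA, ← hwC, eq_sub_of_add_eq h]
    apply natDegree_sub_eq_left_of_natDegree_lt
    omega
  have hwB : w ∣ B := ⟨C ^ 2 - w * A ^ 3, by linear_combination h⟩
  have hd3 := natDegree_le_of_dvd hwB hB
  have hPA : P ∣ A ^ 2 := ⟨Q, hPQ.symm⟩
  have hcPB : IsCoprime P B := IsCoprime.of_isCoprime_of_dvd_left (hcop.pow_left (m := 2)) hPA
  have hdvd : P ∣ B * (w * B - 1) := by
    have : B * (w * B - 1) = A ^ 2 * (w ^ 2 * A - w) := by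
      linear_combination w * hpy - h
    rw [this]; exact hPA.mul_right _
  have hdvd2 := hcPB.dvd_of_dvd_mul_left hdvd
  have hdvd3 : P ∣ w * Q + Polynomial.C 2 * s := by
    have : w * Q + Polynomial.C 2 * s = P * w - 2 * s * (w * B - 1) := by
      have : (Polynomial.C 2 : K[X]) = 2 := rfl
      rw [this]
      linear_combination (w * s) * h2 + (w * (P - Q)) * hss
    rw [this]
    exact dvd_sub (dvd_mul_right _ _) (hdvd2.mul_left _)
  have hsd : (Polynomial.C 2 * s : K[X]).natDegree = 0 := by
    rcases hs with rfl | rfl <;> simp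
  have hwQ : (w * Q).natDegree = w.natDegree + Q.natDegree := natDegree_mul hw0 hQ0
  have hd4 : (w * Q + Polynomial.C 2 * s).natDegree = w.natDegree + Q.natDegree := by
    rw [← hwQ]
    apply natDegree_add_eq_left_of_natDegree_lt
    omega
  have hne : w * Q + Polynomial.C 2 * s ≠ 0 := by
    intro h0; rw [h0, natDegree_zero] at hd4; omega
  have hd5 := natDegree_le_of_dvd hdvd3 hne
  omega

theorem jesmanowicz_poly_lem_3_1_2
    {K : Type*} [Field K] [CharZero K] [IsAlgClosed K]
    (f g w A B : K[X])
    (hf : 0 < f.natDegree) (hg : 0 < g.natDegree)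
    (hfg : IsCoprime f g) (hw : 0 < w.natDegree)
    (hAB : (A = f ^ 2 - g ^ 2 ∧ B = 2 * f * g) ∨ (A = 2 * f * g ∧ B = f ^ 2 - g ^ 2))
    (hdAB : A.natDegree ≤ B.natDegree)
    (hdBC : B.natDegree = (f ^ 2 + g ^ 2).natDegree) :
    (w * A) ^ 3 + w * B ≠ (w * (f ^ 2 + g ^ 2)) ^ 2 := by
  intro h
  have hw0 : w ≠ 0 := by rintro rfl; simp at hw
  have hf0 : f ≠ 0 := by rintro rfl; simp at hf
  have hg0 : g ≠ 0 := by rintro rfl; simp at hg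
  have h2u : IsUnit (2 : K[X]) := by
    have : (2 : K[X]) = Polynomial.C 2 := rfl
    rw [this]; exact isUnit_C.mpr (IsUnit.mk0 _ two_ne_zero)
  have hfu : ¬ IsUnit f := fun hu => by
    have := natDegree_eq_zero_of_isUnit hu; omega
  have hnd : ¬ f ∣ g ^ 2 := fun hd => hfu ((hfg.pow_right (n := 2)).isUnit_of_dvd' dvd_rfl hd)
  have hD0 : f ^ 2 - g ^ 2 ≠ 0 := fun h0 => hnd ⟨f, by linear_combination -h0⟩
  have hC0 : f ^ 2 + g ^ 2 ≠ 0 := fun h0 => hnd ⟨-f, by linear_combination h0⟩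
  have hM0 : 2 * f * g ≠ 0 := mul_ne_zero (mul_ne_zero h2u.ne_zero hf0) hg0
  have hcop0 : IsCoprime (f ^ 2 - g ^ 2) (2 * f * g) := by
    have h1 : IsCoprime (f ^ 2 - g ^ 2) f := by
      have := ((hfg.symm.pow_left (m := 2)).neg_left).add_mul_left_left f
      rwa [show f ^ 2 - g ^ 2 = -g ^ 2 + f * f by ring]
    have h2 : IsCoprime (f ^ 2 - g ^ 2) g := by
      have := (hfg.pow_left (m := 2)).add_mul_left_left (-g)
      rwa [show f ^ 2 - g ^ 2 = f ^ 2 + g * (-g) by ring]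
    exact ((show IsCoprime (f ^ 2 - g ^ 2) 2 from (isCoprime_one_right).of_isCoprime_of_dvd_right h2u.dvd).mul_right h1).mul_right h2
  have hA : A ≠ 0 := by rcases hAB with ⟨rfl, rfl⟩ | ⟨rfl, rfl⟩ <;> assumption
  have hB : B ≠ 0 := by rcases hAB with ⟨rfl, rfl⟩ | ⟨rfl, rfl⟩ <;> assumption
  have hcop : IsCoprime A B := by
    rcases hAB with ⟨rfl, rfl⟩ | ⟨rfl, rfl⟩
    · exact hcop0
    · exact hcop0.symm
  have hpy : A ^ 2 + B ^ 2 = (f ^ 2 + g ^ 2) ^ 2 := by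
    rcases hAB with ⟨rfl, rfl⟩ | ⟨rfl, rfl⟩ <;> ring
  generalize f ^ 2 + g ^ 2 = C at *
  have h' : w ^ 2 * A ^ 3 + B = w * C ^ 2 := by
    apply mul_left_cancel₀ hw0; linear_combination h
  by_cases hP : B.natDegree ≤ (C + B).natDegree
  · exact jes_core_s15 w A B C (C + B) (C - B) 1 hw hA hB hC0 hcop hpy hdBC h'
      (by linear_combination -hpy) (Or.inl rfl) (by ring) hP
  · refine jes_core_s15 w A B C (C - B) (C + B) (-1) hw hA hB hC0 hcop hpy hdBC h'
      (by linear_combination -hpy) (Or.inr rfl) (by ring) ?_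
    have h3 : C - B = (C + B) - Polynomial.C 2 * B := by
      have : (Polynomial.C 2 : K[X]) = 2 := rfl
      rw [this]; ring
    have h4 : (Polynomial.C 2 * B).natDegree = B.natDegree :=
      natDegree_C_mul two_ne_zero
    rw [h3, natDegree_sub_eq_right_of_natDegree_lt (by omega), h4]
end

section
/- Let K be an algebraically closed field of characteristic 0, let f and g be nonconstant, relatively prime polynomials in K[t], set A = f² − g², B = 2fg, C = f² + g², and let w ∈ K[t] be a nonconstant polynomial. If (x, y, z) is a solution in positive integers of (wA)^x + (wB)^y = (wC)^z, then x = y = z. -/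
open Polynomial

namespace JesAux

variable {K : Type*} [Field K]

lemma deg_le (P Q R : K[X]) (h : P ^ 2 + Q ^ 2 + R ^ 2 = 0) :
    P.natDegree ≤ Q.natDegree ∨ P.natDegree ≤ R.natDegree := by
  by_contra hc
  push Not at hc
  have h1 : P ^ 2 = -(Q ^ 2 + R ^ 2) := by linear_combination h
  have h2 : (P ^ 2).natDegree ≤ max (Q ^ 2).natDegree (R ^ 2).natDegree := by
    rw [h1, natDegree_neg]; exact natDegree_add_le _ _
  simp only [natDegree_pow] at h2
  omega

lemma natDegree_C_mul_pos_ne {P : K[X]} (h : 0 < P.natDegree) : P ≠ 0 := by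
  rintro rfl; simp at h

/-- The case of two equal smallest exponents. -/
lemma case_two_min [CharZero K] (P Q R w : K[X]) (hR : 0 < R.natDegree)
    (hw : 0 < w.natDegree) (hPR : IsCoprime P R) (hQR : IsCoprime Q R)
    (I : K) (hI : I ^ 2 = -1)
    (hs : P ^ 2 + Q ^ 2 + R ^ 2 = 0) (a b c : K) (ha : a ≠ 0) (hc : c ≠ 0)
    (x n : ℕ) (hx : 0 < x) (hn : 0 < n)
    (h : C a * P ^ x + C b * Q ^ x + C c * (w ^ n * R ^ (x + n)) = 0) : False := by
  have hR0 := natDegree_C_mul_pos_ne hR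
  have hw0 := natDegree_C_mul_pos_ne hw
  by_cases h3 : 3 ≤ x + n
  · obtain ⟨m, hm⟩ := Nat.exists_eq_add_of_le h3
    obtain ⟨k, rfl⟩ : ∃ k, x = k + 1 := ⟨x - 1, by omega⟩
    set s : K[X] := -(C c * (w ^ n * R ^ m)) with hsdef
    have hN : C a * P ^ (k + 1) + C b * Q ^ (k + 1) = R ^ 3 * s := by
      rw [hm, pow_add] at h
      rw [hsdef]; linear_combination h
    have hN' := congrArg derivative hN
    simp only [derivative_add, derivative_mul, derivative_C, derivative_pow_succ, zero_mul,
      zero_add, derivative_pow] at hN'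
    have hs' := congrArg derivative hs
    simp only [derivative_add, derivative_pow, derivative_zero] at hs'
    norm_num at hs' hN'
    have h2 : (C (2 : K)) ≠ 0 := by simp
    have hs'' : P * derivative P + Q * derivative Q + R * derivative R = 0 := by
      apply mul_left_cancel₀ h2
      simp only [map_ofNat] at hs' ⊢
      linear_combination hs'
    set W := derivative P * Q - P * derivative Q with hW
    have e1 : R ^ 2 ∣ (C ((k + 1 : ℕ) * a)) * (P ^ k * W) := by
      refine ⟨Q * (C (3 : K) * derivative R * s + R * derivative s) - ((k : K[X]) + 1) * derivative Q * R * s, ?_⟩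
      have : C (((k + 1 : ℕ) : K) * a) = ((k : K[X]) + 1) * C a := by simp
      rw [this, hW]
      linear_combination Q * hN' - (k + 1) * derivative Q * hN
    have e2 : R ^ 2 ∣ P ^ k * W := by
      have hne : ((k + 1 : ℕ) : K) * a ≠ 0 := mul_ne_zero (by exact_mod_cast Nat.succ_ne_zero k) ha
      exact (IsUnit.dvd_mul_left (isUnit_C.2 hne.isUnit)).1 e1
    have e3 : R ^ 2 ∣ W := (hPR.symm.pow).dvd_of_dvd_mul_left e2
    have e4 : R * R ∣ R * (R * derivative Q - Q * derivative R) := by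
      have : R * (R * derivative Q - Q * derivative R) = P * W := by
        rw [hW]; linear_combination (derivative Q) * hs - Q * hs''
      rw [this, ← sq]; exact e3.mul_left _
    have e5 : R ∣ R * derivative Q - Q * derivative R := (mul_dvd_mul_iff_left hR0).1 e4
    have e6 : R ∣ Q * derivative R := (dvd_sub_right (dvd_mul_right R _)).1 e5
    have e7 : R ∣ derivative R := hQR.symm.dvd_of_dvd_mul_left e6
    have e8 : derivative R = 0 := by
      by_contra hne
      have := natDegree_le_of_dvd e7 hne
      have := natDegree_derivative_lt hR.ne'
      omega
    have := derivative_eq_zero.1 e8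
    omega
  · obtain rfl : x = 1 := by omega
    obtain rfl : n = 1 := by omega
    have hIC : (C I) ^ 2 = -1 := by rw [← C_pow, hI]; simp
    have hfac : (P + C I * Q) * (P - C I * Q) = -R ^ 2 := by
      linear_combination hs - Q ^ 2 * hIC
    have hne : (P + C I * Q) * (P - C I * Q) ≠ 0 := by
      rw [hfac]; exact neg_ne_zero.2 (pow_ne_zero _ hR0)
    have hdeg := congrArg natDegree hfac
    rw [natDegree_mul (left_ne_zero_of_mul hne) (right_ne_zero_of_mul hne), natDegree_neg,
      natDegree_pow] at hdeg
    have h2 : (2 : K) ≠ 0 := two_ne_zero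
    have hI0 : I ≠ 0 := by rintro rfl; norm_num at hI
    set p := P + C I * Q with hp
    set q := P - C I * Q with hq
    have hP : P.natDegree ≤ max p.natDegree q.natDegree := by
      rw [← natDegree_C_mul h2]
      have : C 2 * P = p + q := by rw [hp, hq]; simp only [map_ofNat]; ring
      rw [this]; exact natDegree_add_le _ _
    have hQ : Q.natDegree ≤ max p.natDegree q.natDegree := by
      rw [← natDegree_C_mul (mul_ne_zero h2 hI0)]
      have : C (2 * I) * Q = p - q := by rw [hp, hq, C_mul]; simp only [map_ofNat]; ring
      rw [this]; exact natDegree_sub_le _ _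
    have h5 : C c * (w * R ^ 2) = -(C a * P + C b * Q) := by linear_combination h
    have h6 := congrArg natDegree h5
    rw [natDegree_C_mul hc, natDegree_mul hw0 (pow_ne_zero _ hR0), natDegree_pow,
      natDegree_neg] at h6
    have h7 := natDegree_add_le (C a * P) (C b * Q)
    have h8 := natDegree_C_mul_le a P
    have h9 := natDegree_C_mul_le b Q
    omega

/-- Exponents (1,2,2). -/
lemma case_122 [CharZero K] [IsAlgClosed K] (E Q R w : K[X]) (hR : 0 < R.natDegree)
    (hw : 0 < w.natDegree) (hP : 0 < (w * E).natDegree) (hPR : IsCoprime (w * E) R)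
    (hs : (w * E) ^ 2 + Q ^ 2 + R ^ 2 = 0) (a b c : K) (ha : a ≠ 0) (hb : b ≠ 0)
    (h : C a * E + C b * Q ^ 2 + C c * R ^ 2 = 0) : False := by
  have hE0 : E ≠ 0 := by rintro rfl; simp at hP
  have hw0 := natDegree_C_mul_pos_ne hw
  have h1 : C a * E - C b * (w * E) ^ 2 + C (c - b) * R ^ 2 = 0 := by
    rw [C_sub]; linear_combination h - C b * hs
  by_cases hcb : c - b = 0
  · rw [hcb] at h1
    have h2 : C a = C b * (w ^ 2 * E) := by
      apply mul_right_cancel₀ hE0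
      simp only [C_0] at h1
      linear_combination h1
    have h3 := congrArg natDegree h2
    rw [natDegree_C, natDegree_C_mul hb, natDegree_mul (pow_ne_zero _ hw0) hE0,
      natDegree_pow] at h3
    omega
  · have h2 : E ∣ C (c - b) * R ^ 2 := ⟨C b * w ^ 2 * E - C a, by linear_combination h1⟩
    have h3 : E ∣ R ^ 2 := (IsUnit.dvd_mul_left (isUnit_C.2 (Ne.isUnit hcb))).1 h2
    have h4 : IsUnit E := (hPR.of_mul_left_right.pow_right (n := 2)).isUnit_of_dvd' dvd_rfl h3
    obtain ⟨s, hs2⟩ := IsAlgClosed.exists_pow_nat_eq (c - b) (n := 2) (by norm_num)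
    obtain ⟨t, ht2⟩ := IsAlgClosed.exists_pow_nat_eq b (n := 2) (by norm_num)
    have ht0 : t ≠ 0 := by rintro rfl; apply hb; rw [← ht2]; simp
    have h5 : (C t * (w * E) - C s * R) * (C t * (w * E) + C s * R) = C a * E := by
      rw [← hs2, ← ht2, C_pow, C_pow] at h1
      linear_combination -h1
    have h6 : IsUnit (C a * E) := (isUnit_C.2 ha.isUnit).mul h4
    rw [← h5] at h6
    have h7 := natDegree_eq_zero_of_isUnit (isUnit_of_mul_isUnit_left h6)
    have h8 := natDegree_eq_zero_of_isUnit (isUnit_of_mul_isUnit_right h6)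
    have h9 : C (2 * t) * (w * E) = (C t * (w * E) - C s * R) + (C t * (w * E) + C s * R) := by
      rw [C_mul]; simp only [map_ofNat]; ring
    have h10 := natDegree_C_mul (p := w * E) (mul_ne_zero (two_ne_zero (α := K)) ht0)
    rw [h9] at h10
    have h11 := natDegree_add_le (C t * (w * E) - C s * R) (C t * (w * E) + C s * R)
    omega

/-- Exponents (1,2,n+2). -/
lemma case_12n [CharZero K] (E Q R w : K[X]) (hR : 0 < R.natDegree)
    (hw : 0 < w.natDegree) (hP : 0 < (w * E).natDegree) (hPR : IsCoprime (w * E) R)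
    (hs : (w * E) ^ 2 + Q ^ 2 + R ^ 2 = 0) (a b c : K) (ha : a ≠ 0) (hb : b ≠ 0)
    (hc : c ≠ 0) (n : ℕ) (hn : 0 < n)
    (h : C a * E + C b * Q ^ 2 + C c * (w ^ n * R ^ (n + 2)) = 0)
    (hPQ : Q.natDegree = (w * E).natDegree)
    (I : K) (hI : I ^ 2 = -1)
    (hdp : (w * E).natDegree ≤ (w * E + C I * Q).natDegree) : False := by
  have hE0 : E ≠ 0 := by rintro rfl; simp at hP
  have hw0 := natDegree_C_mul_pos_ne hw
  have hR0 := natDegree_C_mul_pos_ne hR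
  have hIC : (C I) ^ 2 = -1 := by rw [← C_pow, hI]; simp
  have hfac : (w * E + C I * Q) * (w * E - C I * Q) = -R ^ 2 := by
    linear_combination hs - Q ^ 2 * hIC
  have hne : (w * E + C I * Q) * (w * E - C I * Q) ≠ 0 := by
    rw [hfac]; exact neg_ne_zero.2 (pow_ne_zero _ hR0)
  have hdeg := congrArg natDegree hfac
  rw [natDegree_mul (left_ne_zero_of_mul hne) (right_ne_zero_of_mul hne), natDegree_neg,
    natDegree_pow] at hdeg
  set p := w * E + C I * Q with hp
  set q := w * E - C I * Q with hq
  have hp0 : p ≠ 0 := left_ne_zero_of_mul hne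
  have hq0 : q ≠ 0 := right_ne_zero_of_mul hne
  have hPd : (w * E).natDegree = w.natDegree + E.natDegree := natDegree_mul hw0 hE0
  have hRd : n * w.natDegree + (n + 2) * R.natDegree ≤ 2 * (w * E).natDegree := by
    have h5 : C c * (w ^ n * R ^ (n + 2)) = -(C a * E + C b * Q ^ 2) := by linear_combination h
    have h6 := congrArg natDegree h5
    rw [natDegree_C_mul hc, natDegree_mul (pow_ne_zero _ hw0) (pow_ne_zero _ hR0), natDegree_pow,
      natDegree_pow, natDegree_neg] at h6
    have h7 := natDegree_add_le (C a * E) (C b * Q ^ 2)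
    have h8 := natDegree_C_mul_le a E
    have h9 := natDegree_C_mul_le b (Q ^ 2)
    rw [natDegree_pow] at h9
    omega
  have h3R : 3 * R.natDegree + 1 ≤ 2 * (w * E).natDegree := by nlinarith
  have hbb : C b * C b⁻¹ = 1 := by rw [← C_mul, mul_inv_cancel₀ hb, C_1]
  set e := C (4 * (a * b⁻¹)) * E with he
  have hed : e.natDegree ≤ E.natDegree := natDegree_C_mul_le _ _
  have hkey : (p - q) ^ 2 - e = C (4 * (b⁻¹ * c)) * (w ^ n * R ^ (n + 2)) := by
    have e1 : (p - q) ^ 2 = -4 * Q ^ 2 := by rw [hp, hq]; linear_combination 4 * Q ^ 2 * hIC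
    rw [e1, he]
    simp only [C_mul, map_ofNat]
    linear_combination -4 * C b⁻¹ * h + 4 * Q ^ 2 * hbb
  have hp3 : p ^ 3 ∣ ((p - q) ^ 2 - e) ^ 2 := by
    rw [hkey]
    obtain ⟨m, rfl⟩ : ∃ m, n = m + 1 := ⟨n - 1, by omega⟩
    refine ⟨-q ^ 3 * (C (4 * (b⁻¹ * c)) * (w ^ (m + 1) * R ^ m)) ^ 2, ?_⟩
    have : p ^ 3 * q ^ 3 = -R ^ 6 := by rw [← mul_pow, hfac]; ring
    linear_combination ((C (4 * (b⁻¹ * c)) * (w ^ (m + 1) * R ^ m)) ^ 2) * this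
  have hd1 : p ∣ q ^ 2 - e := by
    have h1 : p ∣ ((p - q) ^ 2 - e) ^ 2 := (dvd_pow_self p (by norm_num)).trans hp3
    have h2 : p ^ 2 ∣ (((p - q) ^ 2 - e)) ^ 2 := (pow_dvd_pow p (by norm_num)).trans hp3
    have h3 : p ∣ (p - q) ^ 2 - e :=
      (UniqueFactorizationMonoid.pow_dvd_pow_iff_dvd two_ne_zero).1 h2
    have h4 : q ^ 2 - e = ((p - q) ^ 2 - e) - p * (p - 2 * q) := by ring
    rw [h4]; exact dvd_sub h3 (dvd_mul_right _ _)
  have hz : q ^ 2 - e = 0 := by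
    by_contra hne0
    have h1 := natDegree_le_of_dvd hd1 hne0
    have h2 := natDegree_sub_le (q ^ 2) e
    rw [natDegree_pow] at h2
    omega
  have h4 : p ^ 2 * p ∣ p ^ 2 * (p - 2 * q) ^ 2 := by
    have : p ^ 2 * (p - 2 * q) ^ 2 = ((p - q) ^ 2 - e) ^ 2 := by
      have : (p - q) ^ 2 - e = p * (p - 2 * q) := by linear_combination hz
      rw [this]; ring
    rw [this, ← pow_succ]; exact hp3
  have h5 := (mul_dvd_mul_iff_left (pow_ne_zero 2 hp0)).1 h4
  have h6 : p ∣ C 4 * q ^ 2 := by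
    have : C 4 * q ^ 2 = (p - 2 * q) ^ 2 - p * (p - 4 * q) := by
      simp only [map_ofNat]; ring
    rw [this]; exact dvd_sub h5 (dvd_mul_right _ _)
  have h4ne : (4 : K) ≠ 0 := by norm_num
  have h7 := natDegree_le_of_dvd h6 (mul_ne_zero (C_ne_zero.2 h4ne) (pow_ne_zero _ hq0))
  rw [natDegree_C_mul h4ne, natDegree_pow] at h7
  omega

/-- The case of a unique smallest exponent. -/
lemma case_one_min [CharZero K] [IsAlgClosed K] (P Q R w : K[X]) (hP : 0 < P.natDegree)
    (hQ : 0 < Q.natDegree) (hR : 0 < R.natDegree)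
    (hw : 0 < w.natDegree) (hPQ : IsCoprime P Q) (hPR : IsCoprime P R)
    (I : K) (hI : I ^ 2 = -1)
    (hs : P ^ 2 + Q ^ 2 + R ^ 2 = 0) (a b c : K) (ha : a ≠ 0) (hb : b ≠ 0) (hc : c ≠ 0)
    (x m n : ℕ) (hx : 0 < x) (hm : 0 < m)
    (h : C a * P ^ x + C b * (w ^ m * Q ^ (x + m))
      + C c * (w ^ (m + n) * R ^ (x + m + n)) = 0) : False := by
  classical
  have hw0 := natDegree_C_mul_pos_ne hw
  have hP0 := natDegree_C_mul_pos_ne hP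
  have hQ0 := natDegree_C_mul_pos_ne hQ
  have hR0 := natDegree_C_mul_pos_ne hR
  have hdvd : w ^ m ∣ P ^ x := by
    have : w ^ m ∣ C a * P ^ x :=
      ⟨-(C b * Q ^ (x + m) + C c * (w ^ n * R ^ (x + m + n))), by
        rw [pow_add w m n] at h; linear_combination h⟩
    exact (IsUnit.dvd_mul_left (isUnit_C.2 ha.isUnit)).1 this
  obtain ⟨E, hE⟩ := hdvd
  have hE0 : E ≠ 0 := by
    rintro rfl; rw [mul_zero] at hE; exact pow_ne_zero _ hP0 hE
  have h' : C a * E + C b * Q ^ (x + m) + C c * (w ^ n * R ^ (x + m + n)) = 0 := by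
    apply mul_left_cancel₀ (pow_ne_zero m hw0)
    rw [hE, pow_add w m n] at h
    linear_combination h
  have hEP : E ∣ P ^ x := ⟨w ^ m, by rw [hE]; ring⟩
  have hwP : w ∣ P ^ x := (dvd_pow_self w hm.ne').trans ⟨E, hE⟩
  have hEQ : IsCoprime (C a * E) (C b * Q ^ (x + m)) := by
    rw [isCoprime_mul_unit_left_left (isUnit_C.2 ha.isUnit),
      isCoprime_mul_unit_left_right (isUnit_C.2 hb.isUnit)]
    exact (hPQ.pow (m := x) (n := x + m)).of_isCoprime_of_dvd_left hEP
  have hca := C_ne_zero.2 ha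
  have hcb := C_ne_zero.2 hb
  have hcc := C_ne_zero.2 hc
  have n1 : C a * E ≠ 0 := mul_ne_zero hca hE0
  have n2 : C b * Q ^ (x + m) ≠ 0 := mul_ne_zero hcb (pow_ne_zero _ hQ0)
  have n3 : C c * (w ^ n * R ^ (x + m + n)) ≠ 0 :=
    mul_ne_zero hcc (mul_ne_zero (pow_ne_zero _ hw0) (pow_ne_zero _ hR0))
  have hrad : (UniqueFactorizationMonoid.radical (C a * E * (C b * Q ^ (x + m)) *
      (C c * (w ^ n * R ^ (x + m + n))))).natDegree
      ≤ P.natDegree + Q.natDegree + R.natDegree := by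
    have hdv : C a * E * (C b * Q ^ (x + m)) * (C c * (w ^ n * R ^ (x + m + n))) ∣
        (P * Q * R) ^ (x + x * n + (x + m) + (x + m + n)) := by
      have d1 : C a * E ∣ P ^ x := (IsUnit.mul_left_dvd (isUnit_C.2 ha.isUnit)).2 hEP
      have d2 : C b * Q ^ (x + m) ∣ Q ^ (x + m) :=
        (IsUnit.mul_left_dvd (isUnit_C.2 hb.isUnit)).2 dvd_rfl
      have d3 : C c * (w ^ n * R ^ (x + m + n)) ∣ P ^ (x * n) * R ^ (x + m + n) := by
        refine (IsUnit.mul_left_dvd (isUnit_C.2 hc.isUnit)).2 (mul_dvd_mul ?_ dvd_rfl)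
        rw [pow_mul]; exact pow_dvd_pow_of_dvd hwP n
      refine (mul_dvd_mul (mul_dvd_mul d1 d2) d3).trans ?_
      have : P ^ x * Q ^ (x + m) * (P ^ (x * n) * R ^ (x + m + n)) =
        P ^ (x + x * n) * Q ^ (x + m) * R ^ (x + m + n) := by rw [pow_add P]; ring
      rw [this, mul_pow, mul_pow]
      exact mul_dvd_mul (mul_dvd_mul (pow_dvd_pow _ (by omega)) (pow_dvd_pow _ (by omega)))
        (pow_dvd_pow _ (by omega))
    have hPQR : P * Q * R ≠ 0 := mul_ne_zero (mul_ne_zero hP0 hQ0) hR0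
    have hrd : UniqueFactorizationMonoid.radical (C a * E * (C b * Q ^ (x + m)) *
      (C c * (w ^ n * R ^ (x + m + n)))) ∣ P * Q * R := by
      have := UniqueFactorizationMonoid.radical_dvd_radical hdv (pow_ne_zero _ hPQR)
      rw [UniqueFactorizationMonoid.radical_pow _ (by omega)] at this
      exact this.trans UniqueFactorizationMonoid.radical_dvd_self
    have := natDegree_le_of_dvd hrd hPQR
    rwa [natDegree_mul (mul_ne_zero hP0 hQ0) hR0, natDegree_mul hP0 hQ0] at this
  have dP := deg_le P Q R hs
  have dQ := deg_le Q P R (by linear_combination hs)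
  have dR := deg_le R P Q (by linear_combination hs)
  rcases Polynomial.abc n1 n2 n3 hEQ h' with ⟨-, i2, i3⟩ | ⟨-, j2, -⟩
  · rw [natDegree_C_mul hb, natDegree_pow] at i2
    rw [natDegree_C_mul hc, natDegree_mul (pow_ne_zero _ hw0) (pow_ne_zero _ hR0),
      natDegree_pow, natDegree_pow] at i3
    have i2' := i2.trans hrad
    have i3' := i3.trans hrad
    have hy : x + m = 2 := by
      by_contra hne
      have g1 : 3 * Q.natDegree ≤ (x + m) * Q.natDegree := Nat.mul_le_mul_right _ (by omega)
      have g2 : 3 * R.natDegree ≤ (x + m + n) * R.natDegree := Nat.mul_le_mul_right _ (by omega)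
      have g3 : 0 ≤ n * w.natDegree := Nat.zero_le _
      omega
    obtain rfl : x = 1 := by omega
    obtain rfl : m = 1 := by omega
    simp only [pow_one] at hE
    subst hE
    rcases Nat.eq_zero_or_pos n with rfl | hn
    · exact case_122 E Q R w hR hw hP hPR hs a b c ha hb (by simpa using h')
    · have g2 : 3 * R.natDegree ≤ (1 + 1 + n) * R.natDegree := Nat.mul_le_mul_right _ (by omega)
      have hQP : Q.natDegree = (w * E).natDegree := by omega
      have h'' : C a * E + C b * Q ^ 2 + C c * (w ^ n * R ^ (n + 2)) = 0 := by
        rw [← h']; ring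
      have key := case_12n E Q R w hR hw hP hPR hs a b c ha hb hc n hn h'' hQP
      have k1 := key I hI
      have k2 := key (-I) (by simpa using hI)
      have h9 : C 2 * (w * E) = (w * E + C I * Q) + (w * E + C (-I) * Q) := by
        rw [C_neg]; simp only [map_ofNat]; ring
      have h10 := natDegree_C_mul (p := w * E) (two_ne_zero (α := K))
      rw [h9] at h10
      have h11 := natDegree_add_le (w * E + C I * Q) (w * E + C (-I) * Q)
      by_cases hh : (w * E).natDegree ≤ (w * E + C I * Q).natDegree
      · exact k1 hh
      · exact k2 (by omega)
  · have := derivative_eq_zero.1 j2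
    rw [natDegree_C_mul hb, natDegree_pow] at this
    have : 0 < (x + m) * Q.natDegree := by positivity
    omega

lemma core [CharZero K] [IsAlgClosed K] (P Q R w : K[X]) (hP : 0 < P.natDegree)
    (hQ : 0 < Q.natDegree) (hR : 0 < R.natDegree)
    (hw : 0 < w.natDegree) (hPQ : IsCoprime P Q) (hPR : IsCoprime P R) (hQR : IsCoprime Q R)
    (I : K) (hI : I ^ 2 = -1)
    (hs : P ^ 2 + Q ^ 2 + R ^ 2 = 0) (a b c : K) (ha : a ≠ 0) (hb : b ≠ 0) (hc : c ≠ 0)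
    (x y z : ℕ) (hx : 0 < x) (hxy : x ≤ y) (hyz : y ≤ z)
    (h : C a * (w * P) ^ x + C b * (w * Q) ^ y + C c * (w * R) ^ z = 0) : x = y ∧ y = z := by
  have hw0 := natDegree_C_mul_pos_ne hw
  obtain ⟨m, rfl⟩ := Nat.exists_eq_add_of_le hxy
  obtain ⟨n, rfl⟩ := Nat.exists_eq_add_of_le hyz
  have h' : C a * P ^ x + C b * (w ^ m * Q ^ (x + m))
      + C c * (w ^ (m + n) * R ^ (x + m + n)) = 0 := by
    apply mul_left_cancel₀ (pow_ne_zero x hw0)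
    rw [mul_zero, ← h]
    simp only [mul_pow, pow_add]
    ring
  rcases Nat.eq_zero_or_pos m with rfl | hm
  · rcases Nat.eq_zero_or_pos n with rfl | hn
    · simp
    · exact (case_two_min P Q R w hR hw hPR hQR I hI hs a b c ha hc x n hx hn
        (by simpa using h')).elim
  · exact (case_one_min P Q R w hP hQ hR hw hPQ hPR I hI hs a b c ha hb hc x m n hx hm h').elim

end JesAux

theorem jesmanowicz_poly_exponents_equal
    {K : Type*} [Field K] [CharZero K] [IsAlgClosed K]
    (f g w : K[X])
    (hf : 0 < f.natDegree) (hg : 0 < g.natDegree)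
    (hfg : IsCoprime f g) (hw : 0 < w.natDegree)
    (x y z : ℕ) (hx : 0 < x) (hy : 0 < y) (hz : 0 < z)
    (heq : (w * (f ^ 2 - g ^ 2)) ^ x + (w * (2 * f * g)) ^ y = (w * (f ^ 2 + g ^ 2)) ^ z) :
    x = y ∧ y = z := by
  obtain ⟨I, hI⟩ := IsAlgClosed.exists_pow_nat_eq (-1 : K) (n := 2) (by norm_num)
  have hI0 : I ≠ 0 := by rintro rfl; norm_num at hI
  have hIC : (C I) ^ 2 = -1 := by rw [← C_pow, hI]; simp
  have hf0 := JesAux.natDegree_C_mul_pos_ne hf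
  have hg0 := JesAux.natDegree_C_mul_pos_ne hg
  have u2 : IsUnit (2 : K[X]) := by
    have := isUnit_C.2 (Ne.isUnit (two_ne_zero (α := K)))
    simpa only [map_ofNat] using this
  have key : ∀ s : K, s ≠ 0 → 0 < (f ^ 2 - C (s ^ 2) * g ^ 2).natDegree := by
    intro s hs
    by_contra hcon
    have hfac : f ^ 2 - C (s ^ 2) * g ^ 2 = (f - C s * g) * (f + C s * g) := by
      rw [C_pow]; ring
    have hne : f ^ 2 - C (s ^ 2) * g ^ 2 ≠ 0 := by
      intro h0
      have h1 : f ∣ C (s ^ 2) * g ^ 2 := ⟨f, by linear_combination -h0⟩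
      have h2 : f ∣ g ^ 2 :=
        (IsUnit.dvd_mul_left (isUnit_C.2 (Ne.isUnit (pow_ne_zero 2 hs)))).1 h1
      have h3 : IsUnit f := (hfg.pow_right (n := 2)).isUnit_of_dvd' dvd_rfl h2
      have := natDegree_eq_zero_of_isUnit h3
      omega
    rw [hfac] at hne hcon
    rw [natDegree_mul (left_ne_zero_of_mul hne) (right_ne_zero_of_mul hne)] at hcon
    have h9 : C 2 * f = (f - C s * g) + (f + C s * g) := by
      simp only [map_ofNat]; ring
    have h10 := natDegree_C_mul (p := f) (two_ne_zero (α := K))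
    rw [h9] at h10
    have h11 := natDegree_add_le (f - C s * g) (f + C s * g)
    omega
  have hP : 0 < (f ^ 2 - g ^ 2).natDegree := by simpa using key 1 one_ne_zero
  have hR' : 0 < (f ^ 2 + g ^ 2).natDegree := by
    have := key I hI0
    rw [hI] at this
    simpa using this
  have hQ : 0 < (2 * f * g).natDegree := by
    have : 2 * f * g = C 2 * (f * g) := by simp only [map_ofNat]; ring
    rw [this, natDegree_C_mul two_ne_zero, natDegree_mul hf0 hg0]; omega
  have hR : 0 < (C I * (f ^ 2 + g ^ 2)).natDegree := by rwa [natDegree_C_mul hI0]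
  have uI : IsUnit (C I) := isUnit_C.2 hI0.isUnit
  have c2 : IsCoprime (f ^ 2) (g ^ 2) := hfg.pow
  have hPQ : IsCoprime (f ^ 2 - g ^ 2) (2 * f * g) := by
    rw [mul_assoc, isCoprime_mul_unit_left_right u2]
    refine IsCoprime.mul_right ?_ ?_
    · obtain ⟨r, s, h⟩ := (hfg.pow_right (n := 2))
      exact ⟨-s, r + s * f, by linear_combination h⟩
    · obtain ⟨r, s, h⟩ := (hfg.pow_left (m := 2))
      exact ⟨r, s + r * g, by linear_combination h⟩
  have hQR0 : IsCoprime (2 * f * g) (f ^ 2 + g ^ 2) := by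
    apply IsCoprime.symm
    rw [mul_assoc, isCoprime_mul_unit_left_right u2]
    refine IsCoprime.mul_right ?_ ?_
    · obtain ⟨r, s, h⟩ := (hfg.pow_right (n := 2))
      exact ⟨s, r - s * f, by linear_combination h⟩
    · obtain ⟨r, s, h⟩ := (hfg.pow_left (m := 2))
      exact ⟨r, s - r * g, by linear_combination h⟩
  have hPR0 : IsCoprime (f ^ 2 - g ^ 2) (f ^ 2 + g ^ 2) := by
    obtain ⟨r, s, h⟩ := c2
    have h2 : (C (2⁻¹ : K)) * 2 = 1 := by
      have : (2 : K[X]) = C 2 := (map_ofNat C 2).symm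
      rw [this, ← C_mul, inv_mul_cancel₀ two_ne_zero, C_1]
    exact ⟨C 2⁻¹ * (r - s), C 2⁻¹ * (r + s), by
      linear_combination h + (r * f ^ 2 + s * g ^ 2) * h2⟩
  have hQR : IsCoprime (2 * f * g) (C I * (f ^ 2 + g ^ 2)) :=
    (isCoprime_mul_unit_left_right uI _ _).2 hQR0
  have hPR : IsCoprime (f ^ 2 - g ^ 2) (C I * (f ^ 2 + g ^ 2)) :=
    (isCoprime_mul_unit_left_right uI _ _).2 hPR0
  have hs : (f ^ 2 - g ^ 2) ^ 2 + (2 * f * g) ^ 2 + (C I * (f ^ 2 + g ^ 2)) ^ 2 = 0 := by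
    linear_combination (f ^ 2 + g ^ 2) ^ 2 * hIC
  have hc : -(-I) ^ z ≠ 0 := neg_ne_zero.2 (pow_ne_zero _ (neg_ne_zero.2 hI0))
  have h : C 1 * (w * (f ^ 2 - g ^ 2)) ^ x + C 1 * (w * (2 * f * g)) ^ y
      + C (-(-I) ^ z) * (w * (C I * (f ^ 2 + g ^ 2))) ^ z = 0 := by
    have e : C (-(-I) ^ z) * (w * (C I * (f ^ 2 + g ^ 2))) ^ z = -(w * (f ^ 2 + g ^ 2)) ^ z := by
      rw [C_neg, C_pow, neg_mul, ← mul_pow]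
      congr 2
      rw [C_neg]
      linear_combination -(w * (f ^ 2 + g ^ 2)) * hIC
    rw [e, ← heq, C_1]; ring
  generalize f ^ 2 - g ^ 2 = P at *
  generalize 2 * f * g = Q at *
  generalize C I * (f ^ 2 + g ^ 2) = R at *
  generalize -(-I) ^ z = c at *
  have o := one_ne_zero (α := K)
  rcases le_total x y with h1 | h1 <;> rcases le_total y z with h2 | h2 <;>
    rcases le_total x z with h3 | h3
  · exact JesAux.core P Q R w hP hQ hR hw hPQ hPR hQR I hI hs 1 1 c o o hc x y z hx h1 h2 h
  · exact JesAux.core P Q R w hP hQ hR hw hPQ hPR hQR I hI hs 1 1 c o o hc x y z hx h1 h2 h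
  · have := JesAux.core P R Q w hP hR hQ hw hPR hPQ hQR.symm I hI (by linear_combination hs)
      1 c 1 o hc o x z y hx h3 h2 (by linear_combination h)
    omega
  · have := JesAux.core R P Q w hR hP hQ hw hPR.symm hQR.symm hPQ I hI (by linear_combination hs)
      c 1 1 hc o o z x y hz h3 h1 (by linear_combination h)
    omega
  · have := JesAux.core Q P R w hQ hP hR hw hPQ.symm hQR hPR I hI (by linear_combination hs)
      1 1 c o o hc y x z hy h1 h3 (by linear_combination h)
    omega
  · have := JesAux.core Q R P w hQ hR hP hw hQR hPQ.symm hPR.symm I hI (by linear_combination hs)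
      1 c 1 o hc o y z x hy h2 h3 (by linear_combination h)
    omega
  · have := JesAux.core R Q P w hR hQ hP hw hQR.symm hPR.symm hPQ.symm I hI
      (by linear_combination hs) c 1 1 hc o o z y x hz h2 h1 (by linear_combination h)
    omega
  · have := JesAux.core R Q P w hR hQ hP hw hQR.symm hPR.symm hPQ.symm I hI
      (by linear_combination hs) c 1 1 hc o o z y x hz h2 h1 (by linear_combination h)
    omega
end

section
/- Let K be an algebraically closed field of characteristic 0, let f and g be nonconstant, relatively prime polynomials in K[t], set A = f² − g², B = 2fg, C = f² + g², and let w ∈ K[t] be a nonzero polynomial. If m and n are positive integers with m ≤ n such that (wA)^n = (wC)^m − (wB)^m, then m ≤ 2. -/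
open Polynomial

theorem jes_aux_s17 {K : Type*} [Field K] [CharZero K] [IsAlgClosed K]
    (f g : K[X]) (hfg : IsCoprime f g) (m : ℕ) (hm : 0 < m)
    (h : (f - g) ^ 3 ∣ (f ^ 2 + g ^ 2) ^ m - (2 * f * g) ^ m) : (f - g).natDegree = 0 := by
  by_contra hd
  have hd0 : f - g ≠ 0 := by
    intro h0
    simp [h0] at hd
  obtain ⟨a, ha⟩ := IsAlgClosed.exists_root (f - g)
    (fun h0 => hd (natDegree_eq_of_degree_eq_some h0))
  have hS := (Commute.all (f ^ 2 + g ^ 2) (2 * f * g)).mul_geom_sum₂ m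
  rw [← hS, show f ^ 2 + g ^ 2 - 2 * f * g = (f - g) ^ 2 by ring, pow_succ] at h
  have h2 := (mul_dvd_mul_iff_left (pow_ne_zero 2 hd0)).1 h
  have h3 := ha.dvd h2
  have ha' : f.eval a = g.eval a := by
    have := ha.eq_zero
    rw [eval_sub] at this
    exact sub_eq_zero.1 this
  have hg : g.eval a ≠ 0 := by
    intro h0
    obtain ⟨u, v, huv⟩ := hfg
    have := congrArg (eval a) huv
    simp [ha', h0] at this
  have h4 := h3.eq_zero
  rw [eval_finsetSum] at h4
  simp only [eval_mul, eval_pow, eval_add, eval_ofNat, ha'] at h4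
  rw [show g.eval a ^ 2 + g.eval a ^ 2 = 2 * g.eval a * g.eval a by ring,
    geom_sum₂_self] at h4
  have : (m : K) ≠ 0 := by exact_mod_cast hm.ne'
  simp [this, hg] at h4

theorem jes_aux_odd {K : Type*} [Field K] [CharZero K] [IsAlgClosed K]
    (f g : K[X]) (hfg : IsCoprime f g) (m : ℕ) (hm : Odd m)
    (h : (f + g) ∣ (f ^ 2 + g ^ 2) ^ m - (2 * f * g) ^ m) : (f + g).natDegree = 0 := by
  by_contra hd
  obtain ⟨a, ha⟩ := IsAlgClosed.exists_root (f + g)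
    (fun h0 => hd (natDegree_eq_of_degree_eq_some h0))
  have h3 := ha.dvd h
  have ha' : f.eval a = - g.eval a := by
    have := ha.eq_zero
    rw [eval_add] at this
    exact eq_neg_of_add_eq_zero_left this
  have hg : g.eval a ≠ 0 := by
    intro h0
    obtain ⟨u, v, huv⟩ := hfg
    have := congrArg (eval a) huv
    simp [ha', h0] at this
  have h4 := h3.eq_zero
  simp only [eval_sub, eval_mul, eval_pow, eval_add, eval_ofNat, ha'] at h4
  rw [show (-g.eval a) ^ 2 + g.eval a ^ 2 = 2 * g.eval a ^ 2 by ring,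
    show 2 * -g.eval a * g.eval a = -(2 * g.eval a ^ 2) by ring, hm.neg_pow,
    sub_neg_eq_add, ← two_mul] at h4
  simp [hg] at h4

theorem jesmanowicz_poly_two_equal_exp
    {K : Type*} [Field K] [CharZero K] [IsAlgClosed K]
    (f g w : K[X])
    (hf : 0 < f.natDegree) (hg : 0 < g.natDegree)
    (hfg : IsCoprime f g) (hw : w ≠ 0)
    (m n : ℕ) (hm : 0 < m) (hmn : m ≤ n)
    (heq : (w * (f ^ 2 - g ^ 2)) ^ n =
      (w * (f ^ 2 + g ^ 2)) ^ m - (w * (2 * f * g)) ^ m) :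
    m ≤ 2 := by
  by_contra hm2
  obtain ⟨k, rfl⟩ := Nat.exists_eq_add_of_le hmn
  have key : w ^ k * (f ^ 2 - g ^ 2) ^ (m + k) = (f ^ 2 + g ^ 2) ^ m - (2 * f * g) ^ m := by
    apply mul_left_cancel₀ (pow_ne_zero m hw)
    rw [mul_sub, ← mul_pow, ← mul_pow, ← heq, mul_pow, pow_add w, mul_assoc]
  have hA : (f ^ 2 - g ^ 2) ^ 3 ∣ (f ^ 2 + g ^ 2) ^ m - (2 * f * g) ^ m := by
    rw [← key]
    exact (pow_dvd_pow _ (by omega)).mul_left _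
  have hfac : f ^ 2 - g ^ 2 = (f - g) * (f + g) := by ring
  rw [hfac, mul_pow] at hA
  have h1 := jes_aux_s17 f g hfg m hm ((Dvd.intro _ rfl).trans hA)
  have hB := (Dvd.intro_left _ rfl).trans hA
  have h2 : (f + g).natDegree = 0 := by
    rcases Nat.even_or_odd m with he | ho
    · have := jes_aux_s17 f (-g) hfg.neg_right m hm (by
        rw [sub_neg_eq_add, neg_sq, mul_neg, he.neg_pow]
        exact hB)
      rwa [sub_neg_eq_add] at this
    · exact jes_aux_odd f g hfg m ho ((dvd_pow_self _ (by norm_num)).trans hB)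
  obtain ⟨c, hc⟩ := natDegree_eq_zero.1 h1
  obtain ⟨d, hd⟩ := natDegree_eq_zero.1 h2
  have h3 : C (2 : K) * f = C (c + d) := by
    rw [C_add, hc, hd, show C (2 : K) = 2 from rfl]
    ring
  have h4 := congrArg natDegree h3
  rw [natDegree_C_mul two_ne_zero, natDegree_C] at h4
  omega
end
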